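/- arXiv:0811.1023 — 3 statements merged into one kernel-verified Lean document; each statement's English description precedes it below -/
import Mathlib

section
/- Let K be an algebraically closed field of characteristic zero and R = K[x,y,z]. Let I = (x^a, y^b, z^c, x^α y^β z^γ) with 0 ≤ α < a, 0 ≤ β < b, 0 ≤ γ < c, and assume I is not a complete intersection. If R/I fails to have the WLP, then a + b + c + α + β + γ ≡ 0 (mod 3). -/
open MvPolynomial

noncomputable def component (r : ℕ) (K : Type*) [Field K]
    (I : Ideal (MvPolynomial (Fin r) K)) (d : ℕ) :
    Submodule K (MvPolynomial (Fin r) K ⧸ I) :=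
  (MvPolynomial.homogeneousSubmodule (Fin r) K d).map
    (Ideal.Quotient.mkₐ K I).toLinearMap

noncomputable def hilb (r : ℕ) (K : Type*) [Field K]
    (I : Ideal (MvPolynomial (Fin r) K)) (d : ℕ) : ℕ :=
  Module.finrank K (component r K I d)

/-- Injectivity of the multiplication map `×L : (R/I)_d → (R/I)_{d+1}`. -/
def mulMapInj (r : ℕ) (K : Type*) [Field K]
    (I : Ideal (MvPolynomial (Fin r) K)) (L : MvPolynomial (Fin r) K) (d : ℕ) : Prop :=
  ∀ a ∈ component r K I d, Ideal.Quotient.mk I L * a = 0 → a = 0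

/-- Surjectivity of the multiplication map `×L : (R/I)_d → (R/I)_{d+1}`. -/
def mulMapSurj (r : ℕ) (K : Type*) [Field K]
    (I : Ideal (MvPolynomial (Fin r) K)) (L : MvPolynomial (Fin r) K) (d : ℕ) : Prop :=
  ∀ b ∈ component r K I (d + 1), ∃ a ∈ component r K I d, Ideal.Quotient.mk I L * a = b

/-- `L` is a Lefschetz element: a linear form for which every multiplication map
`×L : (R/I)_d → (R/I)_{d+1}` has maximal rank (is injective or surjective). -/
def isLefschetzElem (r : ℕ) (K : Type*) [Field K]
    (I : Ideal (MvPolynomial (Fin r) K)) (L : MvPolynomial (Fin r) K) : Prop :=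
  L ∈ MvPolynomial.homogeneousSubmodule (Fin r) K 1 ∧
    ∀ d : ℕ, mulMapInj r K I L d ∨ mulMapSurj r K I L d

/-- The Weak Lefschetz Property. -/
def hasWLP (r : ℕ) (K : Type*) [Field K] (I : Ideal (MvPolynomial (Fin r) K)) : Prop :=
  ∃ L, isLefschetzElem r K I L

/-!
Let `L = x + y - z`. Restriction to the line `L = 0` turns the four monomial generators into
polynomials `f k` in one variable, whose syzygies form a bundle of rank three on the projective
line. If multiplication by `L` from degree `d` to degree `d + 1` is not surjective, then a
functional vanishing on the degree `d + 1` part of the ideal of the `f k` gives a homomorphism `η`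
from this bundle to a line bundle. If it is not injective, then some syzygy `P` of degree `d + 1` is
not a sum of syzygies between two of the `f k`, since those lift to syzygies of the monomials.

The monomials have logarithmic derivatives on the line, so the syzygies carry a connection `∇`, and
for degree reasons `η` kills `P` and `∇ P` and sends `∇ ∇ P` to a constant. In characteristic zero
this constant is not zero: otherwise `P`, `∇ P`, `∇ ∇ P` would be dependent, the four products
`P k * f k` would solve one scalar differential equation of order two, and the linear relations
between them would split `P` into two-term syzygies. Comparing constants shows that `P` and the
functional are both unique up to scalars, so that `∑ k, (d + 2 - deg (f k)) = (d + 1) + 1`, which is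
`∑ k, deg (f k) = 3 * (d + 2)`.
-/

open scoped Polynomial
open Polynomial (derivative degreeLT mem_degreeLT)

section DifferentialEquations

variable {K : Type*} [Field K] (δ : Derivation K K[X] K[X])

theorem derivation_apply_eq_mul_derivative (q : K[X]) :
    δ q = δ Polynomial.X * derivative q := by
  simpa [mul_comm] using δ.map_aeval q Polynomial.X

theorem exists_sum_smul_dvd_pow_of_lt {N n : ℕ} (hN : N < n) (x : K) (Q : Fin n → K[X]) :
    ∃ c : Fin n → K, c ≠ 0 ∧ (Polynomial.X - Polynomial.C x) ^ N ∣ ∑ k, c k • Q k := by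
  let jet : (Fin n → K) →ₗ[K] (Fin N → K) :=
    LinearMap.pi fun i => Polynomial.lcoeff K i ∘ₗ Polynomial.taylor x ∘ₗ
      Fintype.linearCombination K Q
  obtain ⟨c, hc, hc0⟩ := Submodule.exists_mem_ne_zero_of_ne_bot
    (jet.ker_ne_bot_of_finrank_lt (by simpa using hN))
  refine ⟨c, hc0, Polynomial.X_sub_C_pow_dvd_iff.2 (Polynomial.X_pow_dvd_iff.2 fun i hi => ?_)⟩
  simpa [jet, Fintype.linearCombination_apply, Polynomial.taylor_apply] using congrFun hc ⟨i, hi⟩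

variable [CharZero K]

theorem rootMultiplicity_iterate_derivation {x : K} (hδ : (δ Polynomial.X).eval x ≠ 0) {q : K[X]}
    (hq : q ≠ 0) {i : ℕ} (hi : i ≤ q.rootMultiplicity x) :
    δ^[i] q ≠ 0 ∧ (δ^[i] q).rootMultiplicity x = q.rootMultiplicity x - i := by
  induction i with
  | zero => simpa using hq
  | succ i ih =>
    obtain ⟨ne_zero, mult⟩ := ih (by omega)
    have root : (δ^[i] q).IsRoot x := by
      rw [← Polynomial.rootMultiplicity_pos ne_zero]; omega
    have derivative_ne_zero : derivative (δ^[i] q) ≠ 0 := by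
      intro h
      obtain ⟨c, hc⟩ := Polynomial.natDegree_eq_zero.1 (Polynomial.derivative_eq_zero.1 h)
      rw [← hc] at root ne_zero
      exact ne_zero (by simpa using root)
    have hδ0 : δ Polynomial.X ≠ 0 := by rintro h; simp [h] at hδ
    rw [Function.iterate_succ_apply', derivation_apply_eq_mul_derivative]
    refine ⟨mul_ne_zero hδ0 derivative_ne_zero, ?_⟩
    rw [Polynomial.rootMultiplicity_mul (mul_ne_zero hδ0 derivative_ne_zero),
      Polynomial.rootMultiplicity_eq_zero hδ, Polynomial.derivative_rootMultiplicity_of_root root,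
      mult]
    omega

theorem eq_zero_of_sum_iterate_derivation_eq_zero {x : K} {n : ℕ}
    {s : Fin n → K[X]} {N : Fin n} {q : K[X]}
    (hδ : (δ Polynomial.X).eval x ≠ 0) (hs : (s N).eval x ≠ 0) (above : ∀ i, N < i → s i = 0)
    (hq : ∑ i, s i * δ^[i] q = 0)
    (hdvd : (Polynomial.X - Polynomial.C x) ^ (N : ℕ) ∣ q) : q = 0 := by
  by_contra hq0
  have hN : (N : ℕ) ≤ q.rootMultiplicity x := (Polynomial.le_rootMultiplicity_iff hq0).2 hdvd
  obtain ⟨top_ne_zero, top_mult⟩ := rootMultiplicity_iterate_derivation δ hδ hq0 hN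
  have lead_ne_zero : s N * δ^[N] q ≠ 0 :=
    mul_ne_zero (by rintro h; simp [h] at hs) top_ne_zero
  have lower : (Polynomial.X - Polynomial.C x) ^ (q.rootMultiplicity x - N + 1) ∣
      ∑ i ∈ Finset.univ.erase N, s i * δ^[i] q := by
    refine Finset.dvd_sum fun i hi => ?_
    rcases lt_or_gt_of_ne (Finset.ne_of_mem_erase hi) with hlt | hgt
    · have hlt : (i : ℕ) < N := hlt
      obtain ⟨ne_zero, mult⟩ := rootMultiplicity_iterate_derivation δ hδ hq0 (hlt.le.trans hN)
      exact ((Polynomial.le_rootMultiplicity_iff ne_zero).1 (by omega)).mul_left _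
    · simp [above i hgt]
  rw [← Finset.add_sum_erase _ _ (Finset.mem_univ N)] at hq
  rw [eq_neg_of_add_eq_zero_right hq, dvd_neg, ← Polynomial.le_rootMultiplicity_iff lead_ne_zero,
    Polynomial.rootMultiplicity_mul lead_ne_zero, Polynomial.rootMultiplicity_eq_zero hs,
    top_mult] at lower
  omega

theorem not_linearIndependent_of_sum_iterate_derivation_eq_zero (hδ : δ Polynomial.X ≠ 0) {n : ℕ}
    {s Q : Fin n → K[X]} (hs : s ≠ 0) (hQ : ∀ k, ∑ i, s i * δ^[i] (Q k) = 0) :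
    ¬ LinearIndependent K Q := by
  classical
  obtain ⟨N, hN, above⟩ : ∃ N, s N ≠ 0 ∧ ∀ i, N < i → s i = 0 := by
    obtain ⟨N, hN⟩ := (Set.toFinite {i | s i ≠ 0}).exists_maximal (Function.ne_iff.1 hs)
    exact ⟨N, hN.prop, fun i hi => not_not.1 fun h => hN.not_prop_of_gt hi h⟩
  obtain ⟨x, hx⟩ : ∃ x, (δ Polynomial.X * s N).eval x ≠ 0 := by
    by_contra! h
    exact mul_ne_zero hδ hN (Polynomial.funext fun x => by simpa using h x)
  rw [Polynomial.eval_mul] at hx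
  obtain ⟨c, hc, hdvd⟩ := exists_sum_smul_dvd_pow_of_lt N.isLt x Q
  have solution : ∑ i, s i * δ^[i] (∑ k, c k • Q k) = 0 := by
    have expand (i : ℕ) : δ^[i] (∑ k, c k • Q k) = ∑ k, c k • δ^[i] (Q k) := by
      simp only [← Derivation.coeFn_coe, ← Module.End.pow_apply, map_sum, map_smul]
    simp only [expand, Finset.mul_sum, mul_smul_comm]
    rw [Finset.sum_comm]
    simp only [← Finset.smul_sum, hQ, smul_zero, Finset.sum_const_zero]
  rw [Fintype.linearIndependent_iff]
  intro independent
  exact hc (funext (independent c (eq_zero_of_sum_iterate_derivation_eq_zero δ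
    (left_ne_zero_of_mul hx) (right_ne_zero_of_mul hx) above solution hdvd)))

end DifferentialEquations

section DegreeLT

variable {R : Type*} [CommRing R]

theorem mem_degreeLT_iff_coeff_eq_zero {n : ℕ} {p : R[X]} :
    p ∈ degreeLT R n ↔ ∀ i, n ≤ i → p.coeff i = 0 := by
  rw [mem_degreeLT, Polynomial.degree_lt_iff_coeff_zero]

theorem mem_degreeLT_succ_iff {n : ℕ} {p : R[X]} :
    p ∈ degreeLT R (n + 1) ↔ p.natDegree ≤ n := by
  rw [Polynomial.degreeLT_succ_eq_degreeLE, Polynomial.mem_degreeLE,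
    Polynomial.natDegree_le_iff_degree_le]

theorem natDegree_lt_of_mem_degreeLT {n : ℕ} {p : R[X]} (hp : p ∈ degreeLT R n) (hp0 : p ≠ 0) :
    p.natDegree < n :=
  (Polynomial.natDegree_lt_iff_degree_lt hp0).2 (mem_degreeLT.1 hp)

theorem mul_mem_degreeLT {m n : ℕ} {p q : R[X]} (hp : p.natDegree ≤ m) (hq : q ∈ degreeLT R n) :
    p * q ∈ degreeLT R (n + m) := by
  by_cases hq0 : q = 0
  · simp [hq0]
  · rw [mem_degreeLT]
    by_cases hpq : p * q = 0
    · simp [hpq]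
    have hq_lt := natDegree_lt_of_mem_degreeLT hq hq0
    have := Polynomial.natDegree_mul_le (p := p) (q := q)
    rw [← Polynomial.natDegree_lt_iff_degree_lt hpq]
    omega

theorem divX_mem_degreeLT {n : ℕ} {p : R[X]} (hp : p ∈ degreeLT R (n + 1)) :
    p.divX ∈ degreeLT R n := by
  rw [mem_degreeLT_iff_coeff_eq_zero] at hp ⊢
  exact fun i hi => p.coeff_divX ▸ hp (i + 1) (by omega)

end DegreeLT

section SecondKind

variable {R : Type*} [CommRing R]

/-- The polynomial of the second kind `ψ_t ((f(X) - f(t)) / (X - t))` attached to a polynomial `f`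
and a linear functional `ψ`, written out on the monomial basis. -/
noncomputable def secondKind (ψ : R[X] →ₗ[R] R) : R[X] →ₗ[R] R[X] :=
  (Polynomial.basisMonomials R).constr R fun n =>
    ∑ i ∈ Finset.range n, Polynomial.monomial i (ψ (Polynomial.X ^ (n - 1 - i)))

theorem secondKind_X_pow (ψ : R[X] →ₗ[R] R) (n : ℕ) :
    secondKind ψ (Polynomial.X ^ n) =
      ∑ i ∈ Finset.range n, Polynomial.monomial i (ψ (Polynomial.X ^ (n - 1 - i))) := by
  rw [Polynomial.X_pow_eq_monomial, secondKind]
  exact (Polynomial.basisMonomials R).constr_basis R _ n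

theorem secondKind_C (ψ : R[X] →ₗ[R] R) (c : R) : secondKind ψ (Polynomial.C c) = 0 := by
  have h := secondKind_X_pow ψ 0
  rw [← mul_one (Polynomial.C c), ← Polynomial.smul_eq_C_mul, map_smul]
  simpa using congrArg (c • ·) h

theorem secondKind_X_mul (ψ : R[X] →ₗ[R] R) (f : R[X]) :
    secondKind ψ (Polynomial.X * f) = Polynomial.X * secondKind ψ f + Polynomial.C (ψ f) := by
  suffices h : secondKind ψ ∘ₗ LinearMap.mulLeft R Polynomial.X =
      LinearMap.mulLeft R Polynomial.X ∘ₗ secondKind ψ + Polynomial.monomial 0 ∘ₗ ψ from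
    LinearMap.congr_fun h f
  refine (Polynomial.basisMonomials R).ext fun n => ?_
  simp only [Polynomial.coe_basisMonomials, ← Polynomial.X_pow_eq_monomial, LinearMap.comp_apply,
    LinearMap.add_apply, LinearMap.mulLeft_apply, ← pow_succ', secondKind_X_pow,
    Finset.sum_range_succ', Finset.mul_sum, Polynomial.X_mul_monomial]
  simp only [Nat.add_sub_cancel, Nat.sub_zero, Nat.sub_add_eq, Nat.sub_right_comm _ _ 1]

theorem secondKind_eq_divX (ψ : R[X] →ₗ[R] R) (f : R[X]) :
    secondKind ψ f = Polynomial.X * secondKind ψ f.divX + Polynomial.C (ψ f.divX) := by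
  conv_lhs => rw [← Polynomial.divX_mul_X_add f, map_add, secondKind_C, add_zero, mul_comm,
    secondKind_X_mul]

theorem secondKind_mul (ψ : R[X] →ₗ[R] R) (p f : R[X]) :
    secondKind ψ (p * f) =
      p * secondKind ψ f + secondKind (ψ ∘ₗ LinearMap.mulRight R f) p := by
  suffices h : secondKind ψ ∘ₗ LinearMap.mulRight R f =
      LinearMap.mulRight R (secondKind ψ f) + secondKind (ψ ∘ₗ LinearMap.mulRight R f) from
    LinearMap.congr_fun h p
  refine (Polynomial.basisMonomials R).ext fun n => ?_
  simp only [Polynomial.coe_basisMonomials, ← Polynomial.X_pow_eq_monomial, LinearMap.comp_apply,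
    LinearMap.add_apply, LinearMap.mulRight_apply]
  induction n with
  | zero =>
    have h := secondKind_C (ψ ∘ₗ LinearMap.mulRight R f) 1
    rw [map_one] at h
    rw [pow_zero, one_mul, one_mul, h, add_zero]
  | succ n ih =>
    rw [pow_succ', mul_assoc, secondKind_X_mul, secondKind_X_mul, ih]
    simp only [LinearMap.comp_apply, LinearMap.mulRight_apply]
    ring

theorem secondKind_sub_smul (φ ψ : R[X] →ₗ[R] R) (c : R) (f : R[X]) :
    secondKind (φ - c • ψ) f = secondKind φ f - c • secondKind ψ f := by
  suffices h : secondKind (φ - c • ψ) = secondKind φ - c • secondKind ψ from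
    LinearMap.congr_fun h f
  refine (Polynomial.basisMonomials R).ext fun n => ?_
  simp only [Polynomial.coe_basisMonomials, ← Polynomial.X_pow_eq_monomial, LinearMap.sub_apply,
    LinearMap.smul_apply, secondKind_X_pow, map_sub, map_smul, Finset.sum_sub_distrib,
    Finset.smul_sum]

theorem secondKind_mem_degreeLT (ψ : R[X] →ₗ[R] R) {n : ℕ} {f : R[X]}
    (hf : f ∈ degreeLT R (n + 1)) : secondKind ψ f ∈ degreeLT R n := by
  induction n generalizing f with
  | zero =>
    rw [Polynomial.eq_C_of_natDegree_le_zero (mem_degreeLT_succ_iff.1 hf), secondKind_C]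
    exact Submodule.zero_mem _
  | succ n ih =>
    rw [secondKind_eq_divX]
    exact add_mem (mul_mem_degreeLT Polynomial.natDegree_X_le (ih (divX_mem_degreeLT hf)))
      (mem_degreeLT_succ_iff.2 (by simp))

theorem secondKind_eq_zero {χ : R[X] →ₗ[R] R} {n : ℕ} {p : R[X]}
    (hχ : degreeLT R n ≤ LinearMap.ker χ) (hp : p ∈ degreeLT R (n + 1)) : secondKind χ p = 0 := by
  induction n generalizing p with
  | zero => rw [Polynomial.eq_C_of_natDegree_le_zero (mem_degreeLT_succ_iff.1 hp), secondKind_C]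
  | succ n ih =>
    have hdiv := divX_mem_degreeLT hp
    rw [secondKind_eq_divX, ih ((Polynomial.degreeLT_mono n.le_succ).trans hχ) hdiv,
      LinearMap.mem_ker.1 (hχ hdiv), mul_zero, map_zero, add_zero]

theorem exists_secondKind_eq_C {χ : R[X] →ₗ[R] R} {n : ℕ} {p : R[X]}
    (hχ : degreeLT R n ≤ LinearMap.ker χ) (hp : p ∈ degreeLT R (n + 2)) :
    ∃ c, secondKind χ p = Polynomial.C c :=
  ⟨χ p.divX, by rw [secondKind_eq_divX, secondKind_eq_zero hχ (divX_mem_degreeLT hp), mul_zero,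
    zero_add]⟩

theorem degreeLT_natDegree_le_ker_of_secondKind_eq_zero {ψ : R[X] →ₗ[R] R} {f : R[X]}
    (hf : f.Monic) (h : secondKind ψ f = 0) : degreeLT R f.natDegree ≤ LinearMap.ker ψ := by
  induction hn : f.natDegree generalizing f with
  | zero =>
    intro p hp
    have : p = 0 := by simpa [mem_degreeLT] using hp
    simp [this]
  | succ n ih =>
    have coeff_divX : f.divX.coeff n = 1 := by
      rw [Polynomial.coeff_divX, ← hn]; exact hf
    have natDegree_divX : f.divX.natDegree = n := by
      rw [Polynomial.natDegree_divX_eq_natDegree_tsub_one, hn, Nat.add_sub_cancel]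
    have monic_divX : f.divX.Monic := by
      rw [Polynomial.Monic, Polynomial.leadingCoeff, natDegree_divX, coeff_divX]
    rw [secondKind_eq_divX] at h
    have ψ_divX : ψ f.divX = 0 := by simpa using congrArg (Polynomial.coeff · 0) h
    rw [ψ_divX, map_zero, add_zero] at h
    have lower := ih monic_divX (Polynomial.monic_X.mul_right_eq_zero_iff.1 h) natDegree_divX
    intro p hp
    have reduced : p - p.coeff n • f.divX ∈ degreeLT R n := by
      rw [mem_degreeLT_iff_coeff_eq_zero]
      intro i hi
      rcases hi.eq_or_lt with rfl | hi
      · simp [coeff_divX]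
      · simp [Polynomial.coeff_eq_zero_of_natDegree_lt (natDegree_divX.trans_lt hi),
          mem_degreeLT_iff_coeff_eq_zero.1 hp i hi]
    have := lower reduced
    rwa [LinearMap.mem_ker, map_sub, map_smul, ψ_divX, smul_zero, sub_zero] at this

theorem degreeLT_le_ker_of_mul_mem_ker {ψ : R[X] →ₗ[R] R} {f : R[X]} (hf : f.Monic) {J : ℕ}
    (hlow : degreeLT R f.natDegree ≤ LinearMap.ker ψ)
    (hmul : ∀ q ∈ degreeLT R (J - f.natDegree), ψ (q * f) = 0) :
    degreeLT R J ≤ LinearMap.ker ψ := by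
  intro p hp
  nontriviality R
  have rem : p %ₘ f ∈ degreeLT R f.natDegree := by
    rw [mem_degreeLT, ← Polynomial.degree_eq_natDegree hf.ne_zero]
    exact Polynomial.degree_modByMonic_lt p hf
  have quot : p /ₘ f ∈ degreeLT R (J - f.natDegree) := by
    by_cases hquot : p /ₘ f = 0
    · simp [hquot]
    have hfp : f.degree ≤ p.degree := not_lt.1 (mt (Polynomial.divByMonic_eq_zero_iff hf).2 hquot)
    have hp0 : p ≠ 0 := by rintro rfl; simp at hquot
    have hle := Polynomial.natDegree_le_natDegree hfp
    have hlt := natDegree_lt_of_mem_degreeLT hp hp0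
    rw [mem_degreeLT, ← Polynomial.natDegree_lt_iff_degree_lt hquot,
      Polynomial.natDegree_divByMonic p hf]
    omega
  rw [LinearMap.mem_ker, ← Polynomial.modByMonic_add_div p f, map_add,
    LinearMap.mem_ker.1 (hlow rem), mul_comm, hmul _ quot, add_zero]

end SecondKind

/-- Monic polynomials `f k`, regarded as forms of degree `degree k` on the projective line, with a
derivation `δ` for which `δ (f k) = logDeriv k * f k`. The bounds on `δ X` and `logDeriv k` let
`δ + logDeriv k` raise degrees by at most one; this models a connection with logarithmic poles at
three points of the line. -/
structure LogFamily (K : Type*) [Field K] (ι : Type*) where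
  poly : ι → K[X]
  degree : ι → ℕ
  derivation : Derivation K K[X] K[X]
  logDeriv : ι → K[X]
  monic (k) : (poly k).Monic
  natDegree_poly_le (k) : (poly k).natDegree ≤ degree k
  derivation_X_ne_zero : derivation Polynomial.X ≠ 0
  natDegree_derivation_X_le : (derivation Polynomial.X).natDegree ≤ 2
  derivation_poly (k) : derivation (poly k) = logDeriv k * poly k
  natDegree_logDeriv_le (k) : (logDeriv k).natDegree ≤ 1

namespace LogFamily

variable {K : Type*} [Field K] {ι : Type*} (S : LogFamily K ι)

/-- The degree `j` part of the free module on the family: the vectors `P` for which every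
`P k * f k` is a form of degree `j`. Truncated subtraction forces `P k = 0` when
`j < degree k`. -/
noncomputable def coefficients (j : ℕ) : Submodule K (ι → K[X]) :=
  Submodule.pi Set.univ fun k => degreeLT K (j + 1 - S.degree k)

variable {S} in
theorem mem_coefficients {j : ℕ} {P : ι → K[X]} :
    P ∈ S.coefficients j ↔ ∀ k, P k ∈ degreeLT K (j + 1 - S.degree k) := by
  simp [coefficients, Submodule.mem_pi]

theorem single_mem_coefficients [DecidableEq ι] {j : ℕ} {k : ι} {q : K[X]}
    (hq : q ∈ degreeLT K (j + 1 - S.degree k)) : Pi.single k q ∈ S.coefficients j :=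
  Submodule.le_comap_single_pi _ hq

/-- The connection on coefficient vectors: `f k` times the `k`-th entry of its value at `P` is
`δ (P k * f k)`. -/
noncomputable def connection : (ι → K[X]) →ₗ[K] ι → K[X] :=
  LinearMap.pi fun k =>
    ((S.derivation : K[X] →ₗ[K] K[X]) + LinearMap.mulLeft K (S.logDeriv k)) ∘ₗ LinearMap.proj k

theorem connection_apply (P : ι → K[X]) (k : ι) :
    S.connection P k = S.derivation (P k) + S.logDeriv k * P k := rfl

theorem connection_apply_mul_poly (P : ι → K[X]) (k : ι) :
    S.connection P k * S.poly k = S.derivation (P k * S.poly k) := by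
  rw [connection_apply, Derivation.leibniz, S.derivation_poly]
  simp only [smul_eq_mul]
  ring

theorem connection_smul (g : K[X]) (P : ι → K[X]) :
    S.connection (g • P) = S.derivation g • P + g • S.connection P := by
  ext1 k
  simp only [connection_apply, Pi.add_apply, Pi.smul_apply, smul_eq_mul, Derivation.leibniz]
  ring

theorem connection_apply_mem_degreeLT {n : ℕ} {P : ι → K[X]} {k : ι} (hP : P k ∈ degreeLT K n) :
    S.connection P k ∈ degreeLT K (n + 1) := by
  rcases n with _ | n
  · have : P k = 0 := by simpa [mem_degreeLT] using hP
    simp [connection_apply, this]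
  have derivative_mem : derivative (P k) ∈ degreeLT K n := by
    rw [mem_degreeLT_iff_coeff_eq_zero] at hP ⊢
    exact fun i hi => by rw [Polynomial.coeff_derivative, hP (i + 1) (by omega), zero_mul]
  rw [connection_apply, derivation_apply_eq_mul_derivative]
  exact add_mem (mul_mem_degreeLT (m := 2) S.natDegree_derivation_X_le derivative_mem)
    (mul_mem_degreeLT (S.natDegree_logDeriv_le k) hP)

theorem mul_poly_not_linearIndependent [CharZero K] {n : ℕ} {s : Fin n → K[X]} (hs : s ≠ 0)
    {P : ι → K[X]} (hP : ∑ i, s i • S.connection^[i] P = 0) (k : Fin n → ι) :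
    ¬ LinearIndependent K fun m => P (k m) * S.poly (k m) := by
  have iterate (i : ℕ) (k : ι) :
      S.connection^[i] P k * S.poly k = S.derivation^[i] (P k * S.poly k) := by
    induction i with
    | zero => rfl
    | succ i ih =>
      rw [Function.iterate_succ_apply', connection_apply_mul_poly, ih, Function.iterate_succ_apply']
  refine not_linearIndependent_of_sum_iterate_derivation_eq_zero S.derivation
    S.derivation_X_ne_zero hs fun m => ?_
  have h := congrArg (· * S.poly (k m)) (congrFun hP (k m))
  simpa [Finset.sum_mul, mul_assoc, iterate] using h

variable [Fintype ι]

/-- The presentation `P ↦ ∑ k, P k * f k` of the ideal generated by the family. -/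
noncomputable def combination : (ι → K[X]) →ₗ[K[X]] K[X] :=
  Fintype.linearCombination K[X] S.poly

theorem combination_apply (P : ι → K[X]) : S.combination P = ∑ k, P k * S.poly k := rfl

theorem combination_single [DecidableEq ι] (k : ι) (q : K[X]) :
    S.combination (Pi.single k q) = q * S.poly k := by
  simp [combination]

/-- The degree `j` part of the ideal generated by the family. -/
noncomputable def image (j : ℕ) : Submodule K K[X] :=
  (S.coefficients j).map (S.combination.restrictScalars K)

/-- The degree `j` part of the syzygy module of the family. -/
noncomputable def syzygies (j : ℕ) : Submodule K (ι → K[X]) :=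
  S.coefficients j ⊓ LinearMap.ker (S.combination.restrictScalars K)

variable {S} in
theorem mem_syzygies {j : ℕ} {P : ι → K[X]} :
    P ∈ S.syzygies j ↔ (∀ k, P k ∈ degreeLT K (j + 1 - S.degree k)) ∧ S.combination P = 0 := by
  rw [syzygies, Submodule.mem_inf, mem_coefficients]; rfl

theorem combination_connection (P : ι → K[X]) :
    S.combination (S.connection P) = S.derivation (S.combination P) := by
  simp only [combination_apply, connection_apply_mul_poly, map_sum]

theorem syzygies_mono {i j : ℕ} (h : i ≤ j) : S.syzygies i ≤ S.syzygies j := by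
  intro P hP
  rw [mem_syzygies] at hP ⊢
  exact ⟨fun k => Polynomial.degreeLT_mono (by omega) (hP.1 k), hP.2⟩

theorem connection_mem_syzygies {j : ℕ} {P : ι → K[X]} (hP : P ∈ S.syzygies j) :
    S.connection P ∈ S.syzygies (j + 1) := by
  rw [mem_syzygies] at hP ⊢
  refine ⟨fun k => ?_, by rw [combination_connection, hP.2, map_zero]⟩
  by_cases hk : S.degree k ≤ j + 1
  · rw [Nat.sub_add_comm hk]
    exact S.connection_apply_mem_degreeLT (hP.1 k)
  · have : P k = 0 := by
      simpa [mem_degreeLT, Nat.sub_eq_zero_of_le (not_le.1 hk).le] using hP.1 k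
    simp [connection_apply, this]

/-- The contraction of a coefficient vector with the polynomials of the second kind of the family:
a functional `ψ` vanishing on `image j` is a homomorphism from the syzygies to a line bundle, and
this is that homomorphism. -/
noncomputable def contraction (ψ : K[X] →ₗ[K] K) : (ι → K[X]) →ₗ[K[X]] K[X] :=
  Fintype.linearCombination K[X] fun k => secondKind ψ (S.poly k)

theorem contraction_apply (ψ : K[X] →ₗ[K] K) (P : ι → K[X]) :
    S.contraction ψ P = ∑ k, P k * secondKind ψ (S.poly k) := rfl

variable {S}

theorem contraction_eq_neg_sum {ψ : K[X] →ₗ[K] K} {P : ι → K[X]} (hP : S.combination P = 0) :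
    S.contraction ψ P =
      -∑ k, secondKind (ψ ∘ₗ LinearMap.mulRight K (S.poly k)) (P k) := by
  have h := congrArg (secondKind ψ) hP
  rw [combination_apply, map_sum, map_zero] at h
  simp only [secondKind_mul, Finset.sum_add_distrib] at h
  exact eq_neg_of_add_eq_zero_left h

theorem degreeLT_le_ker_comp_mulRight {ψ : K[X] →ₗ[K] K} {j : ℕ}
    (hψ : S.image j ≤ LinearMap.ker ψ) (k : ι) :
    degreeLT K (j + 1 - S.degree k) ≤ LinearMap.ker (ψ ∘ₗ LinearMap.mulRight K (S.poly k)) := by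
  classical
  intro q hq
  exact hψ ⟨Pi.single k q, S.single_mem_coefficients hq, S.combination_single k q⟩

theorem contraction_eq_zero {ψ : K[X] →ₗ[K] K} {j : ℕ} (hψ : S.image j ≤ LinearMap.ker ψ)
    {P : ι → K[X]} (hP : P ∈ S.syzygies (j + 1)) : S.contraction ψ P = 0 := by
  rw [mem_syzygies] at hP
  rw [contraction_eq_neg_sum hP.2, Finset.sum_eq_zero, neg_zero]
  exact fun k _ => secondKind_eq_zero (degreeLT_le_ker_comp_mulRight hψ k)
    (Polynomial.degreeLT_mono (by omega) (hP.1 k))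

theorem exists_contraction_eq_C {ψ : K[X] →ₗ[K] K} {j : ℕ} (hψ : S.image j ≤ LinearMap.ker ψ)
    {P : ι → K[X]} (hP : P ∈ S.syzygies (j + 2)) :
    ∃ c, S.contraction ψ P = Polynomial.C c := by
  rw [mem_syzygies] at hP
  choose c hc using fun k => exists_secondKind_eq_C (degreeLT_le_ker_comp_mulRight hψ k)
    (Polynomial.degreeLT_mono (by omega) (hP.1 k))
  exact ⟨-∑ k, c k, by rw [contraction_eq_neg_sum hP.2]; simp only [hc, map_neg, map_sum]⟩

/-- The span of the syzygies of degree `j` that involve at most two members of the family. -/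
noncomputable def twoTermSyzygies (S : LogFamily K ι) (j : ℕ) : Submodule K (ι → K[X]) :=
  Submodule.span K {P | P ∈ S.syzygies j ∧ ∃ k l, ∀ m, m ≠ k → m ≠ l → P m = 0}

theorem smul_mem_syzygies {j : ℕ} {P : ι → K[X]} (hP : P ∈ S.syzygies j) {c : ι → K}
    (hc : ∑ k, c k • (P k * S.poly k) = 0) : (fun k => c k • P k) ∈ S.syzygies j := by
  rw [mem_syzygies] at hP ⊢
  exact ⟨fun k => Submodule.smul_mem _ _ (hP.1 k), by
    simpa only [combination_apply, smul_mul_assoc] using hc⟩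

theorem mem_twoTermSyzygies_of_smul_eq {j : ℕ} {P : ι → K[X]} (hP : P ∈ S.syzygies j) {k₀ : ι}
    (hk₀ : P k₀ ≠ 0) {w : ι → K} (hw : ∀ k, w k • (P k₀ * S.poly k₀) = P k * S.poly k) :
    P ∈ S.twoTermSyzygies j := by
  classical
  obtain ⟨hdeg, hsum⟩ := mem_syzygies.1 hP
  have sum_w : ∑ k, w k = 0 := by
    rw [combination_apply, ← Finset.sum_congr rfl fun k _ => hw k, ← Finset.sum_smul] at hsum
    exact (smul_eq_zero.1 hsum).resolve_right (mul_ne_zero hk₀ (S.monic k₀).ne_zero)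
  let base : ι → K[X] := Pi.single k₀ (P k₀)
  have decomposition : P = ∑ k, (Pi.single k (P k) - w k • base) := by
    rw [Finset.sum_sub_distrib, ← Finset.sum_smul, sum_w, zero_smul, sub_zero,
      Finset.univ_sum_single]
  rw [decomposition]
  refine Submodule.sum_mem _ fun k _ => Submodule.subset_span ⟨?_, k, k₀, fun m hk hk₀ => ?_⟩
  · have mem : Pi.single k (P k) - w k • base ∈ S.coefficients j :=
      sub_mem (S.single_mem_coefficients (hdeg k))
        (Submodule.smul_mem _ _ (S.single_mem_coefficients (hdeg k₀)))
    refine mem_syzygies.2 ⟨mem_coefficients.1 mem, ?_⟩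
    rw [map_sub, LinearMap.map_smul_of_tower, combination_single, combination_single, hw, sub_self]
  · simp [base, hk, hk₀]

theorem mem_twoTermSyzygies_of_smul_add_smul_connection_eq_zero [CharZero K] {j : ℕ}
    {P : ι → K[X]} (hP : P ∈ S.syzygies j) {s : Fin 2 → K[X]} (hs : s ≠ 0)
    (h : s 0 • P + s 1 • S.connection P = 0) : P ∈ S.twoTermSyzygies j := by
  by_cases hP0 : P = 0
  · rw [hP0]; exact zero_mem _
  obtain ⟨k₀, hk₀⟩ := Function.ne_iff.1 hP0
  have proportional (k : ι) : ∃ w : K, w • (P k₀ * S.poly k₀) = P k * S.poly k := by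
    have dependent := S.mul_poly_not_linearIndependent hs (by simpa using h) ![k₀, k]
    have pair : (fun m => P (![k₀, k] m) * S.poly (![k₀, k] m)) =
        ![P k₀ * S.poly k₀, P k * S.poly k] := by
      ext1 m; fin_cases m <;> rfl
    rw [pair, LinearIndependent.pair_iff' (mul_ne_zero hk₀ (S.monic k₀).ne_zero)] at dependent
    push Not at dependent
    exact dependent
  choose w hw using proportional
  exact mem_twoTermSyzygies_of_smul_eq hP hk₀ hw

end LogFamily

theorem finrank_degreeLT (K : Type*) [Field K] (n : ℕ) : Module.finrank K (degreeLT K n) = n := by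
  rw [(Polynomial.degreeLTEquiv K n).finrank_eq, Module.finrank_fin_fun]

section Relations

variable {R : Type*} [CommRing R] [IsDomain R]

theorem exists_sum_smul_eq_zero_of_dotProduct_eq_zero {n : ℕ} {f : Fin n → R} (hf : f ≠ 0)
    (v : Fin n → Fin n → R) (hv : ∀ i, v i ⬝ᵥ f = 0) :
    ∃ g : Fin n → R, g ≠ 0 ∧ ∑ i, g i • v i = 0 := by
  obtain ⟨g, hg, h⟩ := Matrix.exists_vecMul_eq_zero_iff.2
    (Matrix.exists_mulVec_eq_zero_iff (M := Matrix.of v) |>.1 ⟨f, hf, funext hv⟩)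
  exact ⟨g, hg, (Matrix.vecMul_eq_sum _ _).symm.trans h⟩

theorem exists_sum_smul_eq_zero_of_apply_eq_zero {n : ℕ} {f : Fin (n + 1) → R} {m : Fin (n + 1)}
    (hf : ∃ k ≠ m, f k ≠ 0) (v : Fin n → Fin (n + 1) → R) (hv : ∀ i, v i ⬝ᵥ f = 0)
    (hm : ∀ i, v i m = 0) : ∃ g : Fin n → R, g ≠ 0 ∧ ∑ i, g i • v i = 0 := by
  obtain ⟨k, hk, hfk⟩ := hf
  obtain ⟨k, rfl⟩ := Fin.exists_succAbove_eq hk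
  obtain ⟨g, hg, h⟩ := exists_sum_smul_eq_zero_of_dotProduct_eq_zero
    (f := f ∘ m.succAbove) (Function.ne_iff.2 ⟨k, hfk⟩) (fun i => v i ∘ m.succAbove) fun i => by
      simpa [dotProduct, Fin.sum_univ_succAbove _ m, hm] using hv i
  refine ⟨g, hg, funext (Fin.forall_iff_succAbove m |>.2 ⟨?_, fun k => ?_⟩)⟩
  · simp [hm]
  · simpa using congrFun h k

end Relations

namespace LogFamily

section Contraction

variable {K : Type*} [Field K] {ι : Type*} [Fintype ι] {S : LogFamily K ι}

/-- Away from any one member, two members of the family generate the unit ideal sheaf on the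
projective line: they are coprime, and one of them has full degree, so does not vanish at
infinity. -/
def HasCoprimePairs (S : LogFamily K ι) : Prop :=
  ∀ m, ∃ k l, k ≠ m ∧ l ≠ m ∧ IsCoprime (S.poly k) (S.poly l) ∧
    (S.poly k).natDegree = S.degree k

theorem HasCoprimePairs.exists_contraction_ne_zero (hS : S.HasCoprimePairs) {j : ℕ}
    {ψ : K[X] →ₗ[K] K} (hψ : S.image j ≤ LinearMap.ker ψ)
    (hne : ¬ degreeLT K (j + 1) ≤ LinearMap.ker ψ) (m : ι) :
    ∃ T : ι → K[X], T m = 0 ∧ S.combination T = 0 ∧ S.contraction ψ T ≠ 0 := by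
  classical
  obtain ⟨k, l, hk, hl, coprime, full⟩ := hS m
  refine ⟨Pi.single k (S.poly l) - Pi.single l (S.poly k), by simp [hk.symm, hl.symm], ?_,
    fun h => hne ?_⟩
  · rw [map_sub, combination_single, combination_single, mul_comm, sub_self]
  have cross : S.poly l * secondKind ψ (S.poly k) = S.poly k * secondKind ψ (S.poly l) := by
    simpa [contraction, sub_eq_zero] using h
  have dvd : S.poly k ∣ secondKind ψ (S.poly k) :=
    coprime.dvd_of_dvd_mul_left (cross ▸ dvd_mul_right _ _)
  have vanishing : secondKind ψ (S.poly k) = 0 := by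
    refine Polynomial.eq_zero_of_dvd_of_degree_lt dvd ?_
    rw [Polynomial.degree_eq_natDegree (S.monic k).ne_zero, ← mem_degreeLT]
    exact secondKind_mem_degreeLT ψ (mem_degreeLT_succ_iff.2 le_rfl)
  refine degreeLT_le_ker_of_mul_mem_ker (S.monic k)
    (degreeLT_natDegree_le_ker_of_secondKind_eq_zero (S.monic k) vanishing) fun q hq => ?_
  rw [full] at hq
  exact degreeLT_le_ker_comp_mulRight hψ k hq

theorem contraction_connection_smul {ψ : K[X] →ₗ[K] K} {P : ι → K[X]}
    (h : S.contraction ψ P = 0) (g : K[X]) :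
    S.contraction ψ (S.connection (g • P)) = g * S.contraction ψ (S.connection P) := by
  rw [connection_smul, map_add, map_smul, map_smul, h, smul_zero, zero_add, smul_eq_mul]

theorem contraction_connection_connection_smul {ψ : K[X] →ₗ[K] K} {P : ι → K[X]}
    (h₀ : S.contraction ψ P = 0) (h₁ : S.contraction ψ (S.connection P) = 0) (g : K[X]) :
    S.contraction ψ (S.connection (S.connection (g • P))) =
      g * S.contraction ψ (S.connection (S.connection P)) := by
  rw [connection_smul, map_add, map_add, contraction_connection_smul h₀,
    contraction_connection_smul h₁, h₁, mul_zero, zero_add]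

theorem sum_mul_contraction_eq_zero (S : LogFamily K ι) (ψ : K[X] →ₗ[K] K) {n : ℕ}
    {g : Fin n → K[X]} {v : Fin n → ι → K[X]} (h : ∑ i, g i • v i = 0) :
    ∑ i, g i * S.contraction ψ (v i) = 0 := by
  simpa only [map_sum, map_smul, map_zero, smul_eq_mul] using congrArg (S.contraction ψ) h

theorem contraction_sub_smul (φ ψ : K[X] →ₗ[K] K) (c : K) (P : ι → K[X]) :
    S.contraction (φ - c • ψ) P = S.contraction φ P - c • S.contraction ψ P := by
  simp only [contraction_apply, secondKind_sub_smul, mul_sub, mul_smul_comm,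
    Finset.sum_sub_distrib, Finset.smul_sum]

theorem image_le_degreeLT (j : ℕ) : S.image j ≤ degreeLT K (j + 1) := by
  rintro _ ⟨P, hP, rfl⟩
  refine Submodule.sum_mem _ fun k _ => ?_
  have hk := mem_coefficients.1 hP k
  rcases le_or_gt (S.degree k) (j + 1) with hle | hlt
  · rw [smul_eq_mul, mul_comm, ← Nat.sub_add_cancel hle]
    exact mul_mem_degreeLT (S.natDegree_poly_le k) hk
  · have : P k = 0 := by simpa [mem_degreeLT, Nat.sub_eq_zero_of_le hlt.le] using hk
    simp [this]

theorem exists_image_le_ker_of_not_degreeLT_le {j : ℕ} (h : ¬ degreeLT K (j + 1) ≤ S.image j) :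
    ∃ ψ : K[X] →ₗ[K] K, S.image j ≤ LinearMap.ker ψ ∧ ¬ degreeLT K (j + 1) ≤ LinearMap.ker ψ := by
  obtain ⟨b, hb, hb'⟩ := SetLike.not_le_iff_exists.1 h
  obtain ⟨ψ, hψb, hψ⟩ := Submodule.exists_le_ker_of_notMem hb'
  exact ⟨ψ, hψ, fun h => hψb (h hb)⟩

/-- The degree `j` part of the free module on the family, as a product of spaces of polynomials. -/
noncomputable def coefficientsEquiv (S : LogFamily K ι) (j : ℕ) :
    S.coefficients j ≃ₗ[K] ∀ k, degreeLT K (j + 1 - S.degree k) where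
  toFun P k := ⟨P.1 k, mem_coefficients.1 P.2 k⟩
  invFun P := ⟨fun k => P k, mem_coefficients.2 fun k => (P k).2⟩
  map_add' _ _ := rfl
  map_smul' _ _ := rfl

theorem finrank_image_add_finrank_syzygies (j : ℕ) :
    Module.finrank K (S.image j) + Module.finrank K (S.syzygies j) =
      ∑ k, (j + 1 - S.degree k) := by
  have : Module.Finite K (S.coefficients j) := Module.Finite.equiv (S.coefficientsEquiv j).symm
  have rank_nullity := ((S.combination.restrictScalars K).domRestrict
    (S.coefficients j)).finrank_range_add_finrank_ker
  rw [LinearMap.range_domRestrict, LinearMap.ker_domRestrict, ← Submodule.finrank_map_subtype_eq,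
    Submodule.map_comap_subtype, (S.coefficientsEquiv j).finrank_eq,
    Module.finrank_pi_fintype] at rank_nullity
  simp only [finrank_degreeLT] at rank_nullity
  exact rank_nullity

end Contraction

section Rigidity

variable {K : Type*} [Field K] [CharZero K] {S : LogFamily K (Fin 4)} {j : ℕ}

theorem mem_twoTermSyzygies_of_apply_eq_zero (hS : S.HasCoprimePairs)
    (himage : ¬ degreeLT K (j + 1) ≤ S.image j) {P : Fin 4 → K[X]} (hP : P ∈ S.syzygies j)
    {m : Fin 4} (hm : P m = 0) : P ∈ S.twoTermSyzygies j := by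
  obtain ⟨ψ, hψ, hne⟩ := exists_image_le_ker_of_not_degreeLT_le himage
  obtain ⟨T, hTm, hT, hψT⟩ := hS.exists_contraction_ne_zero hψ hne m
  have hconn := S.connection_mem_syzygies hP
  obtain ⟨k, hk⟩ := exists_ne m
  obtain ⟨g, hg, relation⟩ := exists_sum_smul_eq_zero_of_apply_eq_zero
    ⟨k, hk, (S.monic k).ne_zero⟩ ![P, S.connection P, T]
    (by simpa [Fin.forall_fin_succ] using
      ⟨(mem_syzygies.1 hP).2, (mem_syzygies.1 hconn).2, hT⟩)
    (by simp [Fin.forall_fin_succ, hm, hTm, connection_apply])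
  have g_two : g 2 = 0 := by
    simpa [Fin.sum_univ_three, contraction_eq_zero hψ (S.syzygies_mono j.le_succ hP),
      contraction_eq_zero hψ hconn, hψT] using S.sum_mul_contraction_eq_zero ψ relation
  refine mem_twoTermSyzygies_of_smul_add_smul_connection_eq_zero hP (s := ![g 0, g 1]) ?_
    (by simpa [Fin.sum_univ_three, g_two] using relation)
  rintro hzero
  obtain ⟨g_zero, g_one⟩ : g 0 = 0 ∧ g 1 = 0 := by simpa using hzero
  exact hg (funext (by simp [Fin.forall_fin_succ, g_zero, g_one, g_two]))

theorem mem_twoTermSyzygies_of_sum_smul_eq_zero (hS : S.HasCoprimePairs)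
    (himage : ¬ degreeLT K (j + 1) ≤ S.image j) {P : Fin 4 → K[X]} (hP : P ∈ S.syzygies j)
    {c : Fin 4 → K} (hc : ∑ k, c k • (P k * S.poly k) = 0) {m n : Fin 4} (hmn : c m ≠ c n) :
    P ∈ S.twoTermSyzygies j := by
  have shifted (l : Fin 4) : (fun k => (c k - c l) • P k) ∈ S.twoTermSyzygies j := by
    refine mem_twoTermSyzygies_of_apply_eq_zero hS himage (m := l)
      (smul_mem_syzygies hP ?_) (by simp)
    simp only [sub_smul, Finset.sum_sub_distrib, hc, ← Finset.smul_sum]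
    rw [← combination_apply, (mem_syzygies.1 hP).2, smul_zero, sub_zero]
  have decomposition : P = (c m - c n)⁻¹ •
      ((fun k => (c k - c n) • P k) - fun k => (c k - c m) • P k) := by
    ext1 k
    rw [Pi.smul_apply, Pi.sub_apply, ← sub_smul, smul_smul, sub_sub_sub_cancel_left,
      inv_mul_cancel₀ (sub_ne_zero.2 hmn), one_smul]
  rw [decomposition]
  exact Submodule.smul_mem _ _ (sub_mem (shifted n) (shifted m))

theorem mem_twoTermSyzygies_of_sum_smul_iterate_connection_eq_zero (hS : S.HasCoprimePairs)
    (himage : ¬ degreeLT K (j + 1) ≤ S.image j) {P : Fin 4 → K[X]} (hP : P ∈ S.syzygies j)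
    {s : Fin 3 → K[X]} (hs : s ≠ 0) (h : ∑ i, s i • S.connection^[i] P = 0) :
    P ∈ S.twoTermSyzygies j := by
  obtain ⟨c, hc, l, hl⟩ := Fintype.not_linearIndependent_iff.1
    (S.mul_poly_not_linearIndependent hs h Fin.castSucc)
  refine mem_twoTermSyzygies_of_sum_smul_eq_zero hS himage hP (c := Fin.snoc c 0)
    (m := l.castSucc) (n := Fin.last 3) ?_ ?_
  · simpa only [Fin.sum_univ_castSucc (n := 3), Fin.snoc_castSucc, Fin.snoc_last, zero_smul,
      add_zero] using hc
  · simpa only [Fin.snoc_castSucc, Fin.snoc_last] using hl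

theorem degreeLT_le_ker_of_contraction_connection_connection_eq_zero (hS : S.HasCoprimePairs)
    {P : Fin 4 → K[X]} (hP : P ∈ S.syzygies j) (hP' : P ∉ S.twoTermSyzygies j)
    {φ : K[X] →ₗ[K] K} (hφ : S.image j ≤ LinearMap.ker φ)
    (h : S.contraction φ (S.connection (S.connection P)) = 0) :
    degreeLT K (j + 1) ≤ LinearMap.ker φ := by
  by_contra hne
  have hconn := S.connection_mem_syzygies hP
  have hconn₂ := S.connection_mem_syzygies hconn
  obtain ⟨T, -, hT, hφT⟩ := hS.exists_contraction_ne_zero hφ hne 0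
  obtain ⟨g, hg, relation⟩ := exists_sum_smul_eq_zero_of_dotProduct_eq_zero
    (Function.ne_iff.2 ⟨0, (S.monic 0).ne_zero⟩)
    ![P, S.connection P, S.connection (S.connection P), T]
    (by simpa [Fin.forall_fin_succ] using ⟨(mem_syzygies.1 hP).2, (mem_syzygies.1 hconn).2,
      (mem_syzygies.1 hconn₂).2, hT⟩)
  have g_three : g 3 = 0 := by
    simpa [Fin.sum_univ_four, contraction_eq_zero hφ (S.syzygies_mono j.le_succ hP),
      contraction_eq_zero hφ hconn, h, hφT] using S.sum_mul_contraction_eq_zero φ relation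
  refine hP' (mem_twoTermSyzygies_of_sum_smul_iterate_connection_eq_zero hS
    (fun h => hne (h.trans hφ)) hP (s := ![g 0, g 1, g 2]) ?_
    (by simpa [Fin.sum_univ_three, Fin.sum_univ_four, g_three] using relation))
  rintro hzero
  obtain ⟨g_zero, g_one, g_two⟩ : g 0 = 0 ∧ g 1 = 0 ∧ g 2 = 0 := by simpa using hzero
  exact hg (funext (by simp [Fin.forall_fin_succ, g_zero, g_one, g_two, g_three]))

theorem exists_contraction_connection_connection_eq_C (hS : S.HasCoprimePairs)
    {P : Fin 4 → K[X]} (hP : P ∈ S.syzygies j) (hP' : P ∉ S.twoTermSyzygies j)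
    {ψ : K[X] →ₗ[K] K} (hψ : S.image j ≤ LinearMap.ker ψ)
    (hne : ¬ degreeLT K (j + 1) ≤ LinearMap.ker ψ) :
    ∃ κ ≠ 0, S.contraction ψ (S.connection (S.connection P)) = Polynomial.C κ := by
  obtain ⟨κ, hκ⟩ := exists_contraction_eq_C hψ
    (S.connection_mem_syzygies (S.connection_mem_syzygies hP))
  refine ⟨κ, ?_, hκ⟩
  rintro rfl
  exact hne (degreeLT_le_ker_of_contraction_connection_connection_eq_zero hS hP hP' hψ
    (by rw [hκ, map_zero]))

theorem degreeLT_inf_ker_eq_image (hS : S.HasCoprimePairs)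
    {P : Fin 4 → K[X]} (hP : P ∈ S.syzygies j) (hP' : P ∉ S.twoTermSyzygies j)
    {ψ : K[X] →ₗ[K] K} (hψ : S.image j ≤ LinearMap.ker ψ)
    (hne : ¬ degreeLT K (j + 1) ≤ LinearMap.ker ψ) :
    degreeLT K (j + 1) ⊓ LinearMap.ker ψ = S.image j := by
  refine le_antisymm ?_ (le_inf (S.image_le_degreeLT j) hψ)
  rintro p ⟨hp, hψp⟩
  by_contra hp_image
  obtain ⟨φ, hφp, hφ⟩ := Submodule.exists_le_ker_of_notMem hp_image
  obtain ⟨κ, hκ, hψκ⟩ := exists_contraction_connection_connection_eq_C hS hP hP' hψ hne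
  obtain ⟨μ, hφμ⟩ := exists_contraction_eq_C hφ
    (S.connection_mem_syzygies (S.connection_mem_syzygies hP))
  have hdiff : S.image j ≤ LinearMap.ker (φ - (μ / κ) • ψ) := fun q hq => by
    simp [LinearMap.mem_ker.1 (hφ hq), LinearMap.mem_ker.1 (hψ hq)]
  have contraction_diff :
      S.contraction (φ - (μ / κ) • ψ) (S.connection (S.connection P)) = 0 := by
    rw [contraction_sub_smul, hφμ, hψκ, Polynomial.smul_C, smul_eq_mul, div_mul_cancel₀ _ hκ,
      sub_self]
  have := degreeLT_le_ker_of_contraction_connection_connection_eq_zero hS hP hP' hdiff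
    contraction_diff hp
  rw [LinearMap.mem_ker, LinearMap.sub_apply, LinearMap.smul_apply, LinearMap.mem_ker.1 hψp,
    smul_zero, sub_zero] at this
  exact hφp this

theorem finrank_image_eq (hS : S.HasCoprimePairs)
    (himage : ¬ degreeLT K (j + 1) ≤ S.image j)
    {P : Fin 4 → K[X]} (hP : P ∈ S.syzygies j) (hP' : P ∉ S.twoTermSyzygies j) :
    Module.finrank K (S.image j) = j := by
  obtain ⟨ψ, hψ, hne⟩ := exists_image_le_ker_of_not_degreeLT_le himage
  have hne_zero : ψ.domRestrict (degreeLT K (j + 1)) ≠ 0 := fun h =>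
    hne fun p hp => LinearMap.congr_fun h ⟨p, hp⟩
  have := Module.Dual.finrank_ker_add_one_of_ne_zero hne_zero
  rw [LinearMap.ker_domRestrict, ← Submodule.finrank_map_subtype_eq, Submodule.map_comap_subtype,
    degreeLT_inf_ker_eq_image hS hP hP' hψ hne, finrank_degreeLT] at this
  omega

theorem eq_zero_of_contraction_connection_connection_eq_zero (hS : S.HasCoprimePairs)
    {P : Fin 4 → K[X]} (hP : P ∈ S.syzygies j) (hP' : P ∉ S.twoTermSyzygies j)
    {ψ : K[X] →ₗ[K] K} (hψ : S.image j ≤ LinearMap.ker ψ)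
    (hne : ¬ degreeLT K (j + 1) ≤ LinearMap.ker ψ)
    {Q : Fin 4 → K[X]} (hQ : Q ∈ S.syzygies j)
    (hψQ : S.contraction ψ (S.connection (S.connection Q)) = 0) : Q = 0 := by
  obtain ⟨κ, hκ, hψκ⟩ := exists_contraction_connection_connection_eq_C hS hP hP' hψ hne
  have hκ : (Polynomial.C κ : K[X]) ≠ 0 := by simpa using hκ
  have hPconn := S.connection_mem_syzygies hP
  have contraction_P := contraction_eq_zero hψ (S.syzygies_mono j.le_succ hP)
  have contraction_Q := contraction_eq_zero hψ (S.syzygies_mono j.le_succ hQ)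
  have contraction_connection_P := contraction_eq_zero hψ hPconn
  have contraction_connection_Q := contraction_eq_zero hψ (S.connection_mem_syzygies hQ)
  obtain ⟨g, hg, relation⟩ := exists_sum_smul_eq_zero_of_dotProduct_eq_zero
    (Function.ne_iff.2 ⟨0, (S.monic 0).ne_zero⟩)
    ![P, S.connection P, S.connection (S.connection P), Q]
    (by simpa [Fin.forall_fin_succ] using ⟨(mem_syzygies.1 hP).2, (mem_syzygies.1 hPconn).2,
      (mem_syzygies.1 (S.connection_mem_syzygies hPconn)).2, (mem_syzygies.1 hQ).2⟩)
  have g_two : g 2 = 0 := by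
    simpa [Fin.sum_univ_four, contraction_P, contraction_Q, contraction_connection_P, hψκ, hκ]
      using S.sum_mul_contraction_eq_zero ψ relation
  have relation : g 0 • P + g 1 • S.connection P + g 3 • Q = 0 := by
    simpa [Fin.sum_univ_four, g_two] using relation
  have g_one : g 1 = 0 := by
    simpa [contraction_connection_smul, contraction_P, contraction_Q, contraction_connection_P,
      contraction_connection_Q, hψκ, hκ] using
      congrArg (S.contraction ψ ∘ S.connection) relation
  have relation : g 0 • P + g 3 • Q = 0 := by simpa [g_one] using relation
  have g_zero : g 0 = 0 := by
    simpa [contraction_connection_connection_smul, contraction_P, contraction_Q,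
      contraction_connection_P, contraction_connection_Q, hψκ, hψQ, hκ] using
      congrArg (S.contraction ψ ∘ S.connection ∘ S.connection) relation
  have g_three : g 3 ≠ 0 := fun g_three =>
    hg (funext (by simp [Fin.forall_fin_succ, g_zero, g_one, g_two, g_three]))
  exact (smul_eq_zero.1 (by simpa [g_zero] using relation)).resolve_left g_three

theorem finrank_syzygies_eq_one (hS : S.HasCoprimePairs)
    (himage : ¬ degreeLT K (j + 1) ≤ S.image j)
    {P : Fin 4 → K[X]} (hP : P ∈ S.syzygies j) (hP' : P ∉ S.twoTermSyzygies j) :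
    Module.finrank K (S.syzygies j) = 1 := by
  obtain ⟨ψ, hψ, hne⟩ := exists_image_le_ker_of_not_degreeLT_le himage
  obtain ⟨κ, hκ, hψκ⟩ := exists_contraction_connection_connection_eq_C hS hP hP' hψ hne
  have hP0 : (⟨P, hP⟩ : S.syzygies j) ≠ 0 := fun h => hP' (by
    rw [show P = 0 from congrArg Subtype.val h]; exact zero_mem _)
  refine (finrank_eq_one_iff_of_nonzero' _ hP0).2 fun ⟨Q, hQ⟩ => ?_
  obtain ⟨μ, hψμ⟩ := exists_contraction_eq_C hψ
    (S.connection_mem_syzygies (S.connection_mem_syzygies hQ))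
  refine ⟨μ / κ, Subtype.ext (sub_eq_zero.1 ?_)⟩
  refine eq_zero_of_contraction_connection_connection_eq_zero hS hP hP' hψ hne
    (sub_mem (Submodule.smul_mem _ _ hP) hQ) ?_
  change S.contraction ψ (S.connection (S.connection ((μ / κ) • P - Q))) = 0
  simp only [map_sub, map_smul, LinearMap.map_smul_of_tower, hψκ, hψμ, Polynomial.smul_C,
    smul_eq_mul, div_mul_cancel₀ _ hκ, sub_self]

theorem sum_degree_eq (hS : S.HasCoprimePairs) (himage : ¬ degreeLT K (j + 1) ≤ S.image j)
    (hsyzygies : ¬ S.syzygies j ≤ S.twoTermSyzygies j) : ∑ k, S.degree k = 3 * (j + 1) := by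
  obtain ⟨P, hP, hP'⟩ := SetLike.not_le_iff_exists.1 hsyzygies
  have degree_le (k : Fin 4) : S.degree k ≤ j := by
    by_contra! hk
    have hPk := (mem_syzygies.1 hP).1 k
    rw [Nat.sub_eq_zero_of_le hk] at hPk
    exact hP' (mem_twoTermSyzygies_of_apply_eq_zero hS himage hP
      (by simpa [mem_degreeLT] using hPk))
  have dimension_count := S.finrank_image_add_finrank_syzygies j
  rw [finrank_image_eq hS himage hP hP', finrank_syzygies_eq_one hS himage hP hP',
    Fin.sum_univ_four] at dimension_count
  have := degree_le 0
  have := degree_le 1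
  have := degree_le 2
  have := degree_le 3
  rw [Fin.sum_univ_four]
  omega

end Rigidity

end LogFamily

section ShiftedForms

variable (R : Type*) [CommRing R] {σ : Type*}

/-- The graded piece `R[σ](-d)_n` of the free module of rank one generated in degree `d`: the forms
of degree `n - d`, understood to be zero when `n < d`. -/
noncomputable def shiftedForms (σ : Type*) (n d : ℕ) : Submodule R (MvPolynomial σ R) :=
  if d ≤ n then homogeneousSubmodule σ R (n - d) else ⊥

variable {R} {n d : ℕ} {F G : MvPolynomial σ R}

theorem mem_shiftedForms_iff_of_le (h : d ≤ n) :
    G ∈ shiftedForms R σ n d ↔ G.IsHomogeneous (n - d) := by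
  rw [shiftedForms, if_pos h, mem_homogeneousSubmodule]

theorem mem_shiftedForms_iff_of_lt (h : n < d) : G ∈ shiftedForms R σ n d ↔ G = 0 := by
  rw [shiftedForms, if_neg h.not_ge, Submodule.mem_bot]

theorem mul_mem_shiftedForms {d' : ℕ} (hG : G ∈ shiftedForms R σ n (d + d'))
    (hF : F.IsHomogeneous d') : G * F ∈ shiftedForms R σ n d := by
  rcases le_or_gt (d + d') n with h | h
  · rw [mem_shiftedForms_iff_of_le h] at hG
    rw [mem_shiftedForms_iff_of_le (by omega), show n - d = n - (d + d') + d' by omega]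
    exact hG.mul hF
  · rw [(mem_shiftedForms_iff_of_lt h).1 hG, zero_mul]
    exact zero_mem _

theorem isHomogeneous_mul_of_mem_shiftedForms (hG : G ∈ shiftedForms R σ n d)
    (hF : F.IsHomogeneous d) : (G * F).IsHomogeneous n := by
  rw [← zero_add d] at hG
  exact (mem_shiftedForms_iff_of_le n.zero_le).1 (mul_mem_shiftedForms hG hF)

theorem exists_homogeneousComponent_mul_eq (hF : F.IsHomogeneous d) (G : MvPolynomial σ R) (n : ℕ) :
    ∃ G' ∈ shiftedForms R σ n d, homogeneousComponent n (G * F) = G' * F := by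
  classical
  let _ := gradedAlgebra (σ := σ) (R := R)
  have component_mul :=
    DirectSum.coe_decompose_mul_of_right_mem (homogeneousSubmodule σ R) n (a := G) hF
  rw [show homogeneousComponent n (G * F) =
    (DirectSum.decompose (homogeneousSubmodule σ R) (G * F) n : _) from
      (decomposition.decompose'_apply (G * F) n).symm, component_mul]
  split_ifs with h
  · exact ⟨_, (mem_shiftedForms_iff_of_le h).2
      ((mem_homogeneousSubmodule _ _).1 (SetLike.coe_mem _)), rfl⟩
  · exact ⟨0, zero_mem _, (zero_mul F).symm⟩

theorem exists_shiftedForms_sum_eq {ι : Type*} [Fintype ι] {f : ι → MvPolynomial σ R} {d : ι → ℕ}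
    (hf : ∀ k, (f k).IsHomogeneous (d k)) (hG : G.IsHomogeneous n)
    (hmem : G ∈ Ideal.span (Set.range f)) :
    ∃ c : ι → MvPolynomial σ R, (∀ k, c k ∈ shiftedForms R σ n (d k)) ∧ ∑ k, c k * f k = G := by
  obtain ⟨c, rfl⟩ := Ideal.mem_span_range_iff_exists_fun.1 hmem
  choose c' hc' h using fun k => exists_homogeneousComponent_mul_eq (hf k) (c k) n
  refine ⟨c', hc', ?_⟩
  simp only [← h, ← map_sum, homogeneousComponent_eq_self hG]

end ShiftedForms

section RestrictionToLine

variable (R : Type*) [CommRing R]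

/-- The linear form `x + y - z`, the candidate Lefschetz element. -/
noncomputable def lineForm : MvPolynomial (Fin 3) R := X 0 + X 1 - X 2

/-- Restriction to the line `x + y = z`, in the affine chart `t ↦ [t : 1 : t + 1]`. -/
noncomputable def restrictToLine : MvPolynomial (Fin 3) R →ₐ[R] R[X] :=
  aeval ![Polynomial.X, 1, Polynomial.X + 1]

theorem isHomogeneous_lineForm : (lineForm R).IsHomogeneous 1 :=
  ((isHomogeneous_X _ 0).add (isHomogeneous_X _ 1)).sub (isHomogeneous_X _ 2)

theorem lineForm_ne_zero [Nontrivial R] : lineForm R ≠ 0 := fun h => by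
  simpa [lineForm] using congrArg (eval ![1, 0, 0]) h

theorem restrictToLine_lineForm : restrictToLine R (lineForm R) = 0 := by
  simp [restrictToLine, lineForm]

theorem restrictToLine_monomial (s : Fin 3 →₀ ℕ) :
    restrictToLine R (monomial s 1) = Polynomial.X ^ s 0 * (Polynomial.X + 1) ^ s 2 := by
  simp [restrictToLine, aeval_monomial, Finsupp.prod_fintype, Fin.prod_univ_three]

variable {R}

theorem natDegree_restrictToLine_le {n : ℕ} {G : MvPolynomial (Fin 3) R} (hG : G.IsHomogeneous n) :
    (restrictToLine R G).natDegree ≤ n := by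
  nontriviality R
  have := aeval_natDegree_le (n := 1) G hG.totalDegree_le
    ![(Polynomial.X : R[X]), 1, Polynomial.X + 1] (by
      simpa [Fin.forall_fin_succ] using (Polynomial.natDegree_X_add_C (1 : R)).le)
  rwa [mul_one] at this

theorem exists_isHomogeneous_restrictToLine_eq {n : ℕ} {p : R[X]} (hp : p.natDegree ≤ n) :
    ∃ G, G.IsHomogeneous n ∧ restrictToLine R G = p := by
  refine ⟨aeval ![X 0, X 1] (p.homogenize n), ?_, ?_⟩
  · simpa using (Polynomial.isHomogeneous_homogenize (n := n) p).aeval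
      ![(X 0 : MvPolynomial (Fin 3) R), X 1] (n := 1)
      (by simp [Fin.forall_fin_succ, isHomogeneous_X])
  · rw [← AlgHom.comp_apply, comp_aeval]
    conv_rhs => rw [← Polynomial.aeval_homogenize_X_one p hp]
    congr 2
    ext1 i
    fin_cases i <;> simp [restrictToLine]

theorem map_restrictToLine_shiftedForms (n d : ℕ) :
    (shiftedForms R (Fin 3) n d).map (restrictToLine R).toLinearMap = degreeLT R (n + 1 - d) := by
  ext p
  simp only [Submodule.mem_map, AlgHom.toLinearMap_apply]
  rcases le_or_gt d n with h | h
  · simp only [mem_shiftedForms_iff_of_le h, Nat.sub_add_comm h, mem_degreeLT_succ_iff]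
    exact ⟨fun ⟨G, hG, hp⟩ => hp ▸ natDegree_restrictToLine_le hG,
      exists_isHomogeneous_restrictToLine_eq⟩
  · simp [mem_shiftedForms_iff_of_lt h, Nat.sub_eq_zero_of_le h, mem_degreeLT,
      eq_comm (a := p)]

theorem aeval_eq_zero_of_restrictToLine_eq_zero {n : ℕ} {G : MvPolynomial (Fin 3) R}
    (hG : G.IsHomogeneous n) (h : restrictToLine R G = 0) :
    aeval ![(X 0 : MvPolynomial (Fin 2) R), X 1, X 0 + X 1] G = 0 := by
  have homogeneous := hG.aeval ![(X 0 : MvPolynomial (Fin 2) R), X 1, X 0 + X 1] (n := 1) (by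
    simp [Fin.forall_fin_succ, isHomogeneous_X, IsHomogeneous.add])
  rw [one_mul] at homogeneous
  have dehomogenized :
      aeval ![Polynomial.X, 1] (aeval ![(X 0 : MvPolynomial (Fin 2) R), X 1, X 0 + X 1] G) =
        (0 : R[X]) := by
    rw [← h, ← AlgHom.comp_apply, comp_aeval, restrictToLine]
    congr 2
    ext1 i
    fin_cases i <;> simp
  rw [← Polynomial.homogenize_eq_of_isHomogeneous homogeneous dehomogenized,
    Polynomial.homogenize_zero]

theorem lineForm_dvd_of_restrictToLine_eq_zero {n : ℕ} {G : MvPolynomial (Fin 3) R}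
    (hG : G.IsHomogeneous n) (h : restrictToLine R G = 0) : lineForm R ∣ G := by
  rw [← Ideal.mem_span_singleton, ← Ideal.Quotient.eq_zero_iff_mem,
    ← Ideal.Quotient.mkₐ_eq_mk R]
  have relation : Ideal.Quotient.mkₐ R (Ideal.span {lineForm R}) (X 2) =
      Ideal.Quotient.mkₐ R (Ideal.span {lineForm R}) (X 0 + X 1) := by
    refine Ideal.Quotient.eq.2 (Ideal.mem_span_singleton.2 ⟨-1, ?_⟩)
    rw [lineForm]
    ring
  have factor : (Ideal.Quotient.mkₐ R (Ideal.span {lineForm R})).comp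
      ((aeval ![X 0, X 1]).comp (aeval ![(X 0 : MvPolynomial (Fin 2) R), X 1, X 0 + X 1])) =
      Ideal.Quotient.mkₐ R (Ideal.span {lineForm R}) := by
    refine algHom_ext fun i => ?_
    fin_cases i
    · simp
    · simp
    · simpa [-Ideal.Quotient.mkₐ_eq_mk] using relation.symm
  rw [← factor, AlgHom.comp_apply, AlgHom.comp_apply,
    aeval_eq_zero_of_restrictToLine_eq_zero hG h, map_zero, map_zero]

theorem lineForm_dvd_of_mem_shiftedForms {n d : ℕ} {G : MvPolynomial (Fin 3) R}
    (hG : G ∈ shiftedForms R (Fin 3) n d) (h : restrictToLine R G = 0) : lineForm R ∣ G := by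
  rcases le_or_gt d n with hd | hd
  · exact lineForm_dvd_of_restrictToLine_eq_zero ((mem_shiftedForms_iff_of_le hd).1 hG) h
  · exact (mem_shiftedForms_iff_of_lt hd).1 hG ▸ dvd_zero _

theorem exists_mul_lineForm_eq {n : ℕ} {G : MvPolynomial (Fin 3) R} (hG : G.IsHomogeneous n)
    (h : restrictToLine R G = 0) : ∃ H ∈ shiftedForms R (Fin 3) n 1, H * lineForm R = G := by
  obtain ⟨H, rfl⟩ := lineForm_dvd_of_restrictToLine_eq_zero hG h
  obtain ⟨H', hH', h'⟩ := exists_homogeneousComponent_mul_eq (isHomogeneous_lineForm R) H n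
  exact ⟨H', hH', by rw [← h', mul_comm, homogeneousComponent_eq_self hG]⟩

end RestrictionToLine

section Monomials

variable (R : Type*) [CommRing R] (s : Fin 3 →₀ ℕ)

theorem monic_restrictToLine_monomial : (restrictToLine R (monomial s 1)).Monic := by
  rw [restrictToLine_monomial]
  exact (Polynomial.monic_X_pow _).mul ((Polynomial.monic_X_add_C (1 : R)).pow _)

theorem natDegree_restrictToLine_monomial [Nontrivial R] :
    (restrictToLine R (monomial s 1)).natDegree = s 0 + s 2 := by
  rw [restrictToLine_monomial, ← map_one Polynomial.C,
    (Polynomial.monic_X_pow _).natDegree_mul ((Polynomial.monic_X_add_C _).pow _),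
    Polynomial.natDegree_X_pow, (Polynomial.monic_X_add_C _).natDegree_pow,
    Polynomial.natDegree_X_add_C, mul_one]

variable {s} {t : Fin 3 →₀ ℕ}

theorem isCoprime_restrictToLine_monomial (h₀ : s 0 = 0 ∨ t 0 = 0) (h₂ : s 2 = 0 ∨ t 2 = 0) :
    IsCoprime (restrictToLine R (monomial s 1)) (restrictToLine R (monomial t 1)) := by
  have coprime : IsCoprime (Polynomial.X : R[X]) (Polynomial.X + 1) := ⟨-1, 1, by ring⟩
  rw [restrictToLine_monomial, restrictToLine_monomial]
  rcases h₀ with h₀ | h₀ <;> rcases h₂ with h₂ | h₂ <;>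
    simp [h₀, h₂, isCoprime_one_left, isCoprime_one_right, coprime.pow, coprime.symm.pow]

end Monomials

section TwoTermSyzygies

theorem mem_degreeLT_of_mul_mem {R : Type*} [CommRing R] {n : ℕ} {f r : R[X]} (hf : f.Monic)
    (h : f * r ∈ degreeLT R n) : r ∈ degreeLT R (n - f.natDegree) := by
  by_cases hr : r = 0
  · simp [hr]
  · have := natDegree_lt_of_mem_degreeLT h (hf.mul_right_eq_zero_iff.not.2 hr)
    rw [hf.natDegree_mul' hr] at this
    rw [mem_degreeLT, ← Polynomial.natDegree_lt_iff_degree_lt hr]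
    omega

theorem exists_eq_mul_of_mul_add_mul_eq_zero {R : Type*} [CommRing R] {f g p q : R[X]}
    (hf : f.Monic) (hfg : IsCoprime f g) (h : p * g + q * f = 0) :
    ∃ r, p = f * r ∧ q = -(g * r) := by
  obtain ⟨r, rfl⟩ : f ∣ p := hfg.dvd_of_dvd_mul_right ⟨-q, by linear_combination h⟩
  exact ⟨r, rfl, hf.isRegular.left (by linear_combination h)⟩

variable {R : Type*} [CommRing R] {n : ℕ} {s t : Fin 3 →₀ ℕ} {p q : R[X]}

theorem exists_mul_restrictToLine_monomial_eq
    (h : p * restrictToLine R (monomial s 1) + q * restrictToLine R (monomial t 1) = 0) :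
    ∃ r, p = restrictToLine R (monomial (t - s) 1) * r ∧
      q = -(restrictToLine R (monomial (s - t) 1) * r) := by
  refine exists_eq_mul_of_mul_add_mul_eq_zero (monic_restrictToLine_monomial R _)
    (isCoprime_restrictToLine_monomial R ?_ ?_)
    ((monic_restrictToLine_monomial R (s ⊓ t)).isRegular.left ?_)
  · simp only [Finsupp.tsub_apply]; omega
  · simp only [Finsupp.tsub_apply]; omega
  · have factor (u v : Fin 3 →₀ ℕ) : restrictToLine R (monomial u 1) =
        restrictToLine R (monomial (u ⊓ v) 1) * restrictToLine R (monomial (u - v) 1) := by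
      have gcd_eq : u ⊓ v + (u - v) = u := by
        ext i
        simp only [Finsupp.add_apply, Finsupp.inf_apply, Finsupp.tsub_apply]
        omega
      rw [← map_mul, monomial_mul, one_mul, gcd_eq]
    rw [factor s t, factor t s, inf_comm t s] at h
    linear_combination h

theorem exists_shiftedForms_monomial_lift (hp : p ∈ degreeLT R (n + 1 - s.degree))
    (hq : q ∈ degreeLT R (n + 1 - t.degree))
    (h : p * restrictToLine R (monomial s 1) + q * restrictToLine R (monomial t 1) = 0) :
    ∃ G ∈ shiftedForms R (Fin 3) n s.degree, ∃ H ∈ shiftedForms R (Fin 3) n t.degree,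
      G * monomial s 1 + H * monomial t 1 = 0 ∧ restrictToLine R G = p ∧
        restrictToLine R H = q := by
  obtain ⟨r, rfl, rfl⟩ := exists_mul_restrictToLine_monomial_eq h
  have lcm_eq : s + (t - s) = t + (s - t) := by
    ext i
    simp only [Finsupp.add_apply, Finsupp.tsub_apply]
    omega
  have degree_eq : s.degree + (t - s).degree = t.degree + (s - t).degree := by
    rw [← map_add, lcm_eq, map_add]
  have hr : r ∈ degreeLT R (n + 1 - (s.degree + (t - s).degree)) := by
    nontriviality R
    have hp := mem_degreeLT_of_mul_mem (monic_restrictToLine_monomial R _) hp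
    have hq := mem_degreeLT_of_mul_mem (monic_restrictToLine_monomial R _)
      (neg_mem_iff.1 hq)
    rw [natDegree_restrictToLine_monomial] at hp hq
    rcases le_total (t 1) (s 1) with hst | hst
    · convert hp using 2
      simp [Finsupp.degree_eq_sum, Fin.sum_univ_three, Nat.sub_eq_zero_of_le hst, Nat.sub_sub]
    · rw [degree_eq]
      convert hq using 2
      simp [Finsupp.degree_eq_sum, Fin.sum_univ_three, Nat.sub_eq_zero_of_le hst, Nat.sub_sub]
  rw [← map_restrictToLine_shiftedForms] at hr
  obtain ⟨S, hS, rfl⟩ := hr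
  have hS : S ∈ shiftedForms R (Fin 3) n (s.degree + (t - s).degree) := hS
  refine ⟨S * monomial (t - s) 1, mul_mem_shiftedForms hS (isHomogeneous_monomial _ rfl),
    -(S * monomial (s - t) 1), neg_mem (mul_mem_shiftedForms (degree_eq ▸ hS)
      (isHomogeneous_monomial _ rfl)), ?_, ?_, ?_⟩
  · rw [neg_mul, mul_assoc, mul_assoc, monomial_mul, monomial_mul, add_comm (t - s), lcm_eq,
      add_comm t, add_neg_cancel]
  · rw [map_mul, mul_comm]; rfl
  · rw [map_neg, map_mul, mul_comm]; rfl

end TwoTermSyzygies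

section MonomialFamily

theorem derivation_pow_eq_of_eq_mul {R A : Type*} [CommRing R] [CommRing A] [Algebra R A]
    (δ : Derivation R A A) {f u : A} (h : δ f = u * f) (n : ℕ) : δ (f ^ n) = n * u * f ^ n := by
  cases n with
  | zero => simp
  | succ n =>
    rw [Derivation.leibniz_pow, h, Nat.add_sub_cancel, nsmul_eq_mul, smul_eq_mul]
    ring

variable (K : Type*) [Field K] {ι : Type*}

/-- The restrictions to the line `x + y = z` of the monomials with exponents `e k`, with the
derivation `t (t + 1) d/dt`, which generates on the affine chart the vector fields logarithmic along
the three points where the line meets the coordinate axes. -/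
noncomputable def monomialFamily (e : ι → Fin 3 →₀ ℕ) : LogFamily K ι where
  poly k := restrictToLine K (monomial (e k) 1)
  degree k := (e k).degree
  derivation := Polynomial.mkDerivation K (Polynomial.X * (Polynomial.X + 1))
  logDeriv k := (e k 0 : K[X]) * (Polynomial.X + 1) + (e k 2 : K[X]) * Polynomial.X
  monic k := monic_restrictToLine_monomial K (e k)
  natDegree_poly_le k := by
    rw [natDegree_restrictToLine_monomial, Finsupp.degree_eq_sum, Fin.sum_univ_three]
    omega
  derivation_X_ne_zero := by
    rw [Polynomial.mkDerivation_X]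
    exact mul_ne_zero Polynomial.X_ne_zero (Polynomial.X_add_C_ne_zero 1)
  natDegree_derivation_X_le := by
    rw [Polynomial.mkDerivation_X]
    compute_degree
  derivation_poly k := by
    rw [restrictToLine_monomial, Derivation.leibniz,
      derivation_pow_eq_of_eq_mul _ (u := Polynomial.X) (by simp),
      derivation_pow_eq_of_eq_mul _ (u := Polynomial.X + 1)
        (by rw [Polynomial.mkDerivation_X, mul_comm])]
    simp only [smul_eq_mul]
    ring
  natDegree_logDeriv_le k := by compute_degree

variable {K} {e : ι → Fin 3 →₀ ℕ} {n : ℕ}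

theorem restrictToLine_mem_coefficients {G : ι → MvPolynomial (Fin 3) K}
    (hG : ∀ k, G k ∈ shiftedForms K (Fin 3) n (e k).degree) :
    (fun k => restrictToLine K (G k)) ∈ (monomialFamily K e).coefficients n := by
  refine LogFamily.mem_coefficients.2 fun k => ?_
  change restrictToLine K (G k) ∈ degreeLT K (n + 1 - (e k).degree)
  rw [← map_restrictToLine_shiftedForms]
  exact Submodule.mem_map_of_mem (hG k)

theorem exists_shiftedForms_restrictToLine_eq {P : ι → K[X]}
    (hP : P ∈ (monomialFamily K e).coefficients n) :
    ∃ G : ι → MvPolynomial (Fin 3) K, (∀ k, G k ∈ shiftedForms K (Fin 3) n (e k).degree) ∧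
      (fun k => restrictToLine K (G k)) = P := by
  have lift (k : ι) : P k ∈ (shiftedForms K (Fin 3) n (e k).degree).map
      (restrictToLine K).toLinearMap := by
    rw [map_restrictToLine_shiftedForms]
    exact LogFamily.mem_coefficients.1 hP k
  choose G hG hGP using lift
  exact ⟨G, hG, funext hGP⟩

variable [Fintype ι]

variable (K e) in
/-- The forms of degree `n` that are syzygies of the monomials with exponents `e k`. -/
noncomputable def formSyzygies (n : ℕ) : Submodule K (ι → MvPolynomial (Fin 3) K) :=
  Submodule.pi Set.univ (fun k => shiftedForms K (Fin 3) n (e k).degree) ⊓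
    LinearMap.ker ((Fintype.linearCombination (MvPolynomial (Fin 3) K)
      fun k => monomial (e k) (1 : K)).restrictScalars K)

theorem mem_formSyzygies {G : ι → MvPolynomial (Fin 3) K} :
    G ∈ formSyzygies K e n ↔
      (∀ k, G k ∈ shiftedForms K (Fin 3) n (e k).degree) ∧ ∑ k, G k * monomial (e k) 1 = 0 := by
  simp [formSyzygies, Submodule.mem_pi, Fintype.linearCombination_apply]

theorem combination_monomialFamily (G : ι → MvPolynomial (Fin 3) K) :
    (monomialFamily K e).combination (fun k => restrictToLine K (G k)) =
      restrictToLine K (∑ k, G k * monomial (e k) 1) := by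
  simp only [LogFamily.combination_apply, map_sum, map_mul]
  rfl

theorem single_add_single_mem_map_formSyzygies [DecidableEq ι] {k l : ι} {p q : K[X]}
    (hp : p ∈ degreeLT K (n + 1 - (e k).degree)) (hq : q ∈ degreeLT K (n + 1 - (e l).degree))
    (h : p * restrictToLine K (monomial (e k) 1) + q * restrictToLine K (monomial (e l) 1) = 0) :
    Pi.single k p + Pi.single l q ∈
      (formSyzygies K e n).map ((restrictToLine K).toLinearMap.compLeft ι) := by
  obtain ⟨G, hG, H, hH, sum_eq, rfl, rfl⟩ := exists_shiftedForms_monomial_lift hp hq h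
  refine ⟨Pi.single k G + Pi.single l H, ⟨add_mem ?_ ?_, ?_⟩, ?_⟩
  · exact Submodule.le_comap_single_pi _ hG
  · exact Submodule.le_comap_single_pi _ hH
  · simpa using sum_eq
  · ext1 m
    simp only [LinearMap.compLeft_apply, Function.comp_apply, Pi.add_apply, map_add,
      AlgHom.toLinearMap_apply, Pi.apply_single (fun _ => restrictToLine K) fun _ => map_zero _]

theorem twoTermSyzygies_le_map_formSyzygies :
    (monomialFamily K e).twoTermSyzygies n ≤
      (formSyzygies K e n).map ((restrictToLine K).toLinearMap.compLeft ι) := by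
  classical
  refine Submodule.span_le.2 ?_
  rintro P ⟨hP, k, l, hkl⟩
  have hk : Pi.single k (P k) ∈ (monomialFamily K e).coefficients n :=
    LogFamily.single_mem_coefficients _ (LogFamily.mem_coefficients.1 hP.1 k)
  obtain ⟨q, hq, decomposition⟩ : ∃ q ∈ degreeLT K (n + 1 - (e l).degree),
      P = Pi.single k (P k) + Pi.single l q := by
    refine ⟨(P - Pi.single k (P k) : ι → K[X]) l,
      LogFamily.mem_coefficients.1 (sub_mem hP.1 hk) l, ?_⟩
    ext1 m
    by_cases hmk : m = k <;> by_cases hml : m = l <;> simp_all [Pi.single_apply]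
  have combination_eq := (LogFamily.mem_syzygies.1 hP).2
  rw [decomposition, map_add, LogFamily.combination_single,
    LogFamily.combination_single] at combination_eq
  exact decomposition ▸ single_add_single_mem_map_formSyzygies
    (LogFamily.mem_coefficients.1 hP.1 k) hq combination_eq

end MonomialFamily

section MultiplicationByLineForm

variable {K : Type*} [Field K] {ι : Type*} [Fintype ι] {e : ι → Fin 3 →₀ ℕ} {d : ℕ}

/-- The ideal generated by the monomials with exponents `e k`. -/
noncomputable abbrev monomialIdeal (K : Type*) [Field K] (e : ι → Fin 3 →₀ ℕ) :
    Ideal (MvPolynomial (Fin 3) K) :=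
  Ideal.span (Set.range fun k => monomial (e k) 1)

theorem sum_mul_monomial_mem_monomialIdeal (G : ι → MvPolynomial (Fin 3) K) :
    ∑ k, G k * monomial (e k) 1 ∈ monomialIdeal K e :=
  Ideal.mem_span_range_iff_exists_fun.2 ⟨G, rfl⟩

theorem exists_mem_formSyzygies_lineForm_dvd_sub {G : ι → MvPolynomial (Fin 3) K}
    (hG : ∀ k, G k ∈ shiftedForms K (Fin 3) (d + 1) (e k).degree)
    (hsum : lineForm K ∣ ∑ k, G k * monomial (e k) 1)
    (h : (monomialFamily K e).syzygies (d + 1) ≤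
      (formSyzygies K e (d + 1)).map ((restrictToLine K).toLinearMap.compLeft ι)) :
    ∃ G' ∈ formSyzygies K e (d + 1), ∀ k, lineForm K ∣ G k - G' k := by
  obtain ⟨H, hH⟩ := hsum
  have syzygy : (fun k => restrictToLine K (G k)) ∈ (monomialFamily K e).syzygies (d + 1) :=
    ⟨restrictToLine_mem_coefficients hG, by
      change (monomialFamily K e).combination _ = 0
      rw [combination_monomialFamily, hH, map_mul, restrictToLine_lineForm, zero_mul]⟩
  obtain ⟨G', hG', restrict_eq⟩ := h syzygy
  refine ⟨G', hG', fun k => ?_⟩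
  refine lineForm_dvd_of_mem_shiftedForms
    (sub_mem (hG k) ((mem_formSyzygies.1 hG').1 k)) ?_
  rw [map_sub, sub_eq_zero]
  exact (congrFun restrict_eq k).symm

theorem mulMapInj_lineForm
    (h : (monomialFamily K e).syzygies (d + 1) ≤
      (formSyzygies K e (d + 1)).map ((restrictToLine K).toLinearMap.compLeft ι)) :
    mulMapInj 3 K (monomialIdeal K e) (lineForm K) d := by
  rintro _ ⟨g, hg, rfl⟩ hLg
  have hg : g.IsHomogeneous d := hg
  have hmem : g * lineForm K ∈ monomialIdeal K e := by
    rw [mul_comm, ← Ideal.Quotient.eq_zero_iff_mem, map_mul]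
    exact hLg
  obtain ⟨G, hG, hGg⟩ := exists_shiftedForms_sum_eq (fun k => isHomogeneous_monomial (1 : K) rfl)
    (hg.mul (isHomogeneous_lineForm K)) hmem
  obtain ⟨G', hG', hdvd⟩ := exists_mem_formSyzygies_lineForm_dvd_sub hG
    (hGg ▸ dvd_mul_left _ _) h
  choose H hH using hdvd
  have g_eq : g = ∑ k, H k * monomial (e k) 1 := by
    refine mul_left_cancel₀ (lineForm_ne_zero K) ?_
    rw [mul_comm, ← hGg, ← sub_zero (∑ k, G k * _), ← (mem_formSyzygies.1 hG').2,
      ← Finset.sum_sub_distrib, Finset.mul_sum]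
    simp only [← sub_mul, hH, mul_assoc]
  change Ideal.Quotient.mk _ g = 0
  rw [Ideal.Quotient.eq_zero_iff_mem, g_eq]
  exact sum_mul_monomial_mem_monomialIdeal H

theorem mulMapSurj_lineForm
    (h : degreeLT K (d + 2) ≤ (monomialFamily K e).image (d + 1)) :
    mulMapSurj 3 K (monomialIdeal K e) (lineForm K) d := by
  rintro _ ⟨B, hB, rfl⟩
  have hB : B.IsHomogeneous (d + 1) := hB
  obtain ⟨P, hP, hPB⟩ := h (mem_degreeLT_succ_iff.2 (natDegree_restrictToLine_le hB))
  obtain ⟨G, hG, rfl⟩ := exists_shiftedForms_restrictToLine_eq hP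
  have difference_homogeneous : (B - ∑ k, G k * monomial (e k) 1).IsHomogeneous (d + 1) :=
    hB.sub (IsHomogeneous.sum _ _ _ fun k _ =>
      isHomogeneous_mul_of_mem_shiftedForms (hG k) (isHomogeneous_monomial _ rfl))
  obtain ⟨H, hH, difference_eq⟩ := exists_mul_lineForm_eq difference_homogeneous (by
    rw [map_sub, ← combination_monomialFamily, sub_eq_zero]
    exact hPB.symm)
  rw [mem_shiftedForms_iff_of_le (by omega), Nat.add_sub_cancel] at hH
  refine ⟨_, ⟨H, hH, rfl⟩, ?_⟩
  change Ideal.Quotient.mk _ (lineForm K) * Ideal.Quotient.mk _ H = Ideal.Quotient.mk _ B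
  rw [← map_mul, eq_comm, Ideal.Quotient.eq, mul_comm, difference_eq, sub_sub_cancel]
  exact sum_mul_monomial_mem_monomialIdeal G

theorem sum_degree_eq_of_not_mulMapInj_of_not_mulMapSurj [CharZero K] {e : Fin 4 → Fin 3 →₀ ℕ}
    (he : (monomialFamily K e).HasCoprimePairs)
    (hinj : ¬ mulMapInj 3 K (monomialIdeal K e) (lineForm K) d)
    (hsurj : ¬ mulMapSurj 3 K (monomialIdeal K e) (lineForm K) d) :
    ∑ k, (e k).degree = 3 * (d + 2) :=
  LogFamily.sum_degree_eq he (fun h => hsurj (mulMapSurj_lineForm h)) fun h =>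
    hinj (mulMapInj_lineForm (h.trans twoTermSyzygies_le_map_formSyzygies))

end MultiplicationByLineForm

theorem hasCoprimePairs_monomialFamily (K : Type*) [Field K] (a b c : ℕ) (s : Fin 3 →₀ ℕ) :
    (monomialFamily K ![Finsupp.single 0 a, Finsupp.single 1 b, Finsupp.single 2 c,
      s]).HasCoprimePairs := by
  intro m
  obtain ⟨k, l, hk, hl, hkl⟩ : ∃ k l : Fin 4, k ≠ m ∧ l ≠ m ∧
      (k = 0 ∧ l = 1 ∨ k = 0 ∧ l = 2 ∨ k = 2 ∧ l = 1) := by decide +revert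
  refine ⟨k, l, hk, hl, ?_, ?_⟩ <;> obtain ⟨rfl, rfl⟩ | ⟨rfl, rfl⟩ | ⟨rfl, rfl⟩ := hkl
  iterate 3 exact isCoprime_restrictToLine_monomial K (by simp) (by simp)
  all_goals simp [monomialFamily, natDegree_restrictToLine_monomial]

theorem monomialIdeal_eq_span (K : Type*) [Field K] (a b c α β γ : ℕ) :
    monomialIdeal K ![Finsupp.single 0 a, Finsupp.single 1 b, Finsupp.single 2 c,
      Finsupp.single 0 α + Finsupp.single 1 β + Finsupp.single 2 γ] =
    Ideal.span {X 0 ^ a, X 1 ^ b, X 2 ^ c, X 0 ^ α * X 1 ^ β * X 2 ^ γ} := by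
  simp only [X_pow_eq_monomial, monomial_mul, one_mul]
  refine congrArg Ideal.span (Set.ext fun F => ?_)
  simp [Fin.exists_fin_succ, eq_comm (a := F)]

theorem stmt_13_general {K : Type*} [Field K] [CharZero K] (a b c α β γ : ℕ)
    (h : ¬ hasWLP 3 K (Ideal.span {X 0 ^ a, X 1 ^ b, X 2 ^ c, X 0 ^ α * X 1 ^ β * X 2 ^ γ})) :
    (a + b + c + α + β + γ) % 3 = 0 := by
  by_contra hmod
  refine h ⟨lineForm K, isHomogeneous_lineForm K, fun d => ?_⟩
  by_contra! hfail
  rw [← monomialIdeal_eq_span] at hfail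
  have := sum_degree_eq_of_not_mulMapInj_of_not_mulMapSurj
    (hasCoprimePairs_monomialFamily K a b c _) hfail.1 hfail.2
  simp only [Fin.sum_univ_four, Matrix.cons_val, map_add, Finsupp.degree_single] at this
  omega

/-- Over an algebraically closed field of characteristic zero, if
`I = (x^a, y^b, z^c, x^α y^β z^γ)` is not a complete intersection and `R/I` fails
to have the WLP, then `a+b+c+α+β+γ ≡ 0 (mod 3)`. -/
theorem stmt_13 {K : Type*} [Field K] [IsAlgClosed K] [CharZero K]
    (a b c α β γ : ℕ) (hα : α < a) (hβ : β < b) (hγ : γ < c) :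
    letI I : Ideal (MvPolynomial (Fin 3) K) :=
      Ideal.span {X 0 ^ a, X 1 ^ b, X 2 ^ c, X 0 ^ α * X 1 ^ β * X 2 ^ γ}
    (¬ ∃ f g h : MvPolynomial (Fin 3) K, I = Ideal.span {f, g, h}) →
    ¬ hasWLP 3 K I → (a + b + c + α + β + γ) % 3 = 0 :=
  fun _ => stmt_13_general a b c α β γ
end

section
/- Let K be an algebraically closed field of characteristic zero and R = K[x,y,z]. Let I = (x^a, y^b, z^c, x^α y^β z^γ) with 0 < α < a, 0 < β < b, 0 < γ < c, and assume R/I is level, i.e. a − α = b − β = c − γ. If R/I fails to have the WLP, then a + b + c ≡ 0 (mod 3) and α + β + γ ≡ 0 (mod 3). -/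
open MvPolynomial

/-!
Restrict to the line `x + y = z`. Multiplication by `x + y - z` into degree `j` has maximal rank
once the restricted generators span all binary forms of degree `j`, or every syzygy of degree `j`
between them is a multiple of a constant vector: such syzygies lift to `K[x, y, z]`. If the span
is proper, the syzygies of degrees `j` and `j + 1` are coplanar, and the derivation
`θ = t (t + 1) d/dt` maps the former to the latter.

If the Wronskian of some syzygy of degree `j` is nonzero, coplanarity forces these syzygies to
form a line, so that `a + b + c + α + β + γ ≥ 3j + 3`. The product of the four generators divides
the Wronskian, a form of degree `3j + 3`, which gives the converse inequality. Hence
`a + b + c + α + β + γ` is divisible by `3`, and so is `a + b + c` by levelness.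

If the Wronskian of a syzygy `u` vanishes, then `u` lies in a constant plane. The syzygies in that
plane are so many, and their `2 × 2` minors so divisible, that `u` must be parallel to its
derivative: otherwise dividing a syzygy by powers of `t - τ` leads to a descent on the degree of
`u`.
-/

open scoped Polynomial Matrix

namespace WeakLefschetz

section Forms

variable {K : Type*} [Field K] {j j' : ℕ} {e e' : Fin 3 → ℕ} {P Q : K[X]}

/-- The coordinates `x`, `y`, `z` restricted to the line `z = x + y` and dehomogenised at
`y = 1`, with `t = x`. -/
noncomputable def lineCoord (K : Type*) [Field K] : Fin 3 → K[X] :=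
  ![Polynomial.X, 1, Polynomial.X + 1]

/-- The restriction of the monomial `x ^ e 0 * y ^ e 1 * z ^ e 2` to the line `z = x + y`. -/
noncomputable def lineMonomial (K : Type*) [Field K] (e : Fin 3 → ℕ) : K[X] :=
  ∏ k, lineCoord K k ^ e k

/-- The multiples of `x ^ e 0 * y ^ e 1 * z ^ e 2` among the binary forms of degree `j` on the line
`z = x + y`, dehomogenised at `y = 1`. Truncated subtraction makes this zero when `j < ∑ k, e k`. -/
noncomputable def forms (K : Type*) [Field K] (j : ℕ) (e : Fin 3 → ℕ) : Submodule K K[X] :=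
  (Polynomial.degreeLT K (j + 1 - ∑ k, e k)).map (LinearMap.mulLeft K (lineMonomial K e))

theorem lineMonomial_eq (e : Fin 3 → ℕ) :
    lineMonomial K e = Polynomial.X ^ e 0 * (Polynomial.X + 1) ^ e 2 := by
  simp [lineMonomial, lineCoord, Fin.prod_univ_three]

theorem lineMonomial_monic (e : Fin 3 → ℕ) : (lineMonomial K e).Monic := by
  rw [lineMonomial_eq]
  exact (Polynomial.monic_X_pow _).mul ((Polynomial.monic_X_add_C (1 : K)).pow _)

theorem natDegree_lineMonomial (e : Fin 3 → ℕ) : (lineMonomial K e).natDegree = e 0 + e 2 := by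
  have hX1 : (Polynomial.X + 1 : K[X]).Monic := Polynomial.monic_X_add_C 1
  have hdeg : (Polynomial.X + 1 : K[X]).natDegree = 1 := Polynomial.natDegree_X_add_C 1
  rw [lineMonomial_eq, (Polynomial.monic_X_pow _).natDegree_mul (hX1.pow _), hX1.natDegree_pow,
    hdeg, Polynomial.natDegree_X_pow, mul_one]

theorem mem_degreeLT_iff_natDegree_lt {n : ℕ} (hP : P ≠ 0) :
    P ∈ Polynomial.degreeLT K n ↔ P.natDegree < n := by
  rw [Polynomial.mem_degreeLT, Polynomial.natDegree_lt_iff_degree_lt hP]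

theorem mem_forms_iff_exists :
    P ∈ forms K j e ↔
      ∃ Q ∈ Polynomial.degreeLT K (j + 1 - ∑ k, e k), lineMonomial K e * Q = P :=
  Iff.rfl

theorem finrank_forms (j : ℕ) (e : Fin 3 → ℕ) :
    Module.finrank K (forms K j e) = j + 1 - ∑ k, e k := by
  have hinj : Function.Injective (LinearMap.mulLeft K (lineMonomial K e)) :=
    mul_right_injective₀ (lineMonomial_monic e).ne_zero
  rw [forms, ← (Submodule.equivMapOfInjective _ hinj _).finrank_eq,
    (Polynomial.degreeLTEquiv K _).finrank_eq, Module.finrank_fin_fun]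

instance : FiniteDimensional K (forms K j e) := by
  have : FiniteDimensional K (Polynomial.degreeLT K (j + 1 - ∑ k, e k)) :=
    (Polynomial.degreeLTEquiv K _).symm.finiteDimensional
  unfold forms
  infer_instance

theorem sum_le_of_mem_forms (hP : P ∈ forms K j e) (h0 : P ≠ 0) : ∑ k, e k ≤ j := by
  by_contra! hlt
  have hbot : forms K j e = ⊥ := by
    rw [← Submodule.finrank_eq_zero, finrank_forms]
    omega
  exact h0 (by simpa [hbot] using hP)

theorem mem_forms_iff_dvd :
    P ∈ forms K j e ↔ Polynomial.X ^ e 0 ∣ P ∧ P ∈ Polynomial.degreeLT K (j + 1 - e 1) ∧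
      (Polynomial.X + 1) ^ e 2 ∣ P := by
  rcases eq_or_ne P 0 with rfl | hP
  · simp only [dvd_zero, Submodule.zero_mem, true_and]
  have natDegree_eq (Q : K[X]) (hQ : lineMonomial K e * Q = P) :
      P.natDegree = e 0 + e 2 + Q.natDegree := by
    rw [← hQ, (lineMonomial_monic e).natDegree_mul' (right_ne_zero_of_mul (hQ ▸ hP)),
      natDegree_lineMonomial]
  have key (Q : K[X]) (hQ : lineMonomial K e * Q = P) :
      Q ∈ Polynomial.degreeLT K (j + 1 - ∑ k, e k) ↔ P ∈ Polynomial.degreeLT K (j + 1 - e 1) := by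
    rw [mem_degreeLT_iff_natDegree_lt (right_ne_zero_of_mul (hQ ▸ hP)),
      mem_degreeLT_iff_natDegree_lt hP, natDegree_eq Q hQ, Fin.sum_univ_three]
    omega
  constructor
  · rintro ⟨Q, hQ, hPQ⟩
    rw [LinearMap.mulLeft_apply] at hPQ
    have hdvd := Dvd.intro _ hPQ
    rw [lineMonomial_eq] at hdvd
    exact ⟨dvd_of_mul_right_dvd hdvd, (key Q hPQ).1 hQ, dvd_of_mul_left_dvd hdvd⟩
  · rintro ⟨hX, hdeg, hX1⟩
    have hcop : IsCoprime (Polynomial.X : K[X]) (Polynomial.X + 1) := ⟨-1, 1, by ring⟩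
    obtain ⟨Q, hQ⟩ := (hcop.pow (m := e 0) (n := e 2)).mul_dvd hX hX1
    rw [← lineMonomial_eq] at hQ
    exact ⟨Q, (key Q hQ.symm).2 hdeg, hQ.symm⟩

/-- Divisibility by the pairwise coprime powers of `x`, `y`, `z` may be checked separately. -/
theorem mem_forms_of_forall_coord (h : ∀ k, ∃ e', e k ≤ e' k ∧ P ∈ forms K j e') :
    P ∈ forms K j e := by
  obtain ⟨e₀, he₀, h₀⟩ := h 0
  obtain ⟨e₁, he₁, h₁⟩ := h 1
  obtain ⟨e₂, he₂, h₂⟩ := h 2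
  rw [mem_forms_iff_dvd] at h₀ h₁ h₂ ⊢
  exact ⟨(pow_dvd_pow _ he₀).trans h₀.1, Polynomial.degreeLT_mono (by omega) h₁.2.1,
    (pow_dvd_pow _ he₂).trans h₂.2.2⟩

theorem mem_forms_sup {ι : Type*} {g : ι → Fin 3 → ℕ} {s : Finset ι} (hs : s.Nonempty)
    (h : ∀ i ∈ s, P ∈ forms K j (g i)) : P ∈ forms K j (s.sup g) := by
  refine mem_forms_of_forall_coord fun k => ?_
  obtain ⟨i, hi, hik⟩ := Finset.exists_mem_eq_sup s hs fun i => g i k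
  exact ⟨g i, (Finset.sup_apply s g k).trans hik |>.le, h i hi⟩

theorem forms_anti (he : e ≤ e') : forms K j e' ≤ forms K j e :=
  fun _ hP => mem_forms_of_forall_coord fun k => ⟨e', he k, hP⟩

theorem forms_mono (hj : j ≤ j') : forms K j e ≤ forms K j' e :=
  Submodule.map_mono (Polynomial.degreeLT_mono (by omega))

theorem mul_mem_forms (hP : P ∈ forms K j e) (hQ : Q ∈ forms K j' e') :
    P * Q ∈ forms K (j + j') (e + e') := by
  rcases eq_or_ne P 0 with rfl | hP0
  · simp only [zero_mul, Submodule.zero_mem]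
  rcases eq_or_ne Q 0 with rfl | hQ0
  · simp only [mul_zero, Submodule.zero_mem]
  rw [mem_forms_iff_dvd] at *
  rw [mem_degreeLT_iff_natDegree_lt ‹_›] at hP hQ
  rw [mem_degreeLT_iff_natDegree_lt (mul_ne_zero hP0 hQ0), Polynomial.natDegree_mul hP0 hQ0]
  simp only [Pi.add_apply, pow_add]
  exact ⟨mul_dvd_mul hP.1 hQ.1, by omega, mul_dvd_mul hP.2.2 hQ.2.2⟩

theorem mul_sub_mul_mem_forms {P' Q' : K[X]} (hP : P ∈ forms K j e) (hQ : Q ∈ forms K j e')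
    (hP' : P' ∈ forms K j' e) (hQ' : Q' ∈ forms K j' e') :
    P * Q' - Q * P' ∈ forms K (j + j') (e + e') :=
  sub_mem (mul_mem_forms hP hQ') (add_comm e e' ▸ mul_mem_forms hQ hP')

theorem one_mem_forms : (1 : K[X]) ∈ forms K 0 0 :=
  mem_forms_iff_dvd.2 ⟨by simp, by simp [Polynomial.mem_degreeLT], by simp⟩

theorem prod_mem_forms {ι : Type*} {s : Finset ι} {P : ι → K[X]} {d : ι → ℕ} {e : ι → Fin 3 → ℕ}
    (h : ∀ i ∈ s, P i ∈ forms K (d i) (e i)) :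
    ∏ i ∈ s, P i ∈ forms K (∑ i ∈ s, d i) (∑ i ∈ s, e i) := by
  classical
  induction s using Finset.induction_on with
  | empty => simpa using one_mem_forms
  | insert i s hi ih =>
    rw [Finset.prod_insert hi, Finset.sum_insert hi, Finset.sum_insert hi]
    exact mul_mem_forms (h i (Finset.mem_insert_self i s))
      (ih fun k hk => h k (Finset.mem_insert_of_mem hk))

theorem mem_forms_of_X_sub_C_pow_mul_mem {n : ℕ} {τ : K} (h0 : τ ≠ 0) (h1 : τ + 1 ≠ 0)
    (h : (Polynomial.X - Polynomial.C τ) ^ n * Q ∈ forms K (j + n) e) : Q ∈ forms K j e := by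
  rcases eq_or_ne Q 0 with rfl | hQ
  · exact Submodule.zero_mem _
  have coprime {c : K} (hc : τ + c ≠ 0) (k : ℕ) :
      IsCoprime ((Polynomial.X + Polynomial.C c) ^ k) ((Polynomial.X - Polynomial.C τ) ^ n) := by
    have := Polynomial.isCoprime_X_sub_C_of_isUnit_sub (R := K) (a := -c) (b := τ)
      (by rw [isUnit_iff_ne_zero, ← neg_ne_zero]; convert hc using 1; ring)
    simpa using this.pow (m := k) (n := n)
  have hX := coprime (c := 0) (by simpa using h0) (e 0)
  have hX1 := coprime h1 (e 2)
  rw [map_zero, add_zero] at hX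
  rw [map_one] at hX1
  have hpow := (Polynomial.monic_X_sub_C τ).pow n
  rw [mem_forms_iff_dvd, mem_degreeLT_iff_natDegree_lt (mul_ne_zero hpow.ne_zero hQ),
    hpow.natDegree_mul' hQ, (Polynomial.monic_X_sub_C τ).natDegree_pow,
    Polynomial.natDegree_X_sub_C] at h
  rw [mem_forms_iff_dvd, mem_degreeLT_iff_natDegree_lt hQ]
  exact ⟨hX.dvd_of_dvd_mul_left h.1, by omega, hX1.dvd_of_dvd_mul_left h.2.2⟩

/-- The derivation `t (t + 1) d/dt`. It raises the degree of a form by one and, unlike `d/dt`, keeps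
its divisibility by powers of each of the three coordinates. -/
noncomputable def theta (K : Type*) [Field K] : Derivation K K[X] K[X] :=
  Polynomial.mkDerivation K (Polynomial.X * (Polynomial.X + 1))

theorem theta_apply (P : K[X]) :
    theta K P = P.derivative * (Polynomial.X * (Polynomial.X + 1)) :=
  Polynomial.mkDerivation_apply K _ P

theorem theta_eq_zero_of_mem_forms_zero (hP : P ∈ forms K 0 e) : theta K P = 0 := by
  have hdeg := (mem_forms_iff_dvd.1 hP).2.1
  rcases eq_or_ne P 0 with rfl | hP0
  · exact map_zero _
  rw [mem_degreeLT_iff_natDegree_lt hP0] at hdeg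
  rw [theta_apply, Polynomial.derivative_of_natDegree_zero (by omega), zero_mul]

theorem pow_dvd_theta_of_pow_dvd {f : K[X]} (hf : f ∣ theta K f) {n : ℕ} (hP : f ^ n ∣ P) :
    f ^ n ∣ theta K P := by
  have hpow : f ^ n ∣ theta K (f ^ n) := by
    rcases n with _ | n
    · exact (pow_zero f).symm ▸ one_dvd _
    · rw [Derivation.leibniz_pow, Nat.add_sub_cancel, smul_eq_mul, pow_succ, nsmul_eq_mul]
      exact (mul_dvd_mul_left _ hf).mul_left _
  obtain ⟨Q, rfl⟩ := hP
  rw [Derivation.leibniz, smul_eq_mul, smul_eq_mul]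
  exact dvd_add (Dvd.intro _ rfl) (hpow.mul_left Q)

theorem theta_mem_forms (hP : P ∈ forms K j e) : theta K P ∈ forms K (j + 1) e := by
  rcases eq_or_ne (theta K P) 0 with h0 | h0
  · rw [h0]
    exact Submodule.zero_mem _
  have hX : Polynomial.X ∣ theta K Polynomial.X := by simp [theta_apply]
  have hX1 : Polynomial.X + 1 ∣ theta K (Polynomial.X + 1) := by simp [theta_apply]
  rw [mem_forms_iff_dvd] at hP ⊢
  refine ⟨pow_dvd_theta_of_pow_dvd hX hP.1, ?_, pow_dvd_theta_of_pow_dvd hX1 hP.2.2⟩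
  have hderiv : P.derivative ≠ 0 := left_ne_zero_of_mul (theta_apply P ▸ h0)
  have hP0 : P ≠ 0 := by
    rintro rfl
    exact hderiv Polynomial.derivative_zero
  have hlt := Polynomial.natDegree_derivative_lt fun h =>
    hderiv (Polynomial.derivative_of_natDegree_zero h)
  have hdeg : (theta K P).natDegree ≤ P.derivative.natDegree + 2 := by
    rw [theta_apply]
    compute_degree
  have hP1 := (mem_degreeLT_iff_natDegree_lt hP0).1 hP.2.1
  rw [mem_degreeLT_iff_natDegree_lt h0]
  omega

theorem exists_eval_ne_zero [CharZero K] (hP : P ≠ 0) :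
    ∃ τ : K, τ ≠ 0 ∧ τ + 1 ≠ 0 ∧ P.eval τ ≠ 0 := by
  have hne : P * (Polynomial.X * (Polynomial.X + 1)) ≠ 0 :=
    mul_ne_zero hP (mul_ne_zero Polynomial.X_ne_zero (Polynomial.X_add_C_ne_zero 1))
  obtain ⟨τ, hτ⟩ : ∃ τ : K, (P * (Polynomial.X * (Polynomial.X + 1))).eval τ ≠ 0 := by
    by_contra! h
    exact hne (Polynomial.funext fun τ => by rw [h τ, Polynomial.eval_zero])
  simp only [Polynomial.eval_mul, Polynomial.eval_add, Polynomial.eval_X, Polynomial.eval_one,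
    mul_ne_zero_iff] at hτ
  exact ⟨τ, hτ.2.1, hτ.2.2, hτ.1⟩

theorem exists_ne_zero_dvd_of_finrank_lt {V W : Type*} [AddCommGroup V] [Module K V]
    [AddCommGroup W] [Module K W] [FiniteDimensional K W] (Φ : V →ₗ[K] W) (Ψ : V →ₗ[K] K[X])
    (hQ : Q.Monic) (h : Module.finrank K W + Q.natDegree < Module.finrank K V) :
    ∃ v ≠ 0, Φ v = 0 ∧ Q ∣ Ψ v := by
  have : Module.Finite K V := Module.finite_of_finrank_pos (Nat.zero_lt_of_lt h)
  have hmod (v : V) : Polynomial.modByMonicHom Q (Ψ v) ∈ Polynomial.degreeLT K Q.natDegree := by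
    rw [Polynomial.mem_degreeLT, ← Polynomial.degree_eq_natDegree hQ.ne_zero]
    exact Polynomial.degree_modByMonic_lt _ hQ
  have hker := LinearMap.ker_ne_bot_of_finrank_lt
    (f := Φ.prod (((Polynomial.modByMonicHom Q).comp Ψ).codRestrict _ hmod)) (by
      rwa [Module.finrank_prod, (Polynomial.degreeLTEquiv K _).finrank_eq, Module.finrank_fin_fun])
  obtain ⟨v, hv, hv0⟩ := Submodule.exists_mem_ne_zero_of_ne_bot hker
  obtain ⟨hΦv, hΨv⟩ := Prod.mk.inj (LinearMap.mem_ker.1 hv)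
  exact ⟨v, hv0, hΦv, (Polynomial.modByMonic_eq_zero_iff_dvd hQ).1 (congrArg Subtype.val hΨv)⟩

end Forms

section Wronskian

variable {R A : Type*} [CommRing R] [CommRing A] [Algebra R A] (D : Derivation R A A)
  {u v w l : Fin 3 → A}

/-- The Wronskian determinant of three elements of a differential ring. -/
def wronskian (u : Fin 3 → A) : A :=
  u ⬝ᵥ (D ∘ u) ⨯₃ (D ∘ D ∘ u)

theorem comp_smul_eq (f : A) (u : Fin 3 → A) : D ∘ (f • u) = f • (D ∘ u) + D f • u := by
  ext i
  simp only [Function.comp_apply, Pi.add_apply, Pi.smul_apply, smul_eq_mul, Derivation.leibniz]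
  ring

theorem apply_dotProduct (u v : Fin 3 → A) : D (u ⬝ᵥ v) = (D ∘ u) ⬝ᵥ v + u ⬝ᵥ (D ∘ v) := by
  simp only [dotProduct, map_sum, Derivation.leibniz, smul_eq_mul, Function.comp_apply,
    ← Finset.sum_add_distrib]
  exact Finset.sum_congr rfl fun _ _ => by ring

theorem comp_cross (u v : Fin 3 → A) : D ∘ (u ⨯₃ v) = (D ∘ u) ⨯₃ v + u ⨯₃ (D ∘ v) := by
  ext i
  fin_cases i <;> simp [cross_apply] <;> ring

theorem wronskian_smul (f : A) (u : Fin 3 → A) : wronskian D (f • u) = f ^ 3 * wronskian D u := by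
  simp only [wronskian, dotProduct, cross_apply, Fin.sum_univ_three, Function.comp_apply,
    Pi.smul_apply, smul_eq_mul, Derivation.leibniz, map_add, Matrix.cons_val]
  ring

theorem smul_cross_comp_smul (f : A) (u : Fin 3 → A) :
    (f • u) ⨯₃ (D ∘ (f • u)) = f ^ 2 • (u ⨯₃ (D ∘ u)) := by
  simp only [comp_smul_eq, map_add, map_smul, LinearMap.smul_apply, cross_self, smul_zero, add_zero,
    smul_smul, sq]

theorem wronskian_update (u : Fin 3 → A) (k : Fin 3) :
    wronskian D (Function.update u k (-∑ i, u i)) = -wronskian D u := by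
  fin_cases k <;> simp [wronskian, dotProduct, cross_apply, Fin.sum_univ_three] <;> ring

theorem smul_eq_smul_of_cross_eq_zero (h : u ⨯₃ v = 0) (k : Fin 3) : u k • v = v k • u := by
  have h₀ := congrFun h 0
  have h₁ := congrFun h 1
  have h₂ := congrFun h 2
  simp only [cross_apply, Matrix.cons_val, Pi.zero_apply] at h₀ h₁ h₂
  ext i
  fin_cases k <;> fin_cases i <;> simp <;> grind

theorem wronskian_eq_zero_of_cross_eq_zero [IsDomain A] (h : u ⨯₃ v = 0) (hv : v ≠ 0)
    (hW : wronskian D v = 0) : wronskian D u = 0 := by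
  obtain ⟨k, hk⟩ := Function.ne_iff.1 hv
  have hpow := congrArg (wronskian D) (smul_eq_smul_of_cross_eq_zero h k)
  rw [wronskian_smul, wronskian_smul, hW, mul_zero, eq_comm] at hpow
  exact (mul_eq_zero.1 hpow).resolve_left (pow_ne_zero _ hk)

theorem cross_comp_eq_zero_of_cross_eq_zero [IsDomain A] (h : u ⨯₃ v = 0) (hv : v ≠ 0)
    (hN : v ⨯₃ (D ∘ v) = 0) : u ⨯₃ (D ∘ u) = 0 := by
  obtain ⟨k, hk⟩ := Function.ne_iff.1 hv
  have hpow := congrArg (fun u => u ⨯₃ (D ∘ u)) (smul_eq_smul_of_cross_eq_zero h k)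
  simp only [smul_cross_comp_smul, hN, smul_zero] at hpow
  exact (smul_eq_zero.1 hpow.symm).resolve_left (pow_ne_zero _ hk)

/-- If `v` and its derivative are coplanar with `u` and `u'`, then `v` is also coplanar with `u` and
`u''`, so that it lies on the intersection of two distinct planes through `u`. -/
theorem cross_eq_zero_of_wronskian_ne_zero [IsDomain A] (hW : wronskian D u ≠ 0)
    (hv : v ⬝ᵥ u ⨯₃ (D ∘ u) = 0) (hDv : (D ∘ v) ⬝ᵥ u ⨯₃ (D ∘ u) = 0) : u ⨯₃ v = 0 := by
  have hv' : v ⬝ᵥ u ⨯₃ (D ∘ D ∘ u) = 0 := by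
    simpa [apply_dotProduct, comp_cross, hDv] using congrArg D hv
  have hidentity : wronskian D u • (u ⨯₃ v) =
      (v ⬝ᵥ u ⨯₃ (D ∘ u)) • (u ⨯₃ (D ∘ D ∘ u)) -
        (v ⬝ᵥ u ⨯₃ (D ∘ D ∘ u)) • (u ⨯₃ (D ∘ u)) := by
    ext i
    fin_cases i <;> simp [wronskian, dotProduct, cross_apply, Fin.sum_univ_three] <;> ring
  rw [hv, hv', zero_smul, zero_smul, sub_zero] at hidentity
  exact (smul_eq_zero.1 hidentity).resolve_left hW

theorem cross_eq_smul_of_dotProduct_eq_zero {s : Fin 3} (hs : l s = 1) (hv : v ⬝ᵥ l = 0)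
    (hw : w ⬝ᵥ l = 0) : v ⨯₃ w = (v ⨯₃ w) s • l := by
  have hparallel : l ⨯₃ (v ⨯₃ w) = 0 := by
    rw [cross_cross_eq_smul_sub_smul', hv, dotProduct_comm, hw, zero_smul, zero_smul, sub_zero]
  simpa [hs] using smul_eq_smul_of_cross_eq_zero hparallel s

end Wronskian

section PolynomialWronskian

variable {K : Type*} [Field K]

theorem wronskian_mem_forms {u : Fin 3 → K[X]} {j : ℕ} {e : Fin 3 → Fin 3 → ℕ}
    (h : ∀ k, u k ∈ forms K j (e k)) :
    wronskian (theta K) u ∈ forms K (3 * j + 3) (∑ k, e k) := by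
  have hrow (r k : Fin 3) :
      (![u, theta K ∘ u, theta K ∘ theta K ∘ u] r) k ∈ forms K (j + r) (e k) := by
    fin_cases r
    exacts [h k, theta_mem_forms (h k), theta_mem_forms (theta_mem_forms (h k))]
  have hdet : wronskian (theta K) u = ∑ σ : Equiv.Perm (Fin 3),
      σ.sign • ∏ k, (![u, theta K ∘ u, theta K ∘ theta K ∘ u] (σ k)) k := by
    rw [wronskian, triple_product_eq_det]
    exact Matrix.det_apply _
  rw [hdet]
  refine Submodule.sum_mem _ fun σ _ => ?_
  have hdeg : ∑ k, (j + (σ k : ℕ)) = 3 * j + 3 := by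
    rw [Finset.sum_add_distrib, Equiv.sum_comp σ fun k : Fin 3 => (k : ℕ)]
    simp [Fin.sum_univ_three, mul_comm]
  rw [Units.smul_def, ← hdeg]
  exact zsmul_mem (prod_mem_forms fun k _ => hrow (σ k) k) _

theorem exists_eq_smul_of_mul_theta_eq [CharZero K] {P Q : K[X]} (hQ : Q ≠ 0)
    (h : P * theta K Q = Q * theta K P) : ∃ w : K, P = w • Q := by
  obtain ⟨g, P', Q', hg, hcop, hP', hQ'⟩ :
      ∃ g P' Q' : K[X], g ≠ 0 ∧ IsCoprime P' Q' ∧ P = g * P' ∧ Q = g * Q' := by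
    classical
    let _ : GCDMonoid K[X] := EuclideanDomain.gcdMonoid K[X]
    obtain ⟨P', Q', hP', hQ', hunit⟩ := extract_gcd P Q
    exact ⟨_, P', Q', fun hg => hQ (by rw [hQ', hg, zero_mul]), (gcd_isUnit_iff P' Q').1 hunit,
      hP', hQ'⟩
  have hX : (Polynomial.X * (Polynomial.X + 1) : K[X]) ≠ 0 :=
    mul_ne_zero Polynomial.X_ne_zero (Polynomial.X_add_C_ne_zero 1)
  have hW : Polynomial.wronskian P' Q' = 0 := by
    have hmul : Polynomial.X * (Polynomial.X + 1) * g ^ 2 * Polynomial.wronskian P' Q' = 0 := by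
      rw [← sub_eq_zero, hP', hQ'] at h
      rw [← h]
      simp only [theta_apply, Polynomial.wronskian, Polynomial.derivative_mul]
      ring
    exact (mul_eq_zero.1 hmul).resolve_left (mul_ne_zero hX (pow_ne_zero _ hg))
  obtain ⟨hdP, hdQ⟩ := hcop.wronskian_eq_zero_iff.1 hW
  obtain ⟨p, rfl⟩ : ∃ p, P' = Polynomial.C p := ⟨_, Polynomial.eq_C_of_derivative_eq_zero hdP⟩
  obtain ⟨q, rfl⟩ : ∃ q, Q' = Polynomial.C q := ⟨_, Polynomial.eq_C_of_derivative_eq_zero hdQ⟩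
  have hq : q ≠ 0 := by
    rintro rfl
    exact hQ (by rw [hQ', map_zero, mul_zero])
  refine ⟨p / q, ?_⟩
  rw [hP', hQ', ← mul_smul_comm, Polynomial.smul_C, smul_eq_mul, div_mul_cancel₀ _ hq]

theorem exists_dotProduct_eq_zero_of_wronskian_eq_zero [CharZero K] {u : Fin 3 → K[X]}
    (h : wronskian (theta K) u = 0) :
    ∃ (l : Fin 3 → K) (s : Fin 3), l s = 1 ∧ u ⬝ᵥ (Polynomial.C ∘ l) = 0 := by
  rcases eq_or_ne (u 0) 0 with h0 | h0
  · exact ⟨![1, 0, 0], 0, rfl, by simp [Matrix.vec3_dotProduct, h0]⟩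
  set p := u 0 * theta K (u 1) - u 1 * theta K (u 0) with hp
  set q := u 0 * theta K (u 2) - u 2 * theta K (u 0) with hq
  have hpq : q * theta K p = p * theta K q := by
    rw [eq_comm, ← sub_eq_zero, ← mul_zero (u 0), ← h, hp, hq]
    simp only [wronskian, dotProduct, cross_apply, Fin.sum_univ_three, Function.comp_apply,
      map_sub, Derivation.leibniz, smul_eq_mul, Matrix.cons_val]
    ring
  rcases eq_or_ne p 0 with hp0 | hp0
  · obtain ⟨w, hw⟩ := exists_eq_smul_of_mul_theta_eq (P := u 1) h0 (by linear_combination hp - hp0)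
    refine ⟨![-w, 1, 0], 1, rfl, ?_⟩
    simp [Matrix.vec3_dotProduct, hw, Polynomial.smul_eq_C_mul, mul_comm]
  · obtain ⟨w, hw⟩ := exists_eq_smul_of_mul_theta_eq hp0 hpq
    obtain ⟨w', hw'⟩ := exists_eq_smul_of_mul_theta_eq (P := u 2 - w • u 1) h0 (by
      rw [map_sub, Derivation.map_smul, Polynomial.smul_eq_C_mul, Polynomial.smul_eq_C_mul]
      rw [Polynomial.smul_eq_C_mul] at hw
      linear_combination hq - hw - Polynomial.C w * hp)
    refine ⟨![-w', -w, 1], 2, rfl, ?_⟩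
    rw [Polynomial.smul_eq_C_mul, Polynomial.smul_eq_C_mul] at hw'
    simp only [Matrix.vec3_dotProduct, Function.comp_apply, Matrix.cons_val, map_neg, map_one]
    linear_combination hw'

theorem theta_comp_dotProduct_eq_zero {l : Fin 3 → K} {p : Fin 3 → K[X]}
    (hp : p ⬝ᵥ (Polynomial.C ∘ l) = 0) : (theta K ∘ p) ⬝ᵥ (Polynomial.C ∘ l) = 0 := by
  have hl : theta K ∘ Polynomial.C ∘ l = 0 := by
    ext k : 1
    simp
  simpa [apply_dotProduct, hl] using congrArg (theta K) hp

end PolynomialWronskian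

section Syzygies

variable {K : Type*} [Field K] {ι : Type*} [Fintype ι] {g : ι → Fin 3 → ℕ} {i j m n : ℕ}

/-- Summation of a family of forms of degree `j`, the `i`-th of which is a multiple of the
monomial with exponent `g i`. -/
noncomputable def sumForms (K : Type*) [Field K] (g : ι → Fin 3 → ℕ) (j : ℕ) :
    (∀ i, forms K j (g i)) →ₗ[K] K[X] :=
  ∑ i, (forms K j (g i)).subtype ∘ₗ LinearMap.proj i

/-- The degree `j` part of the ideal generated by the restrictions to the line `z = x + y` of the
monomials with exponents `g i`. -/
noncomputable def idealForms (K : Type*) [Field K] (g : ι → Fin 3 → ℕ) (j : ℕ) :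
    Submodule K K[X] :=
  LinearMap.range (sumForms K g j)

/-- The syzygies of degree `j` of the restrictions to the line `z = x + y` of the monomials with
exponents `g i`. Each coefficient is recorded after multiplication by its monomial, so that a syzygy
is a family of forms of degree `j` with sum zero. -/
noncomputable def syzygies (K : Type*) [Field K] (g : ι → Fin 3 → ℕ) (j : ℕ) :
    Submodule K (ι → K[X]) :=
  (LinearMap.ker (sumForms K g j)).map (LinearMap.pi fun i =>
    (forms K j (g i)).subtype ∘ₗ LinearMap.proj i)

theorem sumForms_apply (v : ∀ i, forms K j (g i)) : sumForms K g j v = ∑ i, (v i : K[X]) := by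
  simp [sumForms]

theorem mem_idealForms {P : K[X]} :
    P ∈ idealForms K g j ↔ ∃ v : ι → K[X], (∀ i, v i ∈ forms K j (g i)) ∧ ∑ i, v i = P := by
  constructor
  · rintro ⟨v, rfl⟩
    exact ⟨fun i => v i, fun i => (v i).2, (sumForms_apply v).symm⟩
  · rintro ⟨v, hv, rfl⟩
    exact ⟨fun i => ⟨v i, hv i⟩, sumForms_apply _⟩

theorem mem_syzygies {v : ι → K[X]} :
    v ∈ syzygies K g j ↔ (∀ i, v i ∈ forms K j (g i)) ∧ ∑ i, v i = 0 := by
  constructor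
  · rintro ⟨v, hv, rfl⟩
    exact ⟨fun i => (v i).2, (sumForms_apply v).symm.trans hv⟩
  · rintro ⟨hv, hsum⟩
    exact ⟨fun i => ⟨v i, hv i⟩, (sumForms_apply _).trans hsum, rfl⟩

theorem idealForms_le : idealForms K g j ≤ forms K j 0 := by
  intro P hP
  obtain ⟨v, hv, rfl⟩ := mem_idealForms.1 hP
  exact Submodule.sum_mem _ fun i _ => forms_anti (Pi.le_def.2 fun _ => Nat.zero_le _) (hv i)

instance : FiniteDimensional K (syzygies K g j) := by
  unfold syzygies
  infer_instance

theorem finrank_idealForms_add_finrank_syzygies :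
    Module.finrank K (idealForms K g j) + Module.finrank K (syzygies K g j) =
      ∑ i, (j + 1 - ∑ k, g i k) := by
  have hinj : Function.Injective (LinearMap.pi fun i =>
      (forms K j (g i)).subtype ∘ₗ LinearMap.proj i) := fun v w hvw =>
    funext fun i => Subtype.ext (congrFun hvw i)
  rw [idealForms, syzygies, ← (Submodule.equivMapOfInjective _ hinj _).finrank_eq,
    LinearMap.finrank_range_add_finrank_ker, Module.finrank_pi_fintype]
  simp only [finrank_forms]

theorem sum_le_finrank_syzygies_add (hj : ¬ forms K j 0 ≤ idealForms K g j) :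
    ∑ i, (j + 1 - ∑ k, g i k) ≤ Module.finrank K (syzygies K g j) + j := by
  have hlt := Submodule.finrank_lt_finrank_of_lt (lt_of_le_not_ge idealForms_le hj)
  rw [finrank_forms] at hlt
  simp only [Pi.zero_apply, Finset.sum_const_zero] at hlt
  rw [← finrank_idealForms_add_finrank_syzygies (K := K)]
  omega

theorem syzygies_mono (hij : i ≤ j) : syzygies K g i ≤ syzygies K g j := by
  intro v hv
  rw [mem_syzygies] at hv ⊢
  exact ⟨fun i => forms_mono hij (hv.1 i), hv.2⟩

theorem theta_comp_mem_syzygies {v : ι → K[X]} (hv : v ∈ syzygies K g j) :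
    theta K ∘ v ∈ syzygies K g (j + 1) := by
  rw [mem_syzygies] at hv ⊢
  exact ⟨fun i => theta_mem_forms (hv.1 i), by simp [← map_sum, hv.2]⟩

theorem theta_comp_eq_zero_of_mem_syzygies_zero {v : ι → K[X]} (hv : v ∈ syzygies K g 0) :
    theta K ∘ v = 0 :=
  funext fun i => theta_eq_zero_of_mem_forms_zero ((mem_syzygies.1 hv).1 i)

theorem mem_syzygies_of_X_sub_C_pow_smul_mem {v : ι → K[X]} {τ : K} (h0 : τ ≠ 0) (h1 : τ + 1 ≠ 0)
    (hv : (Polynomial.X - Polynomial.C τ) ^ n • v ∈ syzygies K g (j + n)) :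
    v ∈ syzygies K g j := by
  rw [mem_syzygies] at hv ⊢
  refine ⟨fun i => mem_forms_of_X_sub_C_pow_mul_mem h0 h1 (hv.1 i), ?_⟩
  have hsum := hv.2
  simp only [Pi.smul_apply, ← Finset.smul_sum] at hsum
  exact (smul_eq_zero.1 hsum).resolve_left (pow_ne_zero _ (Polynomial.X_sub_C_ne_zero τ))

/-- If a form `P` satisfies `(t - τ) * P ∈ idealForms K g (j + 1)`, correct the coefficients by a
syzygy so that each of them vanishes at `τ`, and divide by `t - τ`. -/
theorem forms_le_idealForms_of_succ {τ : K} (h0 : τ ≠ 0) (h1 : τ + 1 ≠ 0)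
    (heval : ∀ c : ι → K, ∑ i, c i = 0 → ∃ v ∈ syzygies K g (j + 1), ∀ i, (v i).eval τ = c i)
    (hj : forms K (j + 1) 0 ≤ idealForms K g (j + 1)) : forms K j 0 ≤ idealForms K g j := by
  intro P hP
  have hX : Polynomial.X - Polynomial.C τ ∈ forms K 1 0 := by
    rw [mem_forms_iff_dvd, mem_degreeLT_iff_natDegree_lt (Polynomial.X_sub_C_ne_zero τ)]
    simp
  obtain ⟨v, hv, hsum⟩ := mem_idealForms.1 (hj (add_zero (0 : Fin 3 → ℕ) ▸ mul_mem_forms hP hX))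
  obtain ⟨s, hs, hsv⟩ := heval (fun i => (v i).eval τ) <| by
    simpa [Polynomial.eval_finsetSum] using congrArg (Polynomial.eval τ) hsum
  rw [mem_syzygies] at hs
  have hdvd (i : ι) : Polynomial.X - Polynomial.C τ ∣ v i - s i :=
    Polynomial.dvd_iff_isRoot.2 (by rw [Polynomial.IsRoot, Polynomial.eval_sub, hsv, sub_self])
  choose w hw using hdvd
  refine mem_idealForms.2 ⟨w, fun i => mem_forms_of_X_sub_C_pow_mul_mem (n := 1) h0 h1 ?_, ?_⟩
  · rw [pow_one, ← hw]
    exact Submodule.sub_mem _ (hv i) (hs.1 i)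
  · apply mul_left_cancel₀ (Polynomial.X_sub_C_ne_zero τ)
    rw [Finset.mul_sum, ← Finset.sum_congr rfl fun i _ => hw i, Finset.sum_sub_distrib, hsum, hs.2,
      sub_zero, mul_comm]

theorem forms_le_idealForms_of_le {τ : K} (h0 : τ ≠ 0) (h1 : τ + 1 ≠ 0)
    (heval : ∀ c : ι → K, ∑ i, c i = 0 → ∃ v ∈ syzygies K g (j + 1), ∀ i, (v i).eval τ = c i)
    (hjm : j ≤ m) (hm : forms K m 0 ≤ idealForms K g m) : forms K j 0 ≤ idealForms K g j := by
  refine Nat.decreasingInduction' (P := fun k => forms K k 0 ≤ idealForms K g k) ?_ hjm hm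
  intro k _ hjk hk
  refine forms_le_idealForms_of_succ h0 h1 (fun c hc => ?_) hk
  obtain ⟨v, hv, hvc⟩ := heval c hc
  exact ⟨v, syzygies_mono (Nat.succ_le_succ hjk) hv, hvc⟩

theorem forms_le_idealForms_of_det_ne_zero [CharZero K] [DecidableEq ι]
    {g : Option ι → Fin 3 → ℕ} {p : ι → Option ι → K[X]} (hp : ∀ i, p i ∈ syzygies K g (j + 1))
    (hdet : (Matrix.of fun i k => p i (some k)).det ≠ 0)
    (hjm : j ≤ m) (hm : forms K m 0 ≤ idealForms K g m) : forms K j 0 ≤ idealForms K g j := by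
  obtain ⟨τ, h0, h1, hτ⟩ := exists_eval_ne_zero hdet
  refine forms_le_idealForms_of_le h0 h1 (fun c hc => ?_) hjm hm
  have hunit : IsUnit (Matrix.of fun i k => (p i (some k)).eval τ) := by
    rw [Matrix.isUnit_iff_isUnit_det, isUnit_iff_ne_zero]
    convert hτ using 1
    exact (RingHom.map_det (Polynomial.evalRingHom τ) _).symm
  obtain ⟨x, hx⟩ := Matrix.vecMul_surjective_iff_isUnit.2 hunit (c ∘ some)
  have hv := Submodule.sum_mem _ fun i (_ : i ∈ Finset.univ) => Submodule.smul_mem _ (x i) (hp i)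
  have hsome (k : ι) : ((∑ i, x i • p i) (some k)).eval τ = c (some k) := by
    rw [← Function.comp_apply (f := c), ← hx]
    simp [Matrix.vecMul, dotProduct, Polynomial.eval_finsetSum]
  refine ⟨_, hv, fun o => ?_⟩
  rcases o with _ | k
  · have hsum := congrArg (Polynomial.eval τ) (mem_syzygies.1 hv).2
    rw [Fintype.sum_option, Polynomial.eval_add, Polynomial.eval_finsetSum, Polynomial.eval_zero,
      Finset.sum_congr rfl fun k _ => hsome k] at hsum
    rw [Fintype.sum_option] at hc
    exact add_right_cancel (hsum.trans hc.symm)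
  · exact hsome k

end Syzygies

section Restriction

variable {K : Type*} [Field K] {j : ℕ} {e : Fin 3 → ℕ} {P : K[X]} {F : MvPolynomial (Fin 3) K}

/-- The monomial `x ^ e 0 * y ^ e 1 * z ^ e 2`. -/
noncomputable def coordMonomial (K : Type*) [Field K] (e : Fin 3 → ℕ) : MvPolynomial (Fin 3) K :=
  ∏ k, X k ^ e k

/-- The linear form `x + y - z`. -/
noncomputable def lineForm (K : Type*) [Field K] : MvPolynomial (Fin 3) K :=
  X 0 + X 1 - X 2

/-- Restriction to the line `z = x + y`, followed by dehomogenisation at `y = 1`. -/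
noncomputable def restrict (K : Type*) [Field K] : MvPolynomial (Fin 3) K →ₐ[K] K[X] :=
  aeval (lineCoord K)

theorem homogeneousComponent_mul_of_isHomogeneous {σ R : Type*} [CommSemiring R]
    (a : MvPolynomial σ R) {f : MvPolynomial σ R} {m : ℕ} (hf : f.IsHomogeneous m) (n : ℕ) :
    homogeneousComponent n (a * f) = if m ≤ n then homogeneousComponent (n - m) a * f else 0 := by
  classical
  let _ := gradedAlgebra (σ := σ) (R := R)
  have h := DirectSum.coe_decompose_mul_of_right_mem (homogeneousSubmodule σ R) n (a := a)
    ((mem_homogeneousSubmodule m f).2 hf)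
  have decompose_eq (p : MvPolynomial σ R) (i : ℕ) :
      (DirectSum.decompose (homogeneousSubmodule σ R) p i : MvPolynomial σ R) =
        homogeneousComponent i p := decomposition.decompose'_apply p i
  simpa only [decompose_eq] using h

theorem isHomogeneous_coordMonomial (e : Fin 3 → ℕ) :
    (coordMonomial K e).IsHomogeneous (∑ k, e k) :=
  IsHomogeneous.prod _ _ _ fun k _ => isHomogeneous_X_pow k (e k)

theorem isHomogeneous_lineForm : (lineForm K).IsHomogeneous 1 :=
  ((isHomogeneous_X K 0).add (isHomogeneous_X K 1)).sub (isHomogeneous_X K 2)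

theorem lineForm_ne_zero : lineForm K ≠ 0 := fun h => by
  simpa [lineForm] using congrArg (eval ![1, 0, 0]) h

theorem coordMonomial_dvd_coordMonomial {e' : Fin 3 → ℕ} (h : e ≤ e') :
    coordMonomial K e ∣ coordMonomial K e' :=
  Finset.prod_dvd_prod_of_dvd _ _ fun k _ => pow_dvd_pow _ (h k)

theorem restrict_coordMonomial (e : Fin 3 → ℕ) :
    restrict K (coordMonomial K e) = lineMonomial K e := by
  simp [restrict, coordMonomial, lineMonomial]

theorem restrict_lineForm : restrict K (lineForm K) = 0 := by
  simp [restrict, lineForm, lineCoord]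

theorem natDegree_restrict_le (hF : F.IsHomogeneous j) : (restrict K F).natDegree ≤ j := by
  rw [← mul_one j]
  refine aeval_natDegree_le F hF.totalDegree_le _ fun k => ?_
  fin_cases k
  · exact Polynomial.natDegree_X_le
  · exact Polynomial.natDegree_one.trans_le zero_le_one
  · exact (Polynomial.natDegree_X_add_C (1 : K)).le

theorem eq_mul_coordMonomial_of_dvd (hF : F.IsHomogeneous j) (hF0 : F ≠ 0)
    (hdvd : coordMonomial K e ∣ F) :
    ∑ k, e k ≤ j ∧ ∃ G : MvPolynomial (Fin 3) K,
      G.IsHomogeneous (j - ∑ k, e k) ∧ F = G * coordMonomial K e := by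
  obtain ⟨G, hG⟩ := dvd_def.1 hdvd
  rw [mul_comm] at hG
  have hcomp := homogeneousComponent_mul_of_isHomogeneous G
    (isHomogeneous_coordMonomial (K := K) e) j
  rw [← hG, homogeneousComponent_eq_self hF] at hcomp
  split_ifs at hcomp with hle
  · exact ⟨hle, _, homogeneousComponent_isHomogeneous _ _, hcomp⟩
  · exact absurd hcomp hF0

theorem restrict_mem_forms (hF : F.IsHomogeneous j) (hdvd : coordMonomial K e ∣ F) :
    restrict K F ∈ forms K j e := by
  rcases eq_or_ne F 0 with rfl | hF0
  · rw [map_zero]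
    exact Submodule.zero_mem _
  obtain ⟨hle, G, hG, rfl⟩ := eq_mul_coordMonomial_of_dvd hF hF0 hdvd
  rw [mul_comm, map_mul, restrict_coordMonomial]
  refine mem_forms_iff_exists.2 ⟨_, ?_, rfl⟩
  rcases eq_or_ne (restrict K G) 0 with hG0 | hG0
  · rw [hG0]
    exact Submodule.zero_mem _
  rw [mem_degreeLT_iff_natDegree_lt hG0]
  have := natDegree_restrict_le hG
  omega

theorem exists_isHomogeneous_restrict_eq (hP : P ∈ forms K j e) :
    ∃ F : MvPolynomial (Fin 3) K, F.IsHomogeneous j ∧ coordMonomial K e ∣ F ∧ restrict K F = P := by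
  rcases eq_or_ne P 0 with rfl | hP0
  · exact ⟨0, isHomogeneous_zero _ _ _, dvd_zero _, map_zero _⟩
  have hle := sum_le_of_mem_forms hP hP0
  obtain ⟨Q, hQ, rfl⟩ := mem_forms_iff_exists.1 hP
  rw [mem_degreeLT_iff_natDegree_lt (right_ne_zero_of_mul hP0)] at hQ
  set n := j - ∑ k, e k
  set G : MvPolynomial (Fin 3) K := rename ![0, 1] (Q.homogenize n)
  refine ⟨coordMonomial K e * G, ?_, dvd_mul_right _ _, ?_⟩
  · rw [← Nat.add_sub_cancel' hle]
    exact (isHomogeneous_coordMonomial e).mul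
      (Polynomial.isHomogeneous_homogenize Q).rename_isHomogeneous
  · have hG : restrict K G = Q := by
      have hcomp : lineCoord K ∘ ![0, 1] = ![Polynomial.X, 1] := by
        ext k
        fin_cases k <;> rfl
      rw [restrict, aeval_rename, hcomp]
      exact Polynomial.aeval_homogenize_X_one Q (by omega)
    rw [map_mul, restrict_coordMonomial, hG]

theorem lineForm_dvd_of_aeval_eq_zero
    (hF : aeval ![X 0, X 1, X 0 + X 1] F = (0 : MvPolynomial (Fin 2) K)) : lineForm K ∣ F := by
  let quot := Ideal.Quotient.mkₐ K (Ideal.span {lineForm K})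
  have hX2 : quot (X 2) = quot (X 0) + quot (X 1) := by
    rw [← map_add, eq_comm, ← sub_eq_zero, ← map_sub]
    exact Ideal.Quotient.eq_zero_iff_mem.2 (Ideal.mem_span_singleton_self _)
  have hquot : quot = (quot.comp (rename ![0, 1])).comp
      (aeval ![X 0, X 1, X 0 + X 1] : MvPolynomial (Fin 3) K →ₐ[K] MvPolynomial (Fin 2) K) := by
    ext k
    fin_cases k
    · simp
    · simp
    · simpa using hX2
  rw [← Ideal.mem_span_singleton, ← Ideal.Quotient.eq_zero_iff_mem]
  change quot F = 0
  rw [hquot, AlgHom.comp_apply, hF, map_zero]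

theorem lineForm_dvd_of_restrict_eq_zero (hF : F.IsHomogeneous j) (h : restrict K F = 0) :
    lineForm K ∣ F := by
  apply lineForm_dvd_of_aeval_eq_zero
  have hhom : (aeval ![X 0, X 1, X 0 + X 1] F : MvPolynomial (Fin 2) K).IsHomogeneous j := by
    rw [← one_mul j]
    refine hF.aeval _ fun k => ?_
    fin_cases k
    · exact isHomogeneous_X K 0
    · exact isHomogeneous_X K 1
    · exact (isHomogeneous_X K 0).add (isHomogeneous_X K 1)
  rw [← Polynomial.homogenize_eq_of_isHomogeneous (p := 0) hhom, Polynomial.homogenize_zero]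
  rw [← h, restrict, ← AlgHom.comp_apply]
  congr 1
  ext k
  fin_cases k <;> simp [lineCoord]

theorem lineForm_mul_coordMonomial_dvd (hF : F.IsHomogeneous j) (hdvd : coordMonomial K e ∣ F)
    (h : restrict K F = 0) : lineForm K * coordMonomial K e ∣ F := by
  rcases eq_or_ne F 0 with rfl | hF0
  · exact dvd_zero _
  obtain ⟨-, G, hG, rfl⟩ := eq_mul_coordMonomial_of_dvd hF hF0 hdvd
  rw [map_mul, restrict_coordMonomial] at h
  exact mul_dvd_mul_right (lineForm_dvd_of_restrict_eq_zero hG <|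
    (mul_eq_zero.1 h).resolve_right (lineMonomial_monic e).ne_zero) _

end Restriction

section Lefschetz

variable {K : Type*} [Field K] {ι : Type*} [Fintype ι] {g : ι → Fin 3 → ℕ} {d j : ℕ}

/-- The ideal of `K[x, y, z]` generated by the monomials with exponents `g i`. -/
noncomputable def monomialIdeal (K : Type*) [Field K] (g : ι → Fin 3 → ℕ) :
    Ideal (MvPolynomial (Fin 3) K) :=
  Ideal.span (Set.range fun i => coordMonomial K (g i))

/-- A family of polynomials spanning at most a line of constants over the fraction field, that is,
whose entries are scalar multiples of one polynomial. -/
def HasConstantDirection (u : ι → K[X]) : Prop :=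
  ∃ (w : ι → K) (P : K[X]), ∀ i, u i = w i • P

theorem exists_sum_eq_of_mem_monomialIdeal {F : MvPolynomial (Fin 3) K} (hF : F.IsHomogeneous j)
    (hmem : F ∈ monomialIdeal K g) :
    ∃ f : ι → MvPolynomial (Fin 3) K,
      (∀ i, (f i).IsHomogeneous j ∧ coordMonomial K (g i) ∣ f i) ∧ ∑ i, f i = F := by
  obtain ⟨a, ha⟩ := Ideal.mem_span_range_iff_exists_fun.1 hmem
  refine ⟨fun i => homogeneousComponent j (a i * coordMonomial K (g i)), fun i =>
    ⟨homogeneousComponent_isHomogeneous _ _, ?_⟩, ?_⟩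
  · beta_reduce
    rw [homogeneousComponent_mul_of_isHomogeneous _ (isHomogeneous_coordMonomial _)]
    split_ifs
    · exact dvd_mul_left _ _
    · exact dvd_zero _
  · rw [← map_sum, ha, homogeneousComponent_eq_self hF]

theorem exists_lift_of_hasConstantDirection {u : ι → K[X]} (hu : u ∈ syzygies K g j)
    (hdir : HasConstantDirection u) :
    ∃ U : ι → MvPolynomial (Fin 3) K,
      (∀ i, (U i).IsHomogeneous j ∧ coordMonomial K (g i) ∣ U i ∧ restrict K (U i) = u i) ∧
        ∑ i, U i = 0 := by
  classical
  rw [mem_syzygies] at hu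
  rcases eq_or_ne u 0 with rfl | hu0
  · exact ⟨0, fun i => ⟨isHomogeneous_zero _ _ _, dvd_zero _, map_zero _⟩, by simp⟩
  obtain ⟨w, P, hwP⟩ := hdir
  obtain ⟨i₀, hi₀⟩ := Function.ne_iff.1 hu0
  rw [hwP, Pi.zero_apply, smul_ne_zero_iff] at hi₀
  have hw : ∑ i, w i = 0 := by
    have hsum := hu.2
    simp only [hwP, ← Finset.sum_smul] at hsum
    exact (smul_eq_zero.1 hsum).resolve_right hi₀.2
  set s : Finset ι := {i | w i ≠ 0}
  have hP : P ∈ forms K j (s.sup g) := by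
    refine mem_forms_sup ⟨i₀, by simpa [s] using hi₀.1⟩ fun i hi => ?_
    rw [← Submodule.smul_mem_iff _ (Finset.mem_filter.1 hi).2, ← hwP]
    exact hu.1 i
  obtain ⟨F, hF, hdvd, rfl⟩ := exists_isHomogeneous_restrict_eq hP
  refine ⟨fun i => w i • F, fun i => ⟨(homogeneousSubmodule _ K j).smul_mem _ hF, ?_, ?_⟩, ?_⟩
  · rcases eq_or_ne (w i) 0 with hi | hi
    · beta_reduce
      rw [hi, zero_smul]
      exact dvd_zero _
    · have hle : g i ≤ s.sup g := Finset.le_sup (by simpa [s] using hi)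
      exact ((coordMonomial_dvd_coordMonomial hle).trans hdvd).trans
        ⟨C (w i), (smul_eq_C_mul _ _).trans (mul_comm _ _)⟩
  · rw [map_smul, hwP]
  · rw [← Finset.sum_smul, hw, zero_smul]

theorem exists_sum_eq_lineForm_mul {f : ι → MvPolynomial (Fin 3) K}
    (hf : ∀ i, lineForm K * coordMonomial K (g i) ∣ f i) :
    ∃ T ∈ monomialIdeal K g, ∑ i, f i = lineForm K * T := by
  choose T hT using hf
  refine ⟨∑ i, coordMonomial K (g i) * T i, Submodule.sum_mem _ fun i _ => ?_, ?_⟩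
  · exact Ideal.mul_mem_right _ _ (Ideal.subset_span ⟨i, rfl⟩)
  · rw [Finset.mul_sum]
    exact Finset.sum_congr rfl fun i _ => by rw [hT, mul_assoc]

theorem mem_monomialIdeal_of_lineForm_mul_mem {F : MvPolynomial (Fin 3) K} (hF : F.IsHomogeneous d)
    (hdir : ∀ u ∈ syzygies K g (d + 1), HasConstantDirection u)
    (hmem : lineForm K * F ∈ monomialIdeal K g) : F ∈ monomialIdeal K g := by
  obtain ⟨f, hf, hsum⟩ :=
    exists_sum_eq_of_mem_monomialIdeal (add_comm 1 d ▸ isHomogeneous_lineForm.mul hF) hmem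
  have hsyz : (fun i => restrict K (f i)) ∈ syzygies K g (d + 1) := by
    refine mem_syzygies.2 ⟨fun i => restrict_mem_forms (hf i).1 (hf i).2, ?_⟩
    rw [← map_sum, hsum, map_mul, restrict_lineForm, zero_mul]
  obtain ⟨U, hU, hU0⟩ := exists_lift_of_hasConstantDirection hsyz (hdir _ hsyz)
  obtain ⟨T, hT, hsumT⟩ := exists_sum_eq_lineForm_mul fun i =>
    lineForm_mul_coordMonomial_dvd ((hf i).1.sub (hU i).1) (dvd_sub (hf i).2 (hU i).2.1)
      (by rw [map_sub, (hU i).2.2, sub_self])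
  rw [Finset.sum_sub_distrib, hsum, hU0, sub_zero] at hsumT
  rwa [mul_left_cancel₀ lineForm_ne_zero hsumT]

theorem exists_sub_lineForm_mul_mem {F : MvPolynomial (Fin 3) K} (hF : F.IsHomogeneous (d + 1))
    (hfull : forms K (d + 1) 0 ≤ idealForms K g (d + 1)) :
    ∃ T : MvPolynomial (Fin 3) K, T.IsHomogeneous d ∧ F - lineForm K * T ∈ monomialIdeal K g := by
  have hF0 : coordMonomial K 0 ∣ F := by simp [coordMonomial]
  obtain ⟨v, hv, hsum⟩ := mem_idealForms.1 (hfull (restrict_mem_forms hF hF0))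
  choose f hf hfdvd hfv using fun i => exists_isHomogeneous_restrict_eq (hv i)
  have hhom : (F - ∑ i, f i).IsHomogeneous (d + 1) :=
    hF.sub (IsHomogeneous.sum _ _ _ fun i _ => hf i)
  obtain ⟨T, hT⟩ := lineForm_dvd_of_restrict_eq_zero hhom (by simp [hfv, hsum])
  refine ⟨homogeneousComponent d T, homogeneousComponent_isHomogeneous _ _, ?_⟩
  have hcomp :=
    homogeneousComponent_mul_of_isHomogeneous T (isHomogeneous_lineForm (K := K)) (d + 1)
  rw [mul_comm, ← hT, homogeneousComponent_eq_self hhom, if_pos (by omega),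
    Nat.add_sub_cancel] at hcomp
  rw [mul_comm, ← hcomp, sub_sub_cancel]
  refine Submodule.sum_mem _ fun i _ => ?_
  exact Ideal.mem_of_dvd _ (hfdvd i) (Ideal.subset_span ⟨i, rfl⟩)

theorem isLefschetzElem_lineForm
    (h : ∀ j, forms K j 0 ≤ idealForms K g j ∨ ∀ u ∈ syzygies K g j, HasConstantDirection u) :
    isLefschetzElem 3 K (monomialIdeal K g) (lineForm K) := by
  refine ⟨isHomogeneous_lineForm, fun d => ?_⟩
  rcases h (d + 1) with hfull | hdir
  · right
    rintro _ ⟨F, hF, rfl⟩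
    obtain ⟨T, hT, hmem⟩ := exists_sub_lineForm_mul_mem hF hfull
    refine ⟨_, ⟨T, hT, rfl⟩, ?_⟩
    exact ((Ideal.Quotient.mk_eq_mk_iff_sub_mem _ _).2 hmem).symm
  · left
    rintro _ ⟨F, hF, rfl⟩ hzero
    exact Ideal.Quotient.eq_zero_iff_mem.2 <| mem_monomialIdeal_of_lineForm_mul_mem hF hdir <|
      Ideal.Quotient.eq_zero_iff_mem.1 hzero

end Lefschetz

section CoplanarSyzygies

variable {K : Type*} [Field K] {g : Option (Fin 3) → Fin 3 → ℕ} {i j m n : ℕ}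
  {u v : Option (Fin 3) → K[X]}

/-- The syzygies of degree `j` span a vector space of dimension at most two over the field of
fractions. The entry at `none` is left out, being determined by the other three. -/
def CoplanarSyzygies (K : Type*) [Field K] (g : Option (Fin 3) → Fin 3 → ℕ) (j : ℕ) : Prop :=
  ∀ p ∈ syzygies K g j, ∀ q ∈ syzygies K g j, ∀ r ∈ syzygies K g j,
    (p ∘ some) ⬝ᵥ (q ∘ some) ⨯₃ (r ∘ some) = 0

theorem coplanarSyzygies_of_not_forms_le [CharZero K] (hj : ¬ forms K j 0 ≤ idealForms K g j)
    (hjm : j ≤ m) (hm : forms K m 0 ≤ idealForms K g m) : CoplanarSyzygies K g (j + 1) := by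
  intro p hp q hq r hr
  by_contra hne
  refine hj (forms_le_idealForms_of_det_ne_zero (p := ![p, q, r]) (fun i => ?_) ?_ hjm hm)
  · fin_cases i
    exacts [hp, hq, hr]
  · have hrows : (Matrix.of fun i k => ![p, q, r] i (some k)) =
        ![p ∘ some, q ∘ some, r ∘ some] := by
      ext i : 1
      fin_cases i <;> rfl
    rwa [hrows, ← triple_product_eq_det]

theorem apply_none_eq_neg_sum (hv : v ∈ syzygies K g j) : v none = -∑ k, (v ∘ some) k := by
  have hsum := (mem_syzygies.1 hv).2
  rw [Fintype.sum_option] at hsum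
  exact eq_neg_of_add_eq_zero_left hsum

theorem eq_zero_of_comp_some_eq_zero (hv : v ∈ syzygies K g j) (h : v ∘ some = 0) : v = 0 := by
  funext o
  rcases o with _ | k
  · rw [apply_none_eq_neg_sum hv, h]
    simp
  · exact congrFun h k

theorem exists_eq_X_sub_C_pow_smul {k : Fin 3} {τ : K} (h0 : τ ≠ 0) (h1 : τ + 1 ≠ 0)
    (hv : v ∈ syzygies K g j) (hτ : (u (some k)).eval τ ≠ 0)
    (huv : (u ∘ some) ⨯₃ (v ∘ some) = 0)
    (hdvd : (Polynomial.X - Polynomial.C τ) ^ n ∣ v (some k)) :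
    ∃ w ∈ syzygies K g (j - n), v = (Polynomial.X - Polynomial.C τ) ^ n • w := by
  have hsome (q : Fin 3) : (Polynomial.X - Polynomial.C τ) ^ n ∣ v (some q) := by
    have hq : u (some k) * v (some q) = v (some k) * u (some q) :=
      congrFun (smul_eq_smul_of_cross_eq_zero huv k) q
    refine (Polynomial.prime_X_sub_C τ).pow_dvd_of_dvd_mul_left n ?_ (hq ▸ hdvd.mul_right _)
    rwa [Polynomial.dvd_iff_isRoot]
  have hall (o : Option (Fin 3)) : (Polynomial.X - Polynomial.C τ) ^ n ∣ v o := by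
    rcases o with _ | q
    · rw [apply_none_eq_neg_sum hv, dvd_neg]
      exact Finset.dvd_sum fun q _ => hsome q
    · exact hsome q
  choose w hw using hall
  have hvw : v = (Polynomial.X - Polynomial.C τ) ^ n • w := funext hw
  exact ⟨w, mem_syzygies_of_X_sub_C_pow_smul_mem h0 h1
    (hvw ▸ syzygies_mono le_tsub_add hv), hvw⟩

theorem cross_eq_zero_of_coplanarSyzygies (hcop : CoplanarSyzygies K g (j + 1))
    (hu : u ∈ syzygies K g j) (hv : v ∈ syzygies K g j)
    (hW : wronskian (theta K) (u ∘ some) ≠ 0) : (u ∘ some) ⨯₃ (v ∘ some) = 0 := by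
  have perp (p) (hp : p ∈ syzygies K g (j + 1)) :
      (p ∘ some) ⬝ᵥ (u ∘ some) ⨯₃ (theta K ∘ u ∘ some) = 0 := by
    simpa only [Function.comp_assoc] using
      hcop p hp u (syzygies_mono j.le_succ hu) _ (theta_comp_mem_syzygies hu)
  refine cross_eq_zero_of_wronskian_ne_zero (theta K) hW
    (perp v (syzygies_mono j.le_succ hv)) ?_
  simpa only [Function.comp_assoc] using perp _ (theta_comp_mem_syzygies hv)

/-- A syzygy not proportional to `u` could be modified by a multiple of `u` and divided by some
`t - τ`; the quotient would be parallel to `u`, but its Wronskian vanishes for degree reasons. -/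
theorem finrank_syzygies_le_one_of_wronskian_ne_zero [CharZero K]
    (hcop : CoplanarSyzygies K g (j + 1)) (hu : u ∈ syzygies K g j)
    (hW : wronskian (theta K) (u ∘ some) ≠ 0) : Module.finrank K (syzygies K g j) ≤ 1 := by
  have hj : j ≠ 0 := by
    rintro rfl
    have hD : theta K ∘ u ∘ some = 0 :=
      congrArg (· ∘ some) (theta_comp_eq_zero_of_mem_syzygies_zero hu)
    exact hW (by rw [wronskian, hD, map_zero, LinearMap.zero_apply, dotProduct_zero])
  have hu0 : u ∘ some ≠ 0 := by
    intro h
    exact hW (by rw [wronskian, h, zero_dotProduct])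
  obtain ⟨k, hk⟩ := Function.ne_iff.1 hu0
  obtain ⟨τ, h0, h1, hτ⟩ := exists_eval_ne_zero hk
  refine finrank_le_one ⟨u, hu⟩ fun ⟨v, hv⟩ => ?_
  set c := (v (some k)).eval τ / (u (some k)).eval τ with hc
  refine ⟨c, Subtype.ext (sub_eq_zero.1 ?_).symm⟩
  have hmem : v - c • u ∈ syzygies K g j := sub_mem hv (Submodule.smul_mem _ c hu)
  obtain ⟨w, hw, hvw⟩ := exists_eq_X_sub_C_pow_smul (n := 1) h0 h1 hmem hτ
    (cross_eq_zero_of_coplanarSyzygies hcop hu hmem hW) (by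
      have : (u (some k)).eval τ ≠ 0 := hτ
      rw [pow_one, Polynomial.dvd_iff_isRoot]
      simp [hc, this])
  have hw0 : w ∈ syzygies K g j := syzygies_mono j.pred_le hw
  have hWw : wronskian (theta K) (w ∘ some) = 0 := by
    have hDw := theta_comp_mem_syzygies hw
    rw [Nat.sub_add_cancel (Nat.one_le_iff_ne_zero.2 hj)] at hDw
    simpa only [wronskian, Function.comp_assoc] using hcop w (syzygies_mono j.le_succ hw0) _
      (syzygies_mono j.le_succ hDw) _ (theta_comp_mem_syzygies hDw)
  have hw_zero : w ∘ some = 0 := by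
    by_contra hne
    exact hW <| wronskian_eq_zero_of_cross_eq_zero (theta K)
      (cross_eq_zero_of_coplanarSyzygies hcop hu hw0 hW) hne hWw
  rw [eq_zero_of_comp_some_eq_zero hw hw_zero, smul_zero] at hvw
  exact hvw

end CoplanarSyzygies

section MonomialAlmostCompleteIntersection

variable {K : Type*} [Field K] {n m : Fin 3 → ℕ} {i i' j : ℕ} {u v w : Option (Fin 3) → K[X]}

/-- The exponents of the generators `x ^ n 0`, `y ^ n 1`, `z ^ n 2` and
`x ^ m 0 * y ^ m 1 * z ^ m 2`, the last one being indexed by `none`. -/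
def genExponent (n m : Fin 3 → ℕ) (o : Option (Fin 3)) : Fin 3 → ℕ :=
  o.elim m fun k => Pi.single k (n k)

theorem mem_syzygies_genExponent :
    v ∈ syzygies K (genExponent n m) j ↔ v none ∈ forms K j m ∧
      (∀ k, v (some k) ∈ forms K j (Pi.single k (n k))) ∧ ∑ o, v o = 0 := by
  rw [mem_syzygies, Option.forall, and_assoc]
  rfl

theorem le_finrank_syzygies_genExponent_add
    (hj : ¬ forms K j 0 ≤ idealForms K (genExponent n m) j) :
    (j + 1 - ∑ k, m k) + ∑ k, (j + 1 - n k) ≤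
      Module.finrank K (syzygies K (genExponent n m) j) + j := by
  have h := sum_le_finrank_syzygies_add hj
  have hnone : genExponent n m none = m := rfl
  have hsome (k : Fin 3) : ∑ q, genExponent n m (some k) q = n k := by simp [genExponent]
  simpa only [Fintype.sum_option, hnone, hsome] using h

theorem forms_le_idealForms_of_add_le (hj : n 0 + n 1 ≤ j) :
    forms K j 0 ≤ idealForms K (genExponent n m) j := by
  intro P hP
  have hX : (Polynomial.X ^ n 0 : K[X]).Monic := Polynomial.monic_X_pow _
  have hmod : P %ₘ Polynomial.X ^ n 0 ∈ Polynomial.degreeLT K (n 0) := by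
    rw [Polynomial.mem_degreeLT]
    exact (Polynomial.degree_modByMonic_lt _ hX).trans_eq (Polynomial.degree_X_pow _)
  have hdiv := Polynomial.modByMonic_add_div P (Polynomial.X ^ n 0)
  have hdivmem : Polynomial.X ^ n 0 * (P /ₘ Polynomial.X ^ n 0) ∈
      forms K j (Pi.single 0 (n 0)) := by
    refine mem_forms_iff_dvd.2 ⟨by simp, ?_, by simp⟩
    rw [← eq_sub_iff_add_eq'] at hdiv
    rw [hdiv]
    exact sub_mem (by simpa using (mem_forms_iff_dvd.1 hP).2.1)
      (Polynomial.degreeLT_mono (by simp; omega) hmod)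
  have hmodmem : P %ₘ Polynomial.X ^ n 0 ∈ forms K j (Pi.single 1 (n 1)) :=
    mem_forms_iff_dvd.2
      ⟨by simp, Polynomial.degreeLT_mono (by simp; omega) hmod, by simp⟩
  refine mem_idealForms.2 ⟨fun o => o.elim 0
    ![Polynomial.X ^ n 0 * (P /ₘ Polynomial.X ^ n 0), P %ₘ Polynomial.X ^ n 0, 0], ?_, ?_⟩
  · rintro (_ | k)
    · exact Submodule.zero_mem _
    · fin_cases k
      exacts [hdivmem, hmodmem, Submodule.zero_mem _]
  · simpa [Fintype.sum_option, Fin.sum_univ_three, add_comm] using hdiv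

/-- Up to sign, the Wronskian may be computed from any three of the four entries of `u`; for each
coordinate, one of these choices has the required divisibility. -/
theorem wronskian_comp_some_mem_forms (hu : u ∈ syzygies K (genExponent n m) j) :
    wronskian (theta K) (u ∘ some) ∈ forms K (3 * j + 3) (n + m) := by
  refine mem_forms_of_forall_coord fun q => ?_
  have hmem := wronskian_mem_forms (u := Function.update (u ∘ some) (q + 1) (u none))
    (e := Function.update (fun k => Pi.single k (n k)) (q + 1) m) (j := j) fun k => by
      rcases eq_or_ne k (q + 1) with rfl | hk
      · simpa using (mem_syzygies_genExponent.1 hu).1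
      · simpa [hk] using (mem_syzygies_genExponent.1 hu).2.1 k
  rw [apply_none_eq_neg_sum hu, wronskian_update, neg_mem_iff] at hmem
  refine ⟨_, le_of_eq ?_, hmem⟩
  fin_cases q <;> simp [Fin.sum_univ_three, Function.update_apply, add_comm (n _)]

theorem wronskian_comp_some_eq_zero [CharZero K] (h3 : ¬ 3 ∣ ∑ k, n k + ∑ k, m k)
    (hj : ¬ forms K j 0 ≤ idealForms K (genExponent n m) j)
    (hu : u ∈ syzygies K (genExponent n m) j) : wronskian (theta K) (u ∘ some) = 0 := by
  by_contra hW
  have hcop : CoplanarSyzygies K (genExponent n m) (j + 1) :=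
    coplanarSyzygies_of_not_forms_le hj (le_max_left j _)
      (forms_le_idealForms_of_add_le (le_max_right _ _))
  have hrank := finrank_syzygies_le_one_of_wronskian_ne_zero hcop hu hW
  have hdeg := sum_le_of_mem_forms (wronskian_comp_some_mem_forms hu) hW
  have hdim := le_finrank_syzygies_genExponent_add hj
  simp only [Fin.sum_univ_three, Pi.add_apply] at hdim hdeg h3
  omega

theorem cross_apply_mem_forms (hv : v ∈ syzygies K (genExponent n m) i)
    (hw : w ∈ syzygies K (genExponent n m) i') (k : Fin 3) :
    ((v ∘ some) ⨯₃ (w ∘ some)) k ∈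
      forms K (i + i') (Pi.single (k + 1) (n (k + 1)) + Pi.single (k + 2) (n (k + 2))) := by
  obtain ⟨-, hv, -⟩ := mem_syzygies_genExponent.1 hv
  obtain ⟨-, hw, -⟩ := mem_syzygies_genExponent.1 hw
  have hminor := mul_sub_mul_mem_forms (hv (k + 1)) (hv (k + 2)) (hw (k + 1)) (hw (k + 2))
  fin_cases k <;> exact hminor

theorem cross_apply_sub_cross_apply_mem_forms (hv : v ∈ syzygies K (genExponent n m) i)
    (hw : w ∈ syzygies K (genExponent n m) i') (k : Fin 3) :
    ((v ∘ some) ⨯₃ (w ∘ some)) (k + 1) - ((v ∘ some) ⨯₃ (w ∘ some)) (k + 2) ∈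
      forms K (i + i') (Pi.single k (n k) + m) := by
  have hminor := mul_sub_mul_mem_forms ((mem_syzygies_genExponent.1 hv).2.1 k)
    (mem_syzygies_genExponent.1 hv).1 ((mem_syzygies_genExponent.1 hw).2.1 k)
    (mem_syzygies_genExponent.1 hw).1
  rw [apply_none_eq_neg_sum hv, apply_none_eq_neg_sum hw, Fin.sum_univ_three,
    Fin.sum_univ_three] at hminor
  convert hminor using 1
  fin_cases k <;> simp [cross_apply] <;> ring

open Classical in
/-- For syzygies `v`, `w` orthogonal to a constant vector `l`, the cross product of their `some`
parts is a multiple of `l`; this is the exponent of a monomial dividing the factor. -/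
noncomputable def minorExponent (n m : Fin 3 → ℕ) (l : Fin 3 → K) (k : Fin 3) : ℕ :=
  if l (k + 1) = l (k + 2) then if l (k + 1) = 0 then m k else n k else n k + m k

theorem le_finrank_syzygies_genExponent_add_sum_minorExponent {l : Fin 3 → K} {s : Fin 3}
    (hs : l s = 1) (hj : ¬ forms K j 0 ≤ idealForms K (genExponent n m) j) :
    2 * j + 3 ≤ Module.finrank K (syzygies K (genExponent n m) j) + ∑ k, minorExponent n m l k := by
  have hrank := le_finrank_syzygies_genExponent_add hj
  have hl : l 0 ≠ 0 ∨ l 1 ≠ 0 ∨ l 2 ≠ 0 := by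
    fin_cases s <;> simp_all
  classical
  have h0 : minorExponent n m l 0 = if l 1 = l 2 then if l 1 = 0 then m 0 else n 0 else n 0 + m 0 :=
    rfl
  have h1 : minorExponent n m l 1 = if l 2 = l 0 then if l 2 = 0 then m 1 else n 1 else n 1 + m 1 :=
    rfl
  have h2 : minorExponent n m l 2 = if l 0 = l 1 then if l 0 = 0 then m 2 else n 2 else n 2 + m 2 :=
    rfl
  rw [Fin.sum_univ_three, Fin.sum_univ_three] at hrank
  rw [Fin.sum_univ_three]
  grind

section Plane

variable {l : Fin 3 → K} {s : Fin 3}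

theorem cross_comp_some_eq_smul (hs : l s = 1) (hvl : (v ∘ some) ⬝ᵥ (Polynomial.C ∘ l) = 0)
    (hwl : (w ∘ some) ⬝ᵥ (Polynomial.C ∘ l) = 0) :
    (v ∘ some) ⨯₃ (w ∘ some) = ((v ∘ some) ⨯₃ (w ∘ some)) s • (Polynomial.C ∘ l) :=
  cross_eq_smul_of_dotProduct_eq_zero (by simp [hs]) hvl hwl

theorem cross_apply_mem_forms_minorExponent (hs : l s = 1) (hv : v ∈ syzygies K (genExponent n m) i)
    (hw : w ∈ syzygies K (genExponent n m) i') (hvl : (v ∘ some) ⬝ᵥ (Polynomial.C ∘ l) = 0)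
    (hwl : (w ∘ some) ⬝ᵥ (Polynomial.C ∘ l) = 0) :
    ((v ∘ some) ⨯₃ (w ∘ some)) s ∈ forms K (i + i') (minorExponent n m l) := by
  have hmem {a : K} (ha : a ≠ 0) {e : Fin 3 → ℕ}
      (h : ((v ∘ some) ⨯₃ (w ∘ some)) s * Polynomial.C a ∈ forms K (i + i') e) :
      ((v ∘ some) ⨯₃ (w ∘ some)) s ∈ forms K (i + i') e := by
    rwa [mul_comm, ← Polynomial.smul_eq_C_mul, Submodule.smul_mem_iff _ ha] at h
  have hminor (k : Fin 3) (hk : l k ≠ 0) := hmem hk <| by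
    have h := cross_apply_mem_forms hv hw k
    rwa [cross_comp_some_eq_smul hs hvl hwl] at h
  have hdiff (k : Fin 3) (hk : l (k + 1) ≠ l (k + 2)) := hmem (sub_ne_zero.2 hk) <| by
    have h := cross_apply_sub_cross_apply_mem_forms hv hw k
    rwa [cross_comp_some_eq_smul hs hvl hwl, Pi.smul_apply, Pi.smul_apply, ← smul_sub,
      Function.comp_apply, Function.comp_apply, ← map_sub] at h
  have hcyc : ∀ k s : Fin 3, k + 1 + 1 = k + 2 ∧ k + 1 + 2 = k ∧ k + 1 ≠ k ∧
      (s = k ∨ s = k + 1 ∨ s = k + 2) := by decide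
  refine mem_forms_of_forall_coord fun k => ?_
  obtain ⟨h₁, h₂, hne, hcases⟩ := hcyc k s
  unfold minorExponent
  split_ifs with heq hzero
  · refine ⟨_, ?_, hdiff (k + 1) ?_⟩
    · simp [hne.symm]
    · rw [h₁, h₂, ← heq, hzero]
      rintro hk
      rcases hcases with rfl | rfl | rfl <;> grind only
  · exact ⟨_, by simp [h₁, h₂], hminor (k + 1) hzero⟩
  · exact ⟨_, by simp, hdiff k heq⟩

theorem cross_eq_zero_of_cross_apply_eq_zero (hs : l s = 1)
    (hvl : (v ∘ some) ⬝ᵥ (Polynomial.C ∘ l) = 0) (hwl : (w ∘ some) ⬝ᵥ (Polynomial.C ∘ l) = 0)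
    (h : ((v ∘ some) ⨯₃ (w ∘ some)) s = 0) :
    (v ∘ some) ⨯₃ (w ∘ some) = 0 := by
  rw [cross_comp_some_eq_smul hs hvl hwl, h, zero_smul]

theorem exists_mem_syzygies_cross_eq_zero_of_sum_minorExponent_le (hs : l s = 1)
    (hperp : ∀ v ∈ syzygies K (genExponent n m) j, (v ∘ some) ⬝ᵥ (Polynomial.C ∘ l) = 0)
    (hrank : 2 * j + 3 ≤
      Module.finrank K (syzygies K (genExponent n m) j) + ∑ k, minorExponent n m l k)
    (hij : i ≤ j) (hu : u ∈ syzygies K (genExponent n m) i)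
    (hle : ∑ k, minorExponent n m l k ≤ 2 * i + 1) (k : Fin 3) (τ : K) :
    ∃ v ∈ syzygies K (genExponent n m) j, v ≠ 0 ∧ (u ∘ some) ⨯₃ (v ∘ some) = 0 ∧
      (Polynomial.X - Polynomial.C τ) ^ (j - i + 1) ∣ v (some k) := by
  let restrictSome : syzygies K (genExponent n m) j →ₗ[K] (Fin 3 → K[X]) :=
    LinearMap.funLeft K K[X] some ∘ₗ Submodule.subtype _
  have hul := hperp u (syzygies_mono hij hu)
  let minor : syzygies K (genExponent n m) j →ₗ[K] forms K (i + j) (minorExponent n m l) :=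
    (LinearMap.proj s ∘ₗ (crossProduct (u ∘ some)).restrictScalars K ∘ₗ restrictSome).codRestrict _
      fun v => cross_apply_mem_forms_minorExponent hs hu v.2 hul (hperp v v.2)
  obtain ⟨⟨v, hv⟩, hv0, hminor, hdvd⟩ := exists_ne_zero_dvd_of_finrank_lt minor
    (LinearMap.proj k ∘ₗ restrictSome) ((Polynomial.monic_X_sub_C τ).pow (j - i + 1)) (by
      rw [finrank_forms, Polynomial.natDegree_pow, Polynomial.natDegree_X_sub_C]
      omega)
  exact ⟨v, hv, fun h => hv0 (Subtype.ext h),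
    cross_eq_zero_of_cross_apply_eq_zero hs hul (hperp v hv) (congrArg Subtype.val hminor), hdvd⟩

/-- Otherwise some syzygy of degree `j` parallel to `u` is divisible by `(t - τ) ^ (j - i + 1)`, and
the quotient, of degree `i - 1`, contradicts the induction hypothesis. -/
theorem cross_theta_comp_eq_zero_of_le [CharZero K] (hs : l s = 1)
    (hperp : ∀ v ∈ syzygies K (genExponent n m) j, (v ∘ some) ⬝ᵥ (Polynomial.C ∘ l) = 0)
    (hrank : 2 * j + 3 ≤
      Module.finrank K (syzygies K (genExponent n m) j) + ∑ k, minorExponent n m l k)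
    (hij : i ≤ j) (hu : u ∈ syzygies K (genExponent n m) i) :
    (u ∘ some) ⨯₃ (theta K ∘ u ∘ some) = 0 := by
  induction i using Nat.strong_induction_on generalizing u with
  | _ i ih =>
  rcases Nat.eq_zero_or_pos i with rfl | hi
  · have hD : theta K ∘ u ∘ some = 0 :=
      congrArg (· ∘ some) (theta_comp_eq_zero_of_mem_syzygies_zero hu)
    rw [hD, map_zero]
  by_contra hne
  have hul := hperp u (syzygies_mono hij hu)
  have hDul := theta_comp_dotProduct_eq_zero hul
  have hle : ∑ k, minorExponent n m l k ≤ i + (i + 1) :=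
    sum_le_of_mem_forms (cross_apply_mem_forms_minorExponent hs hu (theta_comp_mem_syzygies hu)
      hul hDul) fun h => hne (cross_eq_zero_of_cross_apply_eq_zero (w := theta K ∘ u) hs hul hDul h)
  obtain ⟨k, hk⟩ := Function.ne_iff.1 fun h : u ∘ some = 0 => hne (by
    rw [h, map_zero, LinearMap.zero_apply])
  obtain ⟨τ, h0, h1, hτ⟩ := exists_eval_ne_zero hk
  obtain ⟨v, hv, hv0, huv, hdvd⟩ := exists_mem_syzygies_cross_eq_zero_of_sum_minorExponent_le hs
    hperp hrank hij hu (by omega) k τ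
  obtain ⟨w, hw, hvw⟩ := exists_eq_X_sub_C_pow_smul h0 h1 hv hτ huv hdvd
  have hw0 : w ∘ some ≠ 0 := fun h => hv0 <| by
    rw [hvw, eq_zero_of_comp_some_eq_zero hw h, smul_zero]
  have huw : (u ∘ some) ⨯₃ (w ∘ some) = 0 := by
    have h : (Polynomial.X - Polynomial.C τ) ^ (j - i + 1) • ((u ∘ some) ⨯₃ (w ∘ some)) = 0 := by
      rw [← map_smul, ← huv, hvw]
      rfl
    exact (smul_eq_zero.1 h).resolve_left (pow_ne_zero _ (Polynomial.X_sub_C_ne_zero τ))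
  exact hne (cross_comp_eq_zero_of_cross_eq_zero (theta K) huw hw0
    (ih _ (by omega) (by omega) hw))

end Plane

theorem hasConstantDirection_of_cross_theta_eq_zero [CharZero K] {g : Option (Fin 3) → Fin 3 → ℕ}
    (hu : u ∈ syzygies K g j) (h : (u ∘ some) ⨯₃ (theta K ∘ u ∘ some) = 0) :
    HasConstantDirection u := by
  rcases eq_or_ne (u ∘ some) 0 with hu0 | hu0
  · exact ⟨0, 0, fun o => by rw [eq_zero_of_comp_some_eq_zero hu hu0, smul_zero, Pi.zero_apply]⟩
  obtain ⟨k, hk⟩ := Function.ne_iff.1 hu0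
  have hw (q : Fin 3) : ∃ w : K, u (some q) = w • u (some k) := by
    refine exists_eq_smul_of_mul_theta_eq hk ?_
    rw [mul_comm (u (some k))]
    exact congrFun (smul_eq_smul_of_cross_eq_zero h q) k
  choose w hw using hw
  refine ⟨fun o => o.elim (-∑ q, w q) w, u (some k), fun o => ?_⟩
  rcases o with _ | q
  · simp only [apply_none_eq_neg_sum hu, Option.elim_none, neg_smul, Finset.sum_smul]
    exact congrArg _ (Finset.sum_congr rfl fun q _ => hw q)
  · exact hw q

theorem forms_le_idealForms_or_hasConstantDirection [CharZero K]
    (h3 : ¬ 3 ∣ ∑ k, n k + ∑ k, m k) (j : ℕ) :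
    forms K j 0 ≤ idealForms K (genExponent n m) j ∨
      ∀ u ∈ syzygies K (genExponent n m) j, HasConstantDirection u := by
  refine or_iff_not_imp_left.2 fun hj u hu => hasConstantDirection_of_cross_theta_eq_zero hu ?_
  by_contra hne
  obtain ⟨l, s, hs, hul⟩ :=
    exists_dotProduct_eq_zero_of_wronskian_eq_zero (wronskian_comp_some_eq_zero h3 hj hu)
  have hcop := coplanarSyzygies_of_not_forms_le hj (le_max_left j _)
    (forms_le_idealForms_of_add_le (le_max_right _ _))
  have hcross := cross_comp_some_eq_smul hs hul
    (w := theta K ∘ u) (theta_comp_dotProduct_eq_zero hul)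
  have hperp : ∀ v ∈ syzygies K (genExponent n m) j, (v ∘ some) ⬝ᵥ (Polynomial.C ∘ l) = 0 := by
    intro v hv
    have h := hcop v (syzygies_mono j.le_succ hv) u (syzygies_mono j.le_succ hu) _
      (theta_comp_mem_syzygies hu)
    rw [hcross, dotProduct_smul] at h
    exact (smul_eq_zero.1 h).resolve_left fun h0 => hne (hcross.trans (by rw [h0, zero_smul]))
  exact hne (cross_theta_comp_eq_zero_of_le hs hperp
    (le_finrank_syzygies_genExponent_add_sum_minorExponent hs hj) le_rfl hu)

theorem hasWLP_monomialIdeal_genExponent [CharZero K] (h3 : ¬ 3 ∣ ∑ k, n k + ∑ k, m k) :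
    hasWLP 3 K (monomialIdeal K (genExponent n m)) :=
  ⟨lineForm K, isLefschetzElem_lineForm (forms_le_idealForms_or_hasConstantDirection h3)⟩

theorem monomialIdeal_genExponent : monomialIdeal K (genExponent n m) =
    Ideal.span {X 0 ^ n 0, X 1 ^ n 1, X 2 ^ n 2, X 0 ^ m 0 * X 1 ^ m 1 * X 2 ^ m 2} := by
  have hnone : coordMonomial K (genExponent n m none) = X 0 ^ m 0 * X 1 ^ m 1 * X 2 ^ m 2 :=
    Fin.prod_univ_three _
  have hsome (k : Fin 3) : coordMonomial K (genExponent n m (some k)) = X k ^ n k := by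
    fin_cases k <;> simp [coordMonomial, genExponent, Fin.prod_univ_three]
  rw [monomialIdeal]
  congr 1
  ext P
  have hrange : P ∈ Set.range (fun o => coordMonomial K (genExponent n m o)) ↔
      P = X 0 ^ m 0 * X 1 ^ m 1 * X 2 ^ m 2 ∨ P = X 0 ^ n 0 ∨ P = X 1 ^ n 1 ∨ P = X 2 ^ n 2 := by
    simp [Option.exists, Fin.exists_fin_succ, hnone, hsome, eq_comm]
  rw [hrange]
  simp only [Set.mem_insert_iff, Set.mem_singleton_iff]
  tauto

end MonomialAlmostCompleteIntersection

end WeakLefschetz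

open WeakLefschetz in
theorem stmt_14_general {K : Type*} [Field K] [CharZero K] {a b c α β γ : ℕ}
    (h : ¬ hasWLP 3 K (Ideal.span {(X 0 : MvPolynomial (Fin 3) K) ^ a, X 1 ^ b, X 2 ^ c,
      X 0 ^ α * X 1 ^ β * X 2 ^ γ})) :
    3 ∣ a + b + c + (α + β + γ) := by
  by_contra h3
  have hWLP := hasWLP_monomialIdeal_genExponent (K := K) (n := ![a, b, c]) (m := ![α, β, γ])
    (by simpa [Fin.sum_univ_three] using h3)
  rw [monomialIdeal_genExponent] at hWLP
  exact h hWLP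

/-- Over an algebraically closed field of characteristic zero, if
`I = (x^a, y^b, z^c, x^α y^β z^γ)` with `α, β, γ > 0` defines a level algebra
(`a-α = b-β = c-γ`) failing the WLP, then `a+b+c ≡ 0` and `α+β+γ ≡ 0 (mod 3)`. -/
theorem stmt_14 {K : Type*} [Field K] [IsAlgClosed K] [CharZero K]
    (a b c α β γ : ℕ) (hα0 : 0 < α) (hβ0 : 0 < β) (hγ0 : 0 < γ)
    (hα : α < a) (hβ : β < b) (hγ : γ < c)
    (hlevel1 : a - α = b - β) (hlevel2 : b - β = c - γ) :
    ¬ hasWLP 3 K (Ideal.span {(X 0 : MvPolynomial (Fin 3) K) ^ a, X 1 ^ b, X 2 ^ c,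
      X 0 ^ α * X 1 ^ β * X 2 ^ γ}) →
    (a + b + c) % 3 = 0 ∧ (α + β + γ) % 3 = 0 := by
  intro h
  have h3 := stmt_14_general h
  omega
end

section
/- Let K be a field of characteristic zero and R = K[x,y,z]. Let I = (x^a, y^b, z^c, y^β z^γ) with a, b, c ≥ 1, 0 ≤ β < b, 0 ≤ γ < c (i.e., the non-pure monomial generator does not involve x). Then R/I has the WLP. -/
open MvPolynomial

/-!
More generally, `K[x, y, z] / (x ^ a, J)` has the WLP for every monomial ideal `J` of `S = K[y, z]`,
with Lefschetz element `L = x - ℓ`, where `ℓ = y - z`. Since `L` is monic in `x`, it is a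
nonzerodivisor on `(S / J)[x]`, and killing it turns `x ^ a` into `ℓ ^ a`. So `L` has maximal rank
into degree `n` as soon as the degree `n` parts of `J` and `(ℓ ^ a)` intersect trivially or span
`S_n`. After setting `z = 1`, these consist of the polynomials in `t` of degree at most `n` that
are supported on a set `E` of exponents, respectively divisible by `(t - 1) ^ a`. In characteristic
zero a nonzero polynomial with `k` terms has multiplicity less than `k` at every nonzero point. This
gives trivial intersection if `#E ≤ a`; if `#E ≥ a`, it shows that `a` of the powers `t ^ e`,
`e ∈ E`, form a basis of `K[t] / (t - 1) ^ a`, so the two parts span.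
-/

namespace WeakLefschetz

section SparsePolynomials

variable {R : Type*} [CommRing R]

theorem support_sum_smul_X_pow_subset (E : Finset ℕ) (c : E → R) :
    (∑ e : E, c e • Polynomial.X ^ (e : ℕ) : Polynomial R).support ⊆ E := by
  intro n hn
  rw [Polynomial.mem_support_iff, Polynomial.finsetSum_coeff] at hn
  obtain ⟨e, -, he⟩ := Finset.exists_ne_zero_of_sum_ne_zero hn
  rw [Polynomial.coeff_smul, Polynomial.coeff_X_pow] at he
  obtain rfl : n = e := by
    by_contra hne
    simp [hne] at he
  exact e.2

theorem coeff_X_mul_derivative_sub_C_mul (p : Polynomial R) (e n : ℕ) :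
    (Polynomial.X * Polynomial.derivative p - Polynomial.C (e : R) * p).coeff n =
      ((n : R) - e) * p.coeff n := by
  cases n with
  | zero => simp
  | succ n =>
    rw [Polynomial.coeff_sub, Polynomial.coeff_C_mul, Polynomial.coeff_X_mul,
      Polynomial.coeff_derivative]
    push_cast
    ring

variable [IsDomain R] [CharZero R]

theorem support_X_mul_derivative_sub_C_mul (p : Polynomial R) (e : ℕ) :
    (Polynomial.X * Polynomial.derivative p - Polynomial.C (e : R) * p).support =
      p.support.erase e := by
  ext n
  rw [Polynomial.mem_support_iff, coeff_X_mul_derivative_sub_C_mul, mul_ne_zero_iff, sub_ne_zero,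
    Nat.cast_inj.ne, Finset.mem_erase, Polynomial.mem_support_iff]

theorem rootMultiplicity_lt_card_support {p : Polynomial R} (hp : p ≠ 0) {x : R} (hx : x ≠ 0) :
    p.rootMultiplicity x < p.support.card := by
  induction h : p.support.card generalizing p with
  | zero => simp_all
  | succ k ih =>
    obtain ⟨e, he⟩ := Polynomial.nonempty_support_iff.2 hp
    -- `X p' - e p` has one term fewer than `p`, and its multiplicity at `x` drops by at most one.
    set q := Polynomial.X * Polynomial.derivative p - Polynomial.C (e : R) * p
    have hsupp : q.support = p.support.erase e := support_X_mul_derivative_sub_C_mul p e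
    have hcard : q.support.card = k := by rw [hsupp, Finset.card_erase_of_mem he, h]; rfl
    have hdvd : (Polynomial.X - Polynomial.C x) ^ (p.rootMultiplicity x - 1) ∣ q :=
      have hpow := p.pow_rootMultiplicity_dvd x
      ((Polynomial.pow_sub_one_dvd_derivative_of_pow_dvd hpow).mul_left _).sub
        (((pow_dvd_pow _ (Nat.sub_le _ _)).trans hpow).mul_left _)
    by_cases hq0 : q = 0
    · have hmono : p = Polynomial.monomial e (p.coeff e) := by
        ext n
        have hn : n ∉ p.support.erase e := by simp [← hsupp, hq0]
        rw [Polynomial.coeff_monomial]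
        grind
      have hroot : ¬ p.IsRoot x := by
        rw [hmono, Polynomial.IsRoot, Polynomial.eval_monomial]
        exact mul_ne_zero (Polynomial.mem_support_iff.1 he) (pow_ne_zero _ hx)
      rw [Polynomial.rootMultiplicity_eq_zero hroot]
      exact k.succ_pos
    · have := ih hq0 hcard
      have := (Polynomial.le_rootMultiplicity_iff hq0).2 hdvd
      omega

theorem eq_zero_of_X_sub_C_pow_dvd_of_card_support_le {p : Polynomial R} {x : R} (hx : x ≠ 0)
    {a : ℕ} (hdvd : (Polynomial.X - Polynomial.C x) ^ a ∣ p) (hcard : p.support.card ≤ a) :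
    p = 0 := by
  by_contra hp
  have := rootMultiplicity_lt_card_support hp hx
  have := (Polynomial.le_rootMultiplicity_iff hp).2 hdvd
  omega

variable {K : Type*} [Field K] [CharZero K]

theorem linearIndependent_mk_X_pow {x : K} (hx : x ≠ 0) (E : Finset ℕ) :
    LinearIndependent K fun e : E =>
      Ideal.Quotient.mk (Ideal.span {(Polynomial.X - Polynomial.C x) ^ E.card})
        (Polynomial.X ^ (e : ℕ)) := by
  rw [Fintype.linearIndependent_iff]
  intro c hc
  set p : Polynomial K := ∑ e : E, c e • Polynomial.X ^ (e : ℕ) with hp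
  have hcoeff (e : E) : p.coeff e = c e := by
    simp [hp, Polynomial.coeff_X_pow]
  have hdvd : (Polynomial.X - Polynomial.C x) ^ E.card ∣ p := by
    rw [← Ideal.mem_span_singleton, ← Ideal.Quotient.eq_zero_iff_mem, ← hc, hp, map_sum]
    rfl
  intro e
  rw [← hcoeff, eq_zero_of_X_sub_C_pow_dvd_of_card_support_le hx hdvd
      (Finset.card_le_card (support_sum_smul_X_pow_subset E c)),
    Polynomial.coeff_zero]

theorem exists_support_subset_X_sub_C_pow_dvd_sub {x : K} (hx : x ≠ 0) {E : Finset ℕ} {a : ℕ}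
    (ha : a ≤ E.card) (q : Polynomial K) :
    ∃ p : Polynomial K, p.support ⊆ E ∧ (Polynomial.X - Polynomial.C x) ^ a ∣ q - p := by
  obtain ⟨F, hFE, rfl⟩ := Finset.exists_subset_card_eq ha
  have hmonic := (Polynomial.monic_X_sub_C x).pow F.card
  have := hmonic.finite_quotient
  have hfinrank : Fintype.card F = Module.finrank K
      (Polynomial K ⧸ Ideal.span {(Polynomial.X - Polynomial.C x) ^ F.card}) := by
    simp [finrank_quotient_span_eq_natDegree]
  have hspan := (linearIndependent_mk_X_pow hx F).span_eq_top_of_card_eq_finrank' hfinrank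
  obtain ⟨c, hc⟩ := (Submodule.mem_span_range_iff_exists_fun K).1
    (hspan ▸ Submodule.mem_top : Ideal.Quotient.mk _ q ∈ _)
  refine ⟨∑ e : F, c e • Polynomial.X ^ (e : ℕ),
    (support_sum_smul_X_pow_subset F c).trans (Finset.coe_subset.2 hFE), ?_⟩
  rw [← Ideal.mem_span_singleton, ← Ideal.Quotient.mk_eq_mk_iff_sub_mem, ← hc, map_sum]
  rfl

end SparsePolynomials

section BinaryForms

variable {R : Type*} [CommRing R]

theorem exists_homogenize_eq {f : MvPolynomial (Fin 2) R} {n : ℕ} (hf : f.IsHomogeneous n) :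
    ∃ p : Polynomial R, p.natDegree ≤ n ∧ p.homogenize n = f := by
  refine ⟨aeval ![Polynomial.X, 1] f, ?_, Polynomial.homogenize_eq_of_isHomogeneous hf rfl⟩
  have := aeval_natDegree_le (n := 1) f hf.totalDegree_le ![(Polynomial.X : Polynomial R), 1]
    (by simp [Fin.forall_fin_two, Polynomial.natDegree_X_le])
  rwa [mul_one] at this

theorem homogenize_mem_span_monomial_iff {p : Polynomial R} {n : ℕ} (s : Set (Fin 2 →₀ ℕ)) :
    p.homogenize n ∈ Ideal.span ((fun m => monomial m (1 : R)) '' s) ↔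
      ∀ e ∈ p.support, e ≤ n → ∃ m ∈ s, m 0 ≤ e ∧ m 1 ≤ n - e := by
  simp only [mem_ideal_span_monomial_image, mem_support_iff, Polynomial.coeff_homogenize,
    Polynomial.mem_support_iff, Finsupp.le_def, Fin.forall_fin_two]
  constructor
  · intro h e he hen
    simpa using h (Finsupp.equivFunOnFinite.symm ![e, n - e]) (by simp [he, hen])
  · intro h m hm
    obtain ⟨hdeg, hcoeff⟩ := ite_ne_right_iff.1 hm
    simpa [← hdeg] using h (m 0) hcoeff (by omega)

open Classical in
/-- The exponents `e ≤ n` for which `x ^ e * y ^ (n - e)` lies in the ideal of `R[x, y]` generated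
by the monomials with exponents in `s`. They index the degree `n` part of this ideal. -/
noncomputable def spanExponents (s : Set (Fin 2 →₀ ℕ)) (n : ℕ) : Finset ℕ :=
  {e ∈ Finset.range (n + 1) | ∃ m ∈ s, m 0 ≤ e ∧ m 1 ≤ n - e}

theorem support_subset_spanExponents_iff {p : Polynomial R} {n : ℕ} {s : Set (Fin 2 →₀ ℕ)} :
    p.support ⊆ spanExponents s n ↔
      p.natDegree ≤ n ∧ p.homogenize n ∈ Ideal.span ((fun m => monomial m (1 : R)) '' s) := by
  have hdeg : p.natDegree ≤ n ↔ ∀ e ∈ p.support, e ≤ n := by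
    simp only [Polynomial.natDegree_le_iff_coeff_eq_zero, Polynomial.mem_support_iff]
    grind
  rw [homogenize_mem_span_monomial_iff, hdeg]
  simp only [spanExponents, Finset.subset_iff, Finset.mem_filter, Finset.mem_range]
  grind

theorem X_sub_C_mul_X_pow_dvd_homogenize_iff [IsDomain R] {p : Polynomial R} {n : ℕ}
    (hp : p.natDegree ≤ n) (x : R) (a : ℕ) :
    (X 0 - C x * X 1) ^ a ∣ p.homogenize n ↔ (Polynomial.X - Polynomial.C x) ^ a ∣ p := by
  constructor
  · intro h
    simpa [hp] using map_dvd (aeval ![Polynomial.X, (1 : Polynomial R)]) h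
  · rintro ⟨q, rfl⟩
    rcases eq_or_ne q 0 with rfl | hq
    · simp
    have hmonic := (Polynomial.monic_X_sub_C x).pow a
    have hdeg : ((Polynomial.X - Polynomial.C x) ^ a).natDegree = a := by
      simp
    have hhom : (X 0 - C x * X 1 : MvPolynomial (Fin 2) R).IsHomogeneous 1 :=
      (isHomogeneous_X R 0).sub (isHomogeneous_C_mul_X x 1)
    have hpow : ((Polynomial.X - Polynomial.C x) ^ a).homogenize a = (X 0 - C x * X 1) ^ a :=
      Polynomial.homogenize_eq_of_isHomogeneous (by simpa using hhom.pow a) (by simp)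
    rw [hmonic.natDegree_mul' hq, hdeg] at hp
    obtain ⟨k, rfl⟩ := Nat.exists_eq_add_of_le (le_self_add.trans hp)
    rw [Polynomial.homogenize_mul _ _ hdeg.le (by omega), hpow]
    exact dvd_mul_right _ _

end BinaryForms

section Homogeneous

variable {σ R : Type*} [CommRing R]

attribute [local instance] MvPolynomial.gradedAlgebra

theorem exists_isHomogeneous_add_eq_of_mem_sup {I J : Ideal (MvPolynomial σ R)}
    (hI : I.IsHomogeneous (homogeneousSubmodule σ R))
    (hJ : J.IsHomogeneous (homogeneousSubmodule σ R))
    {f : MvPolynomial σ R} {n : ℕ} (hf : f.IsHomogeneous n) (hmem : f ∈ I ⊔ J) :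
    ∃ g ∈ I, ∃ h ∈ J, g.IsHomogeneous n ∧ h.IsHomogeneous n ∧ g + h = f := by
  obtain ⟨g, hg, h, hh, rfl⟩ := Submodule.mem_sup.1 hmem
  refine ⟨homogeneousComponent n g, (mem_iff_homogeneousComponent_mem hI g).1 hg n,
    homogeneousComponent n h, (mem_iff_homogeneousComponent_mem hJ h).1 hh n,
    homogeneousComponent_isHomogeneous n g, homogeneousComponent_isHomogeneous n h, ?_⟩
  rw [← map_add, homogeneousComponent_eq_self hf]

theorem exists_isHomogeneous_mul_eq_of_dvd {p f : MvPolynomial σ R} {m n : ℕ}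
    (hp : p.IsHomogeneous m) (hf : f.IsHomogeneous (m + n)) (hdvd : p ∣ f) :
    ∃ q : MvPolynomial σ R, q.IsHomogeneous n ∧ p * q = f := by
  obtain ⟨q, rfl⟩ := hdvd
  refine ⟨homogeneousComponent n q, homogeneousComponent_isHomogeneous n q, ?_⟩
  rw [← homogeneousComponent_eq_self hf, ← decomposition.decompose'_apply,
    ← decomposition.decompose'_apply]
  exact (DirectSum.coe_decompose_mul_add_of_left_mem (homogeneousSubmodule σ R) hp).symm

theorem isHomogeneous_span_singleton {p : MvPolynomial σ R} {n : ℕ} (hp : p.IsHomogeneous n) :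
    (Ideal.span {p}).IsHomogeneous (homogeneousSubmodule σ R) :=
  Ideal.homogeneous_span _ _ (by rintro _ rfl; exact ⟨n, hp⟩)

theorem isHomogeneous_span_monomial (s : Set (σ →₀ ℕ)) :
    (Ideal.span ((fun m => monomial m (1 : R)) '' s)).IsHomogeneous (homogeneousSubmodule σ R) :=
  Ideal.homogeneous_span _ _ (by
    rintro _ ⟨m, -, rfl⟩; exact ⟨m.degree, isHomogeneous_monomial 1 rfl⟩)

theorem isHomogeneous_map_rename {τ : Type*} {J : Ideal (MvPolynomial σ R)}
    (hJ : J.IsHomogeneous (homogeneousSubmodule σ R)) (φ : σ → τ) :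
    (J.map (rename φ)).IsHomogeneous (homogeneousSubmodule τ R) := by
  obtain ⟨S, rfl⟩ := (Ideal.IsHomogeneous.iff_exists _ _).1 hJ
  rw [Ideal.map_span]
  refine Ideal.homogeneous_span _ _ ?_
  rintro _ ⟨_, ⟨⟨f, n, hf⟩, -, rfl⟩, rfl⟩
  exact ⟨n, IsHomogeneous.rename_isHomogeneous hf⟩

end Homogeneous

section Substitution

variable {R : Type*} [CommRing R] {n : ℕ}

/-- The substitution `x₀ ↦ ℓ`, which realises `R[x₀, …, xₙ] / (x₀ - ℓ) ≅ R[x₁, …, xₙ]`;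
the variables of the target are numbered from `0`. -/
noncomputable def substZero (ℓ : MvPolynomial (Fin n) R) :
    MvPolynomial (Fin (n + 1)) R →ₐ[R] MvPolynomial (Fin n) R :=
  aeval (Fin.cons ℓ X)

variable (ℓ : MvPolynomial (Fin n) R)

@[simp]
theorem substZero_X_zero : substZero ℓ (X 0) = ℓ := by simp [substZero]

@[simp]
theorem substZero_rename_succ (g : MvPolynomial (Fin n) R) :
    substZero ℓ (rename Fin.succ g) = g := by
  rw [substZero, aeval_rename]
  exact aeval_X_left_apply g

theorem X_zero_sub_rename_dvd_sub_rename_substZero (f : MvPolynomial (Fin (n + 1)) R) :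
    X 0 - rename Fin.succ ℓ ∣ f - rename Fin.succ (substZero ℓ f) := by
  let π := Ideal.Quotient.mkₐ R (Ideal.span {X 0 - rename Fin.succ ℓ})
  have hπ : π = π.comp ((rename Fin.succ).comp (substZero ℓ)) := by
    refine algHom_ext (Fin.cases ?_ fun i => ?_)
    · rw [AlgHom.comp_apply, AlgHom.comp_apply, substZero_X_zero]
      exact Ideal.Quotient.mk_eq_mk_iff_sub_mem _ _ |>.2 (Ideal.mem_span_singleton_self _)
    · simp [substZero]
  rw [← Ideal.mem_span_singleton, ← Ideal.Quotient.mk_eq_mk_iff_sub_mem]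
  exact DFunLike.congr_fun hπ f

variable {ℓ}

theorem isHomogeneous_substZero (hℓ : ℓ.IsHomogeneous 1) {f : MvPolynomial (Fin (n + 1)) R}
    {d : ℕ} (hf : f.IsHomogeneous d) : (substZero ℓ f).IsHomogeneous d := by
  have := hf.aeval (Fin.cons ℓ X : Fin (n + 1) → MvPolynomial (Fin n) R) (n := 1)
    (Fin.cases (by simpa using hℓ) fun i => by simpa using isHomogeneous_X R i)
  rwa [one_mul] at this

theorem substZero_mem_of_mem_map_rename {J : Ideal (MvPolynomial (Fin n) R)}
    {f : MvPolynomial (Fin (n + 1)) R} (hf : f ∈ J.map (rename Fin.succ)) :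
    substZero ℓ f ∈ J := by
  have hle : J.map (rename Fin.succ) ≤ J.comap (substZero ℓ) :=
    Ideal.map_le_iff_le_comap.2 fun g hg => by simpa using hg
  exact hle hf

theorem mem_map_C_of_monic_mul_mem {S : Type*} [CommRing S] {J : Ideal S} {p q : Polynomial S}
    (hp : p.Monic) (h : p * q ∈ J.map Polynomial.C) : q ∈ J.map Polynomial.C := by
  rw [← J.mk_ker, ← Polynomial.ker_mapRingHom, RingHom.mem_ker, Polynomial.coe_mapRingHom] at h ⊢
  rwa [Polynomial.map_mul, (hp.map _).mul_right_eq_zero_iff] at h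

theorem finSuccEquiv_rename_succ (g : MvPolynomial (Fin n) R) :
    finSuccEquiv R n (rename Fin.succ g) = Polynomial.C g := by
  induction g using MvPolynomial.induction_on with
  | C r => simp [finSuccEquiv_apply]
  | add p q hp hq => simp only [map_add, hp, hq]
  | mul_X p i hp => simp only [map_mul, hp, rename_X, finSuccEquiv_X_succ]

theorem mem_map_rename_succ_iff {J : Ideal (MvPolynomial (Fin n) R)}
    {f : MvPolynomial (Fin (n + 1)) R} :
    f ∈ J.map (rename Fin.succ) ↔ finSuccEquiv R n f ∈ J.map Polynomial.C := by
  have hle : J.map (rename Fin.succ) ≤ (J.map Polynomial.C).comap (finSuccEquiv R n) :=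
    Ideal.map_le_iff_le_comap.2 fun g hg => by
      simpa [finSuccEquiv_rename_succ] using Ideal.mem_map_of_mem Polynomial.C hg
  have hge : J.map Polynomial.C ≤ (J.map (rename Fin.succ)).comap (finSuccEquiv R n).symm :=
    Ideal.map_le_iff_le_comap.2 fun g hg => by
      simpa [← finSuccEquiv_rename_succ] using Ideal.mem_map_of_mem (rename Fin.succ) hg
  exact ⟨fun hf => hle hf, fun hf => by simpa using hge hf⟩

-- Over `R[x₁, …, xₙ] / J` the polynomial `x₀ - ℓ` is monic in `x₀`, hence a nonzerodivisor.
theorem mem_map_rename_succ_of_mul_mem {J : Ideal (MvPolynomial (Fin n) R)}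
    {f : MvPolynomial (Fin (n + 1)) R}
    (hf : (X 0 - rename Fin.succ ℓ) * f ∈ J.map (rename Fin.succ)) :
    f ∈ J.map (rename Fin.succ) := by
  rw [mem_map_rename_succ_iff] at hf ⊢
  rw [map_mul, map_sub, finSuccEquiv_X_zero, finSuccEquiv_rename_succ] at hf
  exact mem_map_C_of_monic_mul_mem (Polynomial.monic_X_sub_C ℓ) hf

end Substitution

section Lefschetz

variable {r : ℕ} {K : Type*} [Field K]

attribute [local instance] MvPolynomial.gradedAlgebra

theorem mulMapInj_of_forall_mul_mem {I : Ideal (MvPolynomial (Fin r) K)}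
    {L : MvPolynomial (Fin r) K} {d : ℕ}
    (h : ∀ f : MvPolynomial (Fin r) K, f.IsHomogeneous d → L * f ∈ I → f ∈ I) :
    mulMapInj r K I L d := by
  rintro _ ⟨f, hf, rfl⟩ hLf
  exact Ideal.Quotient.eq_zero_iff_mem.2 (h f hf (Ideal.Quotient.eq_zero_iff_mem.1 hLf))

theorem mulMapSurj_of_forall_mem_sup {I : Ideal (MvPolynomial (Fin r) K)}
    (hI : I.IsHomogeneous (homogeneousSubmodule (Fin r) K))
    {L : MvPolynomial (Fin r) K} (hL : L.IsHomogeneous 1) {d : ℕ}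
    (h : ∀ f : MvPolynomial (Fin r) K, f.IsHomogeneous (d + 1) → f ∈ I ⊔ Ideal.span {L}) :
    mulMapSurj r K I L d := by
  rintro _ ⟨f, hf, rfl⟩
  obtain ⟨g, hg, p, hp, -, hphom, rfl⟩ :=
    exists_isHomogeneous_add_eq_of_mem_sup hI (isHomogeneous_span_singleton hL) hf (h f hf)
  obtain ⟨q, hq, rfl⟩ := exists_isHomogeneous_mul_eq_of_dvd hL (add_comm d 1 ▸ hphom)
    (Ideal.mem_span_singleton.1 hp)
  refine ⟨Ideal.Quotient.mk I q, ⟨q, hq, rfl⟩, ?_⟩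
  change Ideal.Quotient.mk I L * Ideal.Quotient.mk I q = Ideal.Quotient.mk I (g + L * q)
  rw [map_add, map_mul, Ideal.Quotient.eq_zero_iff_mem.2 hg, zero_add]

variable {J : Ideal (MvPolynomial (Fin r) K)} {ℓ : MvPolynomial (Fin r) K} {a d : ℕ}

theorem mulMapInj_X_zero_pow_sup (hJ : J.IsHomogeneous (homogeneousSubmodule (Fin r) K))
    (hℓ : ℓ.IsHomogeneous 1)
    (h : ∀ g : MvPolynomial (Fin r) K,
      (ℓ ^ a * g).IsHomogeneous (d + 1) → ℓ ^ a * g ∈ J → g ∈ J) :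
    mulMapInj (r + 1) K (Ideal.span {X 0 ^ a} ⊔ J.map (rename Fin.succ))
      (X 0 - rename Fin.succ ℓ) d := by
  have hL : (X 0 - rename Fin.succ ℓ : MvPolynomial (Fin (r + 1)) K).IsHomogeneous 1 :=
    (isHomogeneous_X K 0).sub hℓ.rename_isHomogeneous
  refine mulMapInj_of_forall_mul_mem fun f hf hLf => ?_
  obtain ⟨p, hp, j, hj, hphom, -, hsum⟩ := exists_isHomogeneous_add_eq_of_mem_sup
    (isHomogeneous_span_singleton (isHomogeneous_X_pow 0 a)) (isHomogeneous_map_rename hJ _)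
    (add_comm 1 d ▸ hL.mul hf) hLf
  obtain ⟨g, rfl⟩ := Ideal.mem_span_singleton.1 hp
  have hg : substZero ℓ g ∈ J := by
    refine h _ (by simpa using isHomogeneous_substZero hℓ hphom) ?_
    have hzero : ℓ ^ a * substZero ℓ g + substZero ℓ j = 0 := by
      simpa using congrArg (substZero ℓ) hsum
    rw [eq_neg_of_add_eq_zero_left hzero]
    exact J.neg_mem (substZero_mem_of_mem_map_rename hj)
  obtain ⟨q, hq⟩ := X_zero_sub_rename_dvd_sub_rename_substZero ℓ g
  have hfq : f - X 0 ^ a * q ∈ J.map (rename Fin.succ) := by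
    apply mem_map_rename_succ_of_mul_mem (ℓ := ℓ)
    have : (X 0 - rename Fin.succ ℓ) * (f - X 0 ^ a * q) =
        X 0 ^ a * rename Fin.succ (substZero ℓ g) + j := by
      linear_combination X 0 ^ a * hq - hsum
    rw [this]
    exact add_mem (Ideal.mul_mem_left _ _ (Ideal.mem_map_of_mem _ hg)) hj
  exact Submodule.mem_sup.2
    ⟨X 0 ^ a * q, Ideal.mem_span_singleton.2 (dvd_mul_right _ _), _, hfq, by ring⟩

theorem mulMapSurj_X_zero_pow_sup (hJ : J.IsHomogeneous (homogeneousSubmodule (Fin r) K))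
    (hℓ : ℓ.IsHomogeneous 1)
    (h : ∀ g : MvPolynomial (Fin r) K, g.IsHomogeneous (d + 1) → g ∈ J ⊔ Ideal.span {ℓ ^ a}) :
    mulMapSurj (r + 1) K (Ideal.span {X 0 ^ a} ⊔ J.map (rename Fin.succ))
      (X 0 - rename Fin.succ ℓ) d := by
  refine mulMapSurj_of_forall_mem_sup
    ((isHomogeneous_span_singleton (isHomogeneous_X_pow 0 a)).sup (isHomogeneous_map_rename hJ _))
    ((isHomogeneous_X K 0).sub hℓ.rename_isHomogeneous) fun f hf => ?_
  obtain ⟨j, hj, p, hp, hsum⟩ := Submodule.mem_sup.1 (h _ (isHomogeneous_substZero hℓ hf))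
  obtain ⟨q, rfl⟩ := Ideal.mem_span_singleton.1 hp
  obtain ⟨u, hu⟩ := X_zero_sub_rename_dvd_sub_rename_substZero ℓ f
  obtain ⟨v, hv⟩ := sub_dvd_pow_sub_pow (X 0) (rename Fin.succ ℓ : MvPolynomial _ K) a
  refine Submodule.mem_sup.2 ⟨X 0 ^ a * rename Fin.succ q + rename Fin.succ j, ?_,
    (X 0 - rename Fin.succ ℓ) * (u - v * rename Fin.succ q), ?_, ?_⟩
  · exact Submodule.add_mem_sup (Ideal.mem_span_singleton.2 (dvd_mul_right _ _))
      (Ideal.mem_map_of_mem _ hj)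
  · exact Ideal.mem_span_singleton.2 (dvd_mul_right _ _)
  · have hsum' := congrArg (rename (R := K) (Fin.succ (n := r))) hsum
    simp only [map_add, map_mul, map_pow] at hsum'
    linear_combination -hu + hsum' + rename Fin.succ q * hv

end Lefschetz

section BinaryMonomialIdeals

theorem map_rename_succ_span_binary {R : Type*} [CommRing R] (b c β γ : ℕ) :
    (Ideal.span ((fun m => monomial m (1 : R)) '' {Finsupp.single 0 b, Finsupp.single 1 c,
        Finsupp.single 0 β + Finsupp.single 1 γ})).map (rename (Fin.succ (n := 2))) =
      Ideal.span {X 1 ^ b, X 2 ^ c, X 1 ^ β * X 2 ^ γ} := by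
  rw [Ideal.map_span]
  simp only [Set.image_insert_eq, Set.image_singleton, monomial_single_add, ← X_pow_eq_monomial,
    map_mul, map_pow, rename_X, Fin.succ_zero_eq_one, Fin.succ_one_eq_two]

variable {K : Type*} [Field K] [CharZero K]

theorem forall_eq_zero_or_forall_mem_sup (s : Set (Fin 2 →₀ ℕ)) {x : K} (hx : x ≠ 0) (a n : ℕ) :
    (∀ f : MvPolynomial (Fin 2) K, f.IsHomogeneous n → (X 0 - C x * X 1) ^ a ∣ f →
        f ∈ Ideal.span ((fun m => monomial m (1 : K)) '' s) → f = 0) ∨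
      ∀ f : MvPolynomial (Fin 2) K, f.IsHomogeneous n →
        f ∈ Ideal.span ((fun m => monomial m (1 : K)) '' s) ⊔
          Ideal.span {(X 0 - C x * X 1) ^ a} := by
  rcases le_total (spanExponents s n).card a with hcard | hcard
  · left
    intro f hf hdvd hmem
    obtain ⟨p, hp, rfl⟩ := exists_homogenize_eq hf
    have hp0 := eq_zero_of_X_sub_C_pow_dvd_of_card_support_le hx
      ((X_sub_C_mul_X_pow_dvd_homogenize_iff hp x a).1 hdvd)
      ((Finset.card_le_card (support_subset_spanExponents_iff.2 ⟨hp, hmem⟩)).trans hcard)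
    rw [hp0, Polynomial.homogenize_zero]
  · right
    intro f hf
    obtain ⟨q, hq, rfl⟩ := exists_homogenize_eq hf
    obtain ⟨p, hpE, hdvd⟩ := exists_support_subset_X_sub_C_pow_dvd_sub hx hcard q
    obtain ⟨hp, hmem⟩ := support_subset_spanExponents_iff.1 hpE
    refine Submodule.mem_sup.2 ⟨p.homogenize n, hmem, (q - p).homogenize n,
      Ideal.mem_span_singleton.2 ?_, by rw [← Polynomial.homogenize_add, add_sub_cancel]⟩
    exact (X_sub_C_mul_X_pow_dvd_homogenize_iff
      ((Polynomial.natDegree_sub_le _ _).trans (max_le hq hp)) x a).2 hdvd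

end BinaryMonomialIdeals

end WeakLefschetz

open WeakLefschetz in
theorem stmt_15_general {K : Type*} [Field K] [CharZero K] (a : ℕ) (s : Set (Fin 2 →₀ ℕ)) :
    hasWLP 3 K (Ideal.span {X 0 ^ a} ⊔
      (Ideal.span ((fun m => monomial m (1 : K)) '' s)).map (rename Fin.succ)) := by
  have hJ := isHomogeneous_span_monomial (R := K) s
  have hℓ : (X 0 - C 1 * X 1 : MvPolynomial (Fin 2) K).IsHomogeneous 1 :=
    (isHomogeneous_X K 0).sub (isHomogeneous_C_mul_X 1 1)
  have hℓ0 : (X 0 - C 1 * X 1 : MvPolynomial (Fin 2) K) ≠ 0 := by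
    rw [C_1, one_mul, sub_ne_zero]
    exact X_injective.ne zero_ne_one
  refine ⟨X 0 - rename Fin.succ (X 0 - C 1 * X 1),
    (isHomogeneous_X K 0).sub hℓ.rename_isHomogeneous, fun d => ?_⟩
  refine (forall_eq_zero_or_forall_mem_sup s one_ne_zero a (d + 1)).imp (fun h => ?_)
    (mulMapSurj_X_zero_pow_sup hJ hℓ)
  refine mulMapInj_X_zero_pow_sup hJ hℓ fun g hg hmem => ?_
  have hg0 := h _ hg (dvd_mul_right _ _) hmem
  rw [(mul_eq_zero.1 hg0).resolve_left (pow_ne_zero a hℓ0)]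
  exact zero_mem _

/-- In characteristic zero, `R/(x^a, y^b, z^c, y^β z^γ)` has the WLP. -/
theorem stmt_15 {K : Type*} [Field K] [CharZero K]
    (a b c β γ : ℕ) (ha : 1 ≤ a) (hb : 1 ≤ b) (hc : 1 ≤ c) (hβ : β < b) (hγ : γ < c) :
    hasWLP 3 K (Ideal.span {(X 0 : MvPolynomial (Fin 3) K) ^ a, X 1 ^ b, X 2 ^ c,
      X 1 ^ β * X 2 ^ γ}) := by
  rw [Ideal.span_insert, ← WeakLefschetz.map_rename_succ_span_binary]
  exact stmt_15_general a _
end
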